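/- For any digraph D and any two sets A, B of vertices of D, there exist a set 𝒫 of pairwise vertex-disjoint finite A–B paths and an A–B-separating set S of vertices such that S consists of a choice of exactly one vertex from each path of 𝒫: every vertex of S lies on some path of 𝒫, and every path of 𝒫 contains exactly one vertex of S. -/

import Mathlib

/-!
The proof follows the strategy of Aharoni and Berger. The digraph is turned into a *web*: a relation
with a set of sources and a set of sinks. Families of disjoint paths are handled as *flows*,
that is, biunique relations (every vertex has at most one successor and at most one predecessor).

A *wave* is a flow inside a set `Q` of vertices, its roof, which leads sources onto a set `S`
separating `Q` from the sinks. Waves can be combined, so there is a maximal one (`Web.max_wave`), and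
the quotient of the web by it is *loose*: it has only trivial waves (`loose_quo_max`). A loose web is
*unhindered*: all its waves start at every source. If every unhindered web has a linkage of all its
sources into the sinks (`Unhindered.linkable`), the theorem follows: prolonging the maximal wave by
a linkage of the quotient gives disjoint paths, each of which meets the separating set of ends of
the wave exactly once.

Linkability of unhindered webs is proved by induction on the number of sources.

* Countably many sources: in an unhindered web any source can be linked by a path whose deletion
  leaves the web unhindered (`single_safe`), and this is repeated for all the sources. The main
  tools are augmentation along alternating walks (`aug`) and the dichotomy `PreWave.dichotomy`.
* Regular uncountable cardinality: the sources are exhausted by a *ladder*, a continuous increasing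
  chain of small sets `N α`, and the maximal waves of the webs `Γ - N α` are compared. In an
  unhindered web almost all of these waves, in the sense of closed unbounded sets, cover all
  remaining sources. A pair of vertices is *popular* if alternating walks join it at stationarily
  many stages; so each popular pair can be given a stage of its own where this connection is made.
  The webs of popular pairs are small and unhindered (`Ladder.delta_unhindered`), thus linkable by
  induction, and the pieces are put together in `Ladder.main`.
* Singular cardinality: `exists_safe` and `Safe.extend` show that every set of vertices is contained
  in a *safe* part, which is small if the set is: the sources of the part are linked inside it, and
  after its deletion the remaining sources start a wave with an unhindered quotient. Chains of safe
  parts of different sizes are interleaved as in Shelah's compactness theorem for singular cardinals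
  (`linkable_of_singular`).
-/

namespace ErdosMenger

variable {V : Type*}

/-- A finite path in a digraph with edge relation `E`: a nonempty list of
distinct vertices, each consecutive pair of which is a directed edge. -/
def IsFinPath (E : V → V → Prop) (p : List V) : Prop :=
  p ≠ [] ∧ p.Nodup ∧ p.Chain' E

/-- An `X`–`Y` path: a finite path starting in `X` and ending in `Y`. -/
def IsXYPath (E : V → V → Prop) (X Y : Set V) (p : List V) : Prop :=
  IsFinPath E p ∧ (∃ x ∈ X, p.head? = some x) ∧ (∃ y ∈ Y, p.getLast? = some y)

/-- `S` is `X`–`Y`-separating: every `X`–`Y` path contains a vertex of `S`. -/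
def Separates (E : V → V → Prop) (X Y S : Set V) : Prop :=
  ∀ p : List V, IsXYPath E X Y p → ∃ s ∈ S, s ∈ p

/-! ### Webs and biunique relations -/

section Webs

universe u
variable {V : Type u}

open Relation

/-- A web: a digraph with a set `A` of sources, which no edge enters, and a set `B` of sinks. -/
structure Web (V : Type u) where
  /-- The edge relation. -/
  E : V → V → Prop
  /-- The sources. -/
  A : Set V
  /-- The sinks. -/
  B : Set V
  hA : ∀ u v, E u v → v ∉ A

/-- Every vertex has at most one successor and at most one predecessor: the relation is a disjoint
union of directed paths, rays and cycles. -/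
structure BiUnique (F : V → V → Prop) : Prop where
  out : ∀ {u v w}, F u v → F u w → v = w
  inn : ∀ {u v w}, F u w → F v w → u = v

/-- `w` is reached along `F` from a vertex of `A`. -/
def From (F : V → V → Prop) (A : Set V) (w : V) : Prop := ∃ a ∈ A, ReflTransGen F a w

/-- Every edge of `F` starts at a vertex reached from `A`. -/
def Clean (F : V → V → Prop) (A : Set V) : Prop := ∀ u v, F u v → From F A u

theorem From.step {F : V → V → Prop} {A : Set V} {u v : V} (h : From F A u) (h' : F u v) :
    From F A v := by
  obtain ⟨a, ha, h⟩ := h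
  exact ⟨a, ha, h.tail h'⟩

theorem From.mono {F G : V → V → Prop} {A : Set V} {u : V} (h : From F A u)
    (h' : ∀ u v, F u v → G u v) : From G A u := by
  obtain ⟨a, ha, h⟩ := h
  exact ⟨a, ha, ReflTransGen.mono h' _ _ h⟩

theorem BiUnique.mono {F G : V → V → Prop} (hG : BiUnique G) (h : ∀ u v, F u v → G u v) :
    BiUnique F :=
  ⟨fun a b => hG.out (h _ _ a) (h _ _ b), fun a b => hG.inn (h _ _ a) (h _ _ b)⟩

/-- Along a biunique relation two ways to the same vertex are comparable. -/
theorem BiUnique.total {F : V → V → Prop} (hF : BiUnique F) {u v w : V}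
    (h : ReflTransGen F u w) (h' : ReflTransGen F v w) :
    ReflTransGen F u v ∨ ReflTransGen F v u := by
  induction h with
  | refl => exact Or.inr h'
  | @tail b c hb hc ih =>
    rcases ReflTransGen.cases_tail h' with rfl | ⟨d, hd, hdc⟩
    · exact Or.inl (hb.tail hc)
    · obtain rfl := hF.inn hc hdc
      exact ih hd

theorem BiUnique.total' {F : V → V → Prop} (hF : BiUnique F) {u v w : V}
    (h : ReflTransGen F u v) (h' : ReflTransGen F u w) :
    ReflTransGen F v w ∨ ReflTransGen F w v := by
  induction h using ReflTransGen.head_induction_on with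
  | refl => exact Or.inl h'
  | @head b c hb hc ih =>
    rcases ReflTransGen.cases_head h' with rfl | ⟨d, hd, hdc⟩
    · exact Or.inr (ReflTransGen.head hb hc)
    · obtain rfl := hF.out hb hd
      exact ih hdc

theorem eq_of_rtg_of_noPred {F : V → V → Prop} {u v : V} (h : ReflTransGen F u v)
    (hv : ∀ p, ¬ F p v) : u = v := by
  rcases ReflTransGen.cases_tail h with h | ⟨d, _, h⟩
  · exact h.symm
  · exact absurd h (hv d)

theorem eq_of_rtg_of_noSucc {F : V → V → Prop} {u v : V} (h : ReflTransGen F u v)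
    (hv : ∀ p, ¬ F u p) : u = v := by
  rcases ReflTransGen.cases_head h with h | ⟨d, h, _⟩
  · exact h
  · exact absurd h (hv d)

/-- A component that starts at a vertex without predecessors contains no cycle. -/
theorem BiUnique.acyclic {F : V → V → Prop} (hF : BiUnique F) {a x : V}
    (ha : ∀ p, ¬ F p a) (h : ReflTransGen F a x) : ¬ TransGen F x x := by
  induction h with
  | refl =>
    intro hc
    obtain ⟨d, _, hd⟩ := TransGen.tail'_iff.mp hc
    exact ha d hd
  | @tail b c hb hbc ih =>
    intro hc
    obtain ⟨d, hcd, hd⟩ := TransGen.tail'_iff.mp hc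
    obtain rfl := hF.inn hd hbc
    exact ih (TransGen.head' hd hcd)

/-- If `P` propagates backwards along `F`, and the edges along which it does belong to `G`, then a
track of `F` ending in `P` is a track of `G`. -/
theorem rtg_restrict {F G : V → V → Prop} {P : V → Prop} {a x : V} (h : ReflTransGen F a x)
    (hx : P x) (hback : ∀ u v, F u v → P v → P u ∧ G u v) : ReflTransGen G a x := by
  induction h with
  | refl => exact .refl
  | @tail b c hb hbc ih =>
    obtain ⟨h1, h2⟩ := hback _ _ hbc hx
    exact (ih h1).tail h2

theorem rtg_restrict' {F G : V → V → Prop} {P : V → Prop} {a x : V} (h : ReflTransGen F a x)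
    (hx : P a) (hfwd : ∀ u v, F u v → P u → P v ∧ G u v) : ReflTransGen G a x ∧ P x := by
  induction h with
  | refl => exact ⟨.refl, hx⟩
  | @tail b c hb hbc ih =>
    obtain ⟨h1, h2⟩ := ih
    obtain ⟨h3, h4⟩ := hfwd _ _ hbc h2
    exact ⟨h1.tail h4, h3⟩

theorem rtg_inv {F : V → V → Prop} {P : V → Prop} {a x : V} (h : ReflTransGen F a x)
    (hx : P a) (hfwd : ∀ u v, F u v → P u → P v) : P x :=
  (rtg_restrict' (G := F) h hx fun _ _ h1 h2 => ⟨hfwd _ _ h1 h2, h1⟩).2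

theorem rtg_inv_back {F : V → V → Prop} {P : V → Prop} {a x : V} (h : ReflTransGen F a x)
    (hx : P x) (hb : ∀ u v, F u v → P v → P u) : P a := by
  induction h with
  | refl => exact hx
  | tail _ h ih => exact ih (hb _ _ h hx)

/-! ### The augmentation lemma -/

/-- One step of an alternating walk with respect to a flow `F` in the digraph `E`. -/
inductive Step (E F : V → V → Prop) : V → V → Prop
  | free {y w : V} : E y w → (∀ p, ¬ F p w) → Step E F y w
  | swap {y w p : V} : E y w → F p w → Step E F y p
  | back {y p : V} : F p y → Step E F y p

/-- Alternating walks with exactly `n` steps. -/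
inductive WalkN (E F : V → V → Prop) : ℕ → V → V → Prop
  | nil (y : V) : WalkN E F 0 y y
  | cons {n : ℕ} {x y z : V} : Step E F x y → WalkN E F n y z → WalkN E F (n + 1) x z

theorem exists_walkN {E F : V → V → Prop} {x y : V} (h : ReflTransGen (Step E F) x y) :
    ∃ n, WalkN E F n x y := by
  induction h using ReflTransGen.head_induction_on with
  | refl => exact ⟨0, .nil _⟩
  | head h _ ih =>
    obtain ⟨n, ih⟩ := ih
    exact ⟨n + 1, .cons h ih⟩

/-- The flow `F` in `E` reaches all of `T` from `A`, where it halts. -/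
structure Serves (E : V → V → Prop) (A T : Set V) (F : V → V → Prop) : Prop where
  bi : BiUnique F
  le : ∀ u v, F u v → E u v
  reach : ∀ t ∈ T, From F A t
  halt : ∀ t ∈ T, ∀ v, ¬ F t v

/-- The rerouted flow: the edge `y0 w` is added, the old edge into `w` and all the edges
behind `y0` are dropped. -/
def reroute (F : V → V → Prop) (y0 w : V) (u v : V) : Prop :=
  (u = y0 ∧ v = w) ∨ (F u v ∧ v ≠ w ∧ ¬ ReflTransGen F y0 u)

section Reroute

variable {E F : V → V → Prop} {A : Set V} {a0 y0 w : V}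

theorem reroute_bi (hF : BiUnique F) : BiUnique (reroute F y0 w) := by
  constructor
  · rintro u v v' (⟨rfl, rfl⟩ | ⟨h, h1, h2⟩) (⟨h', rfl⟩ | ⟨h', h1', h2'⟩)
    · rfl
    · exact absurd .refl h2'
    · exact absurd (h' ▸ .refl) h2
    · exact hF.out h h'
  · rintro u u' v (⟨rfl, rfl⟩ | ⟨h, h1, h2⟩) (⟨h', h''⟩ | ⟨h', h1', h2'⟩)
    · exact h'.symm
    · exact absurd rfl h1'
    · exact absurd h'' h1
    · exact hF.inn h h'

/-- Up to `y0` the active component is unchanged. -/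
theorem reroute_active (hF : BiUnique F) (ha0 : ∀ p, ¬ F p a0) (hy0 : ReflTransGen F a0 y0)
    (hw : ¬ ReflTransGen F a0 w) : ReflTransGen (reroute F y0 w) a0 y0 := by
  have key : ∀ x, ReflTransGen F a0 x → ReflTransGen F x y0 →
      ReflTransGen (reroute F y0 w) a0 x := by
    intro x hx
    induction hx with
    | refl => exact fun _ => .refl
    | @tail b c hb hbc ih =>
      intro hc
      refine (ih (.head hbc hc)).tail (Or.inr ⟨hbc, ?_, ?_⟩)
      · rintro rfl
        exact hw (hb.tail hbc)
      · intro h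
        exact hF.acyclic ha0 hb (TransGen.head' hbc (hc.trans h))
  exact key y0 hy0 .refl

/-- Every vertex reached by `F` and not behind `y0` is still reached, from its old root or,
if it lies behind `w`, from `a0`. -/
theorem reroute_reach (hF : BiUnique F) (ha0 : ∀ p, ¬ F p a0) (hy0 : ReflTransGen F a0 y0)
    (hw : ¬ ReflTransGen F a0 w) {a x : V} (hx : ReflTransGen F a x)
    (hnx : ¬ ReflTransGen F y0 x) :
    (ReflTransGen F w x ∧ ReflTransGen (reroute F y0 w) a0 x) ∨
      (¬ ReflTransGen F w x ∧ ReflTransGen (reroute F y0 w) a x) ∨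
        (ReflTransGen F w a ∧ ReflTransGen (reroute F y0 w) a x) := by
  induction hx with
  | refl =>
    by_cases h : ReflTransGen F w a
    · exact Or.inr (Or.inr ⟨h, .refl⟩)
    · exact Or.inr (Or.inl ⟨h, .refl⟩)
  | @tail b c hb hbc ih =>
    have hnb : ¬ ReflTransGen F y0 b := fun h => hnx (h.tail hbc)
    by_cases hcw : c = w
    · subst hcw
      exact Or.inl ⟨.refl, (reroute_active hF ha0 hy0 hw).tail (Or.inl ⟨rfl, rfl⟩)⟩
    · have hbc' : reroute F y0 w b c := Or.inr ⟨hbc, hcw, hnb⟩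
      rcases ih hnb with ⟨h1, h2⟩ | ⟨h1, h2⟩ | ⟨h1, h2⟩
      · exact Or.inl ⟨h1.tail hbc, h2.tail hbc'⟩
      · refine Or.inr (Or.inl ⟨fun h => ?_, h2.tail hbc'⟩)
        rcases ReflTransGen.cases_tail h with h | ⟨d, hd, hdc⟩
        · exact hcw h
        · exact h1 (hF.inn hbc hdc ▸ hd)
      · exact Or.inr (Or.inr ⟨h1, h2.tail hbc'⟩)

end Reroute

theorem walk_transfer {E F F1 : V → V → Prop} {P P1 : V → Prop}
    (hstep : ∀ z z', ¬ P z → ¬ P z' → Step E F z z' → Step E F1 z z' ∨ P1 z')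
    {k : ℕ} {z y : V} (hw : WalkN E F k z y)
    (hmin : ∀ m ≤ k, ∀ p, P p → ¬ WalkN E F m p y) :
    (∃ m ≤ k, ∃ p, P1 p ∧ WalkN E F1 m p y) ∨ WalkN E F1 k z y := by
  induction hw with
  | nil y => exact Or.inr (.nil y)
  | @cons n x z y hs hw ih =>
    rcases ih (fun m hm => hmin m (by omega)) with ⟨m, hm, p, hp, h⟩ | h
    · exact Or.inl ⟨m, by omega, p, hp, h⟩
    · rcases hstep x z (fun hx => hmin _ le_rfl _ hx (.cons hs hw))
        (fun hz => hmin n (by omega) _ hz hw) hs with h' | h'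
      · exact Or.inr (.cons h' h)
      · exact Or.inl ⟨n, by omega, z, h', h⟩

/-- The active component, which misses `T`, is cut off at one of its vertices `y`. -/
theorem aug_zero {E F : V → V → Prop} {A T : Set V} {a0 y : V}
    (hEA : ∀ u v, E u v → v ∉ A) (hF : Serves E A T F) (hcl : Clean F A) (ha0 : a0 ∈ A)
    (hT : ∀ t ∈ T, ¬ ReflTransGen F a0 t) (hy : ReflTransGen F a0 y) :
    ∃ F', Serves E A (insert y T) F' ∧ Clean F' A ∧
      ((∀ a ∈ A, a ≠ a0 → ∃ t ∈ T, ReflTransGen F a t) →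
        ∀ a ∈ A, ∃ t ∈ insert y T, ReflTransGen F' a t) := by
  have hA0 : ∀ p, ¬ F p a0 := fun p h => hEA _ _ (hF.le _ _ h) ha0
  let F' : V → V → Prop := fun u v => F u v ∧ ¬ ReflTransGen F y u
  have key : ∀ a x, ReflTransGen F a x → ¬ TransGen F y x → ReflTransGen F' a x := by
    intro a x hx hnx
    induction hx with
    | refl => exact .refl
    | @tail b c hb hbc ih =>
      exact (ih fun h => hnx (h.tail hbc)).tail ⟨hbc, fun h => hnx (TransGen.tail' h hbc)⟩
  have hyy : ReflTransGen F' a0 y := key _ _ hy (hF.bi.acyclic hA0 hy)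
  have hTy : ∀ t ∈ T, ¬ TransGen F y t := fun t ht h => hT t ht (hy.trans h.to_reflTransGen)
  refine ⟨F', ⟨hF.bi.mono fun _ _ h => h.1, fun u v h => hF.le _ _ h.1, ?_, ?_⟩, ?_, ?_⟩
  · rintro t (rfl | ht)
    · exact ⟨a0, ha0, hyy⟩
    · obtain ⟨a, ha, h⟩ := hF.reach t ht
      exact ⟨a, ha, key _ _ h (hTy t ht)⟩
  · rintro t (rfl | ht) v ⟨h, h'⟩
    · exact h' .refl
    · exact hF.halt t ht v h
  · rintro u v ⟨h, h'⟩
    obtain ⟨a, ha, hu⟩ := hcl u v h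
    exact ⟨a, ha, key _ _ hu fun h => h' h.to_reflTransGen⟩
  · intro hcov a ha
    by_cases haa : a = a0
    · subst haa
      exact ⟨y, Or.inl rfl, hyy⟩
    · obtain ⟨t, ht, h⟩ := hcov a ha haa
      exact ⟨t, Or.inr ht, key _ _ h (hTy t ht)⟩

/-- The augmentation lemma. Let `F` be a flow from `A` to `T`, and let `a0` be a source whose
component misses `T`. If an alternating walk leads from that component to `y`, then some flow from
`A` reaches `T ∪ {y}`; if `F` leads all sources but `a0` to `T`, then the new flow leads all
sources to `T ∪ {y}`. -/
theorem aug {E F : V → V → Prop} {A T : Set V} {a0 y0 y : V}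
    (hEA : ∀ u v, E u v → v ∉ A) (hF : Serves E A T F) (hcl : Clean F A) (ha0 : a0 ∈ A)
    (hT : ∀ t ∈ T, ¬ ReflTransGen F a0 t) (hy0 : ReflTransGen F a0 y0)
    (h : ReflTransGen (Step E F) y0 y) :
    ∃ F', Serves E A (insert y T) F' ∧ Clean F' A ∧
      ((∀ a ∈ A, a ≠ a0 → ∃ t ∈ T, ReflTransGen F a t) →
        ∀ a ∈ A, ∃ t ∈ insert y T, ReflTransGen F' a t) := by
  obtain ⟨n, hn⟩ := exists_walkN h
  clear h
  induction n using Nat.strong_induction_on generalizing F a0 y0 with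
  | _ n ih =>
  have hpred : ∀ a ∈ A, ∀ p, ¬ F p a := fun a ha p h => hEA _ _ (hF.le _ _ h) ha
  by_cases hmin : ∃ m < n, ∃ p, ReflTransGen F a0 p ∧ WalkN E F m p y
  · obtain ⟨m, hm, p, hp, hw⟩ := hmin
    exact ih m hm hF hcl ha0 hT hp hw
  push Not at hmin
  cases hn with
  | nil => exact aug_zero hEA hF hcl ha0 hT hy0
  | @cons n _ y1 _ hs hw =>
  have hy1 : ¬ ReflTransGen F a0 y1 := fun h => hmin n (by omega) y1 h hw
  -- `main` performs one rerouting step along the edge `y0 w`, the new active root being `a1`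
  have main : ∀ a1 w, E y0 w → ¬ ReflTransGen F a0 w → a1 ∈ A →
      (∀ t ∈ T, ¬ ReflTransGen (reroute F y0 w) a1 t) →
      ReflTransGen (reroute F y0 w) a1 y1 →
      (∀ p, F p w → p = y1) →
      ((∀ a ∈ A, a ≠ a0 → ∃ t ∈ T, ReflTransGen F a t) →
        ∀ a ∈ A, a ≠ a1 → ∃ t ∈ T, ReflTransGen (reroute F y0 w) a t) →
      ((∀ p, ¬ F p w) → y1 = w) →
      ∃ F', Serves E A (insert y T) F' ∧ Clean F' A ∧
      ((∀ a ∈ A, a ≠ a0 → ∃ t ∈ T, ReflTransGen F a t) →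
        ∀ a ∈ A, ∃ t ∈ insert y T, ReflTransGen F' a t) := by
    intro a1 w hw0 hwP ha1 hT1 hy11 hpw hcov hfree
    have hFrom : ∀ x, From F A x → ¬ ReflTransGen F y0 x → From (reroute F y0 w) A x := by
      rintro x ⟨a, ha, hx⟩ hnx
      rcases reroute_reach hF.bi (hpred a0 ha0) hy0 hwP hx hnx with ⟨_, h⟩ | ⟨_, h⟩ | ⟨_, h⟩
      · exact ⟨a0, ha0, h⟩
      · exact ⟨a, ha, h⟩
      · exact ⟨a, ha, h⟩
    have hS : Serves E A T (reroute F y0 w) := by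
      refine ⟨reroute_bi hF.bi, ?_, ?_, ?_⟩
      · rintro u v (⟨rfl, rfl⟩ | ⟨h, _⟩)
        · exact hw0
        · exact hF.le _ _ h
      · exact fun t ht => hFrom t (hF.reach t ht) fun h => hT t ht (hy0.trans h)
      · rintro t ht v (⟨rfl, rfl⟩ | ⟨h, _⟩)
        · exact hT _ ht hy0
        · exact hF.halt t ht v h
    have hC : Clean (reroute F y0 w) A := by
      rintro u v (⟨rfl, rfl⟩ | ⟨h, _, h'⟩)
      · exact ⟨a0, ha0, reroute_active hF.bi (hpred a0 ha0) hy0 hwP⟩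
      · exact hFrom u (hcl u v h) h'
    have hex : ∃ m ≤ n, ∃ p, ReflTransGen (reroute F y0 w) a1 p ∧
        WalkN E (reroute F y0 w) m p y := by
      have hstep : ∀ z z', ¬ ReflTransGen F a0 z → ¬ ReflTransGen F a0 z' → Step E F z z' →
          Step E (reroute F y0 w) z z' ∨ ReflTransGen (reroute F y0 w) a1 z' := by
        intro z z' hz hz' hst
        have hz0 : ¬ ReflTransGen F y0 z' := fun h => hz' (hy0.trans h)
        cases hst with
        | free h1 h2 =>
          by_cases hzw : z' = w
          · subst hzw
            exact Or.inr (hfree h2 ▸ hy11)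
          · refine Or.inl (.free h1 ?_)
            rintro p (⟨_, h⟩ | ⟨h, _⟩)
            · exact hzw h
            · exact h2 p h
        | swap h1 h2 =>
          rename_i w'
          by_cases hzw : w' = w
          · subst hzw
            exact Or.inr (hpw _ h2 ▸ hy11)
          · exact Or.inl (.swap h1 (Or.inr ⟨h2, hzw, hz0⟩))
        | back h1 =>
          by_cases hzw : z = w
          · subst hzw
            exact Or.inr (hpw _ h1 ▸ hy11)
          · exact Or.inl (.back (Or.inr ⟨h1, hzw, hz0⟩))
      rcases walk_transfer hstep hw (fun m hm p hp => hmin m (by omega) p hp) with h | h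
      · exact h
      · exact ⟨n, le_rfl, y1, hy11, h⟩
    obtain ⟨m, hm, p, hp, hwp⟩ := hex
    obtain ⟨F', h1, h2, h3⟩ := ih m (by omega) hS hC ha1 hT1 hp hwp
    exact ⟨F', h1, h2, fun h => h3 (hcov h)⟩
  cases hs with
  | free hE hnp =>
    have hwA : y1 ∉ A := hEA _ _ hE
    have hout : ∀ v, ¬ F y1 v := by
      intro v hv
      obtain ⟨a, ha, h⟩ := hcl _ _ hv
      exact hwA (eq_of_rtg_of_noPred h hnp ▸ ha)
    refine main a0 y1 hE hy1 ha0 ?_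
      ((reroute_active hF.bi (hpred a0 ha0) hy0 hy1).tail (Or.inl ⟨rfl, rfl⟩))
      (fun p hp => absurd hp (hnp p)) ?_ (fun _ => rfl)
    · intro t ht h
      have : ReflTransGen F a0 t ∨ t = y1 := by
        refine rtg_inv (P := fun x => ReflTransGen F a0 x ∨ x = y1) h (Or.inl .refl) ?_
        rintro u v (⟨rfl, rfl⟩ | ⟨huv, _⟩) (hu | rfl)
        · exact Or.inr rfl
        · exact Or.inr rfl
        · exact Or.inl (hu.tail huv)
        · exact absurd huv (hout v)
      rcases this with h | rfl
      · exact hT t ht h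
      · obtain ⟨a, ha, h⟩ := hF.reach t ht
        exact hwA (eq_of_rtg_of_noPred h hnp ▸ ha)
    · intro hcov a ha haa
      obtain ⟨t, ht, h⟩ := hcov a ha haa
      refine ⟨t, ht, ?_⟩
      rcases reroute_reach hF.bi (hpred a0 ha0) hy0 hy1 h
        (fun h => hT t ht (hy0.trans h)) with ⟨h1, h⟩ | ⟨_, h⟩ | ⟨h1, h⟩
      · obtain rfl := eq_of_rtg_of_noSucc h1 hout
        exact absurd (eq_of_rtg_of_noPred ‹ReflTransGen F a y1› hnp ▸ ha) hwA
      · exact h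
      · exact absurd (eq_of_rtg_of_noPred h1 (hpred a ha) ▸ ha) hwA
  | swap hE hp =>
    rename_i w
    have hwA : w ∉ A := hEA _ _ hE
    obtain ⟨a1, ha1, hp1⟩ := hcl _ _ hp
    have hwP : ¬ ReflTransGen F a0 w := by
      intro h
      rcases ReflTransGen.cases_tail h with rfl | ⟨d, hd, hdw⟩
      · exact hwA ha0
      · exact hy1 (hF.bi.inn hdw hp ▸ hd)
    have hya : ¬ ReflTransGen F y0 y1 := fun h => hy1 (hy0.trans h)
    have ha10 : a0 ≠ a1 := fun h => hy1 (h ▸ hp1)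
    have hr1 : ReflTransGen (reroute F y0 w) a1 y1 := by
      rcases reroute_reach hF.bi (hpred a0 ha0) hy0 hwP hp1 hya with ⟨h1, h⟩ | ⟨_, h⟩ | ⟨h1, h⟩
      · exact absurd (TransGen.head' hp h1) (hF.bi.acyclic (hpred a1 ha1) hp1)
      · exact h
      · exact h
    refine main a1 w hE hwP ha1 ?_ hr1 (fun p hp' => hF.bi.inn hp' hp) ?_
      (fun h => absurd hp (h _))
    · intro t ht h
      have : ReflTransGen F t y1 := by
        refine rtg_inv (P := fun x => ReflTransGen F x y1) h hp1 ?_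
        rintro u v (⟨rfl, rfl⟩ | ⟨h, hv, _⟩) hu
        · exact absurd hu hya
        · rcases ReflTransGen.cases_head hu with rfl | ⟨d, hd, hdw⟩
          · exact absurd (hF.bi.out h hp) hv
          · exact hF.bi.out hd h ▸ hdw
      obtain rfl := eq_of_rtg_of_noSucc this (hF.halt t ht)
      exact hF.halt _ ht _ hp
    · intro hcov a ha haa
      by_cases hae : a = a0
      · subst hae
        obtain ⟨t, ht, h⟩ := hcov a1 ha1 (Ne.symm ha10)
        refine ⟨t, ht, ?_⟩
        have hwt : ReflTransGen F w t := by
          rcases hF.bi.total' hp1 h with h' | h'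
          · rcases ReflTransGen.cases_head h' with rfl | ⟨d, hd, hdt⟩
            · exact absurd hp (hF.halt _ ht _)
            · exact hF.bi.out hd hp ▸ hdt
          · obtain rfl := eq_of_rtg_of_noSucc h' (hF.halt t ht)
            exact absurd hp (hF.halt _ ht _)
        rcases reroute_reach hF.bi (hpred a ha) hy0 hwP h
          (fun h => hT t ht (hy0.trans h)) with ⟨h1, h⟩ | ⟨h1, h⟩ | ⟨h1, h⟩
        · exact h
        · exact absurd hwt h1
        · exact absurd (eq_of_rtg_of_noPred h1 (hpred a1 ha1) ▸ ha1) hwA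
      · obtain ⟨t, ht, h⟩ := hcov a ha hae
        refine ⟨t, ht, ?_⟩
        rcases reroute_reach hF.bi (hpred a0 ha0) hy0 hwP h
          (fun h => hT t ht (hy0.trans h)) with ⟨h1, h2⟩ | ⟨h1, h2⟩ | ⟨h1, h2⟩
        · have h3 : ReflTransGen F a1 t := (hp1.tail hp).trans h1
          rcases hF.bi.total h h3 with h4 | h4
          · exact absurd (eq_of_rtg_of_noPred h4 (hpred a1 ha1)) haa
          · exact absurd (eq_of_rtg_of_noPred h4 (hpred a ha)).symm haa
        · exact h2
        · exact absurd (eq_of_rtg_of_noPred h1 (hpred a ha) ▸ ha) hwA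
  | back hp =>
    refine absurd ?_ hy1
    rcases ReflTransGen.cases_tail hy0 with rfl | ⟨d, hd, hdw⟩
    · exact absurd hp (hpred _ ha0 _)
    · exact hF.bi.inn hdw hp ▸ hd

end Webs

section Waves

universe u
variable {V : Type u}

open Relation

/-! ### Waves and hindrances -/

/-- All requirements on a wave except that the flow `F` reaches `S`: the set `Q` is the roof, and
`Q \ S` contains no sink and is left only through `S`. -/
structure PreWave (Γ : Web V) (Q S : Set V) (F : V → V → Prop) : Prop where
  subA : Γ.A ⊆ Q
  subS : S ⊆ Q
  sepB : ∀ u ∈ Q, u ∉ S → u ∉ Γ.B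
  sep : ∀ u ∈ Q, u ∉ S → ∀ v, Γ.E u v → v ∈ Q
  bi : BiUnique F
  le : ∀ u v, F u v → Γ.E u v
  inQ : ∀ u v, F u v → u ∈ Q
  halt : ∀ u v, F u v → u ∉ S

/-- A wave: the flow `F` inside the roof `Q` links a set of sources onto `S`, which separates the
roof from the sinks. -/
structure IsWave (Γ : Web V) (Q S : Set V) (F : V → V → Prop) : Prop
    extends PreWave Γ Q S F where
  reach : ∀ s ∈ S, From F Γ.A s

/-- A web is unhindered if every wave starts at all the sources. -/
def Unhindered (Γ : Web V) : Prop :=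
  ∀ Q S F, IsWave Γ Q S F → ∀ a ∈ Γ.A, ∃ s ∈ S, ReflTransGen F a s

theorem PreWave.inQ' {Γ : Web V} {Q S : Set V} {F : V → V → Prop} (h : PreWave Γ Q S F)
    {u v : V} (huv : F u v) : v ∈ Q :=
  h.sep u (h.inQ _ _ huv) (h.halt _ _ huv) v (h.le _ _ huv)

theorem PreWave.mono {Γ : Web V} {Q S : Set V} {F F' : V → V → Prop} (h : PreWave Γ Q S F)
    (hF : ∀ u v, F' u v → F u v) : PreWave Γ Q S F' :=
  { h with
    bi := h.bi.mono hF
    le := fun u v huv => h.le u v (hF u v huv)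
    inQ := fun u v huv => h.inQ u v (hF u v huv)
    halt := fun u v huv => h.halt u v (hF u v huv) }

theorem from_clean {F : V → V → Prop} {A : Set V} {x : V} (h : From F A x) :
    From (fun u v => F u v ∧ From F A u) A x := by
  obtain ⟨a, ha, h⟩ := h
  refine ⟨a, ha, ?_⟩
  induction h with
  | refl => exact .refl
  | @tail b c hb hbc ih => exact ih.tail ⟨hbc, a, ha, hb⟩

theorem clean_clean {F : V → V → Prop} {A : Set V} :
    Clean (fun u v => F u v ∧ From F A u) A := fun _ _ h => from_clean h.2

theorem IsWave.clean {Γ : Web V} {Q S : Set V} {F : V → V → Prop} (h : IsWave Γ Q S F) :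
    IsWave Γ Q S (fun u v => F u v ∧ From F Γ.A u) :=
  { h.toPreWave.mono (fun _ _ h => h.1) with
    reach := fun s hs => from_clean (h.reach s hs) }

/-- In a clean flow a vertex is reached iff it is a source or has a predecessor. -/
theorem Clean.from_iff {F : V → V → Prop} {A : Set V} (h : Clean F A) {x : V} :
    From F A x ↔ x ∈ A ∨ ∃ p, F p x := by
  constructor
  · rintro ⟨a, ha, hx⟩
    rcases ReflTransGen.cases_tail hx with rfl | ⟨d, _, hd⟩
    · exact Or.inl ha
    · exact Or.inr ⟨d, hd⟩
  · rintro (hx | ⟨p, hp⟩)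
    · exact ⟨x, hx, .refl⟩
    · exact (h p x hp).step hp

theorem trivial_wave (Γ : Web V) : IsWave Γ Γ.A Γ.A (fun _ _ => False) where
  subA := subset_rfl
  subS := subset_rfl
  sepB := fun u h h' => absurd h h'
  sep := fun u h h' => absurd h h'
  bi := ⟨fun h => h.elim, fun h => h.elim⟩
  le := fun _ _ h => h.elim
  inQ := fun _ _ h => h.elim
  halt := fun _ _ h => h.elim
  reach := fun s hs => ⟨s, hs, .refl⟩

/-- If a wave lacks one end `s0` and one source `a0` is unused, then alternating walks from `a0`
either lead to `s0`, which repairs the wave, or trace out a hindrance. -/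
theorem PreWave.dichotomy {Γ : Web V} {Q S : Set V} {F : V → V → Prop} (h : PreWave Γ Q S F)
    (hu : Unhindered Γ) {s0 a0 : V} (hs0 : s0 ∈ S) (hr : ∀ s ∈ S, s ≠ s0 → From F Γ.A s)
    (ha0 : a0 ∈ Γ.A) (hna : ∀ s ∈ S, ¬ ReflTransGen F a0 s) :
    ∃ F', IsWave Γ Q S F' := by
  by_cases hFs : From F Γ.A s0
  · refine ⟨F, { h with reach := fun s hs => ?_ }⟩
    by_cases hss : s = s0
    · exact hss ▸ hFs
    · exact hr s hs hss
  wlog hcl : Clean F Γ.A generalizing F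
  · refine this (F := fun u v => F u v ∧ From F Γ.A u) (h.mono fun _ _ h => h.1)
      (fun s hs hss => from_clean (hr s hs hss))
      (fun s hs hh => hna s hs (ReflTransGen.mono (fun _ _ h => h.1) _ _ hh))
      (fun hh => hFs (hh.mono fun _ _ h => h.1)) clean_clean
  let E' : V → V → Prop := fun u v => Γ.E u v ∧ u ∈ Q ∧ u ∉ S
  have hE'A : ∀ u v, E' u v → v ∉ Γ.A := fun u v h => Γ.hA u v h.1
  by_cases hout : ∃ y0, ReflTransGen F a0 y0 ∧ ReflTransGen (Step E' F) y0 s0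
  · obtain ⟨y0, hy0, hw⟩ := hout
    have hS : Serves E' Γ.A (S \ {s0}) F :=
      ⟨h.bi, fun u v huv => ⟨h.le _ _ huv, h.inQ _ _ huv, h.halt _ _ huv⟩,
        fun t ht => hr t ht.1 ht.2, fun t ht v hv => h.halt _ _ hv ht.1⟩
    obtain ⟨F', hF', -, -⟩ := aug hE'A hS hcl ha0 (fun t ht => hna t ht.1) hy0 hw
    refine ⟨F', { h with
      bi := hF'.bi
      le := fun u v huv => (hF'.le _ _ huv).1
      inQ := fun u v huv => (hF'.le _ _ huv).2.1
      halt := fun u v huv => (hF'.le _ _ huv).2.2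
      reach := fun s hs => hF'.reach s ?_ }⟩
    by_cases hss : s = s0
    · exact Or.inl hss
    · exact Or.inr ⟨hs, hss⟩
  · exfalso
    let Out : Set V := {y | ∃ y0, ReflTransGen F a0 y0 ∧ ReflTransGen (Step E' F) y0 y}
    have hOutS : ∀ {y z}, y ∈ Out → Step E' F y z → z ∈ Out := by
      rintro y z ⟨y0, h1, h2⟩ h3
      exact ⟨y0, h1, h2.tail h3⟩
    have hOutQ : ∀ y ∈ Out, y ∈ Q ∧ y ∉ S := by
      rintro y ⟨y0, h1, h2⟩
      induction h2 with
      | refl =>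
        refine ⟨rtg_inv (P := (· ∈ Q)) h1 (h.subA ha0) (fun u v huv _ => h.inQ' huv), ?_⟩
        exact fun hy => hna _ hy h1
      | @tail b c hb hbc ih =>
        cases hbc with
        | free hE hn =>
          refine ⟨h.sep b ih.1 ih.2 _ hE.1, fun hcS => ?_⟩
          have hcs : c ≠ s0 := by
            rintro rfl
            exact hout ⟨y0, h1, hb.tail (.free hE hn)⟩
          obtain ⟨a, ha, hac⟩ := hr c hcS hcs
          exact hE'A _ _ hE (eq_of_rtg_of_noPred hac hn ▸ ha)
        | swap hE hp => exact ⟨h.inQ _ _ hp, h.halt _ _ hp⟩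
        | back hp => exact ⟨h.inQ _ _ hp, h.halt _ _ hp⟩
    have hOutE : ∀ y ∈ Out, ∀ w, Γ.E y w → E' y w := fun y hy w hw => ⟨hw, hOutQ y hy⟩
    let Q' : Set V := Γ.A ∪ Out ∪ {w | ∃ y ∈ Out, Γ.E y w}
    let F' : V → V → Prop := fun u v => F u v ∧ u ∈ Out
    have hback : ∀ a x, ReflTransGen F a x → x ∈ Out → ReflTransGen F' a x := by
      intro a x hax hx
      refine rtg_restrict (P := (· ∈ Out)) hax hx fun u v huv hv => ?_
      have := hOutS hv (.back huv)
      exact ⟨this, huv, this⟩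
    have hW : IsWave Γ Q' (Q' \ Out) F' := by
      refine ⟨⟨?_, ?_, ?_, ?_, ?_, ?_, ?_, ?_⟩, ?_⟩
      · exact fun a ha => Or.inl (Or.inl ha)
      · exact fun x hx => hx.1
      · intro x hx hxn
        have hx' : x ∈ Out := by by_contra hc; exact hxn ⟨hx, hc⟩
        exact h.sepB x (hOutQ x hx').1 (hOutQ x hx').2
      · intro x hx hxn v hv
        have hx' : x ∈ Out := by by_contra hc; exact hxn ⟨hx, hc⟩
        exact Or.inr ⟨x, hx', hv⟩
      · exact h.bi.mono fun _ _ h => h.1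
      · exact fun _ _ huv => h.le _ _ huv.1
      · exact fun _ _ huv => Or.inl (Or.inr huv.2)
      · exact fun _ _ huv hn => hn.2 huv.2
      · rintro s ⟨(hs | hs) | ⟨y, hy, hys⟩, hsn⟩
        · exact ⟨s, hs, .refl⟩
        · exact absurd hs hsn
        · have hE := hOutE y hy s hys
          have : ∃ p, F p s := by
            by_contra hc
            push Not at hc
            exact hsn (hOutS hy (.free hE hc))
          obtain ⟨p, hp⟩ := this
          have hpO : p ∈ Out := hOutS hy (.swap hE hp)
          obtain ⟨a, ha, hap⟩ := hcl p s hp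
          exact ⟨a, ha, (hback a p hap hpO).tail ⟨hp, hpO⟩⟩
    obtain ⟨s, hs, h1⟩ := hu _ _ _ hW a0 ha0
    exact hs.2 ⟨s, ReflTransGen.mono (fun _ _ h => h.1) _ _ h1, .refl⟩

/-! ### Deleting vertices and dividing by a wave -/

@[ext] theorem Web.ext' {Γ Δ : Web V} (hE : ∀ u v, Γ.E u v ↔ Δ.E u v) (hA : Γ.A = Δ.A)
    (hB : Γ.B = Δ.B) : Γ = Δ := by
  obtain ⟨E, A, B, h⟩ := Γ
  obtain ⟨E', A', B', h'⟩ := Δ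
  obtain rfl : E = E' := by
    funext u v
    exact propext (hE u v)
  subst hA hB
  rfl

/-- The web without the vertices in `X` (which remain as isolated vertices, neither sources nor
sinks). -/
def Web.del (Γ : Web V) (X : Set V) : Web V where
  E u v := Γ.E u v ∧ u ∉ X ∧ v ∉ X
  A := Γ.A \ X
  B := Γ.B \ X
  hA u v h h' := Γ.hA u v h.1 h'.1

/-- The quotient of a web by a wave with roof `Q` and end set `S`: the vertices of `Q \ S` are
deleted, and `S` becomes the set of sources. -/
def Web.quo (Γ : Web V) (Q S : Set V) : Web V where
  E u v := Γ.E u v ∧ (u ∈ Q → u ∈ S) ∧ v ∉ Q ∧ v ∉ S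
  A := S
  B := Γ.B \ (Q \ S)
  hA _ _ h h' := h.2.2.2 h'

theorem Web.del_empty (Γ : Web V) : Γ.del ∅ = Γ := by
  ext <;> simp [Web.del]

theorem Web.del_del (Γ : Web V) (X Y : Set V) : (Γ.del X).del Y = Γ.del (X ∪ Y) := by
  ext <;> simp [Web.del] <;> tauto

/-- A wave of `Γ` whose roof avoids `X` is a wave of `Γ - X`. -/
theorem IsWave.del {Γ : Web V} {Q S X : Set V} {F : V → V → Prop} (h : IsWave Γ Q S F)
    (hX : ∀ x ∈ X, x ∉ Q) : IsWave (Γ.del X) Q S F where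
  subA := fun a ha => h.subA ha.1
  subS := h.subS
  sepB := fun u hu hs hB => h.sepB u hu hs hB.1
  sep := fun u hu hs v hv => h.sep u hu hs v hv.1
  bi := h.bi
  le := fun u v huv => ⟨h.le u v huv, fun hx => hX _ hx (h.inQ _ _ huv),
    fun hx => hX _ hx (h.inQ' huv)⟩
  inQ := h.inQ
  halt := h.halt
  reach := fun s hs => by
    obtain ⟨a, ha, h'⟩ := h.reach s hs
    exact ⟨a, ⟨ha, fun hx => hX _ hx (h.subA ha)⟩, h'⟩

theorem From.not_mem_del {Γ : Web V} {X : Set V} {F : V → V → Prop} {x : V}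
    (hle : ∀ u v, F u v → (Γ.del X).E u v) (h : From F (Γ.del X).A x) : x ∉ X := by
  obtain ⟨a, ha, h⟩ := h
  rcases ReflTransGen.cases_tail h with rfl | ⟨d, _, hd⟩
  · exact ha.2
  · exact (hle _ _ hd).2.2

theorem IsWave.not_mem_del {Γ : Web V} {Q S X : Set V} {F : V → V → Prop}
    (h : IsWave (Γ.del X) Q S F) {s : V} (hs : s ∈ S) : s ∉ X :=
  (h.reach s hs).not_mem_del h.le

/-- Deleted vertices can be put into the roof. -/
theorem IsWave.add_del {Γ : Web V} {Q S X : Set V} {F : V → V → Prop}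
    (h : IsWave (Γ.del X) Q S F) : IsWave (Γ.del X) (Q ∪ X) S F where
  subA := fun a ha => Or.inl (h.subA ha)
  subS := fun s hs => Or.inl (h.subS hs)
  sepB := by
    rintro u (hu | hu) hs hB
    · exact h.sepB u hu hs hB
    · exact hB.2 hu
  sep := by
    rintro u (hu | hu) hs v hv
    · exact Or.inl (h.sep u hu hs v hv)
    · exact absurd hu hv.2.1
  bi := h.bi
  le := h.le
  inQ := fun u v huv => Or.inl (h.inQ u v huv)
  halt := h.halt
  reach := h.reach

/-- A wave of `Γ - X`, together with the trivial paths at the sources in `X`, is a wave of `Γ`. -/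
theorem unhindered_del_sources {Γ : Web V} (hu : Unhindered Γ) {X : Set V} (hX : X ⊆ Γ.A) :
    Unhindered (Γ.del X) := by
  intro Q S F h a ha
  have hF : ∀ u v, F u v → u ∉ X ∧ v ∉ X := fun u v huv => (h.le u v huv).2
  have hW : IsWave Γ (Q ∪ X) (S ∪ X) F := by
    refine ⟨⟨?_, ?_, ?_, ?_, h.bi, fun u v huv => (h.le u v huv).1,
      fun u v huv => Or.inl (h.inQ u v huv), ?_⟩, ?_⟩
    · intro b hb
      by_cases hbX : b ∈ X
      · exact Or.inr hbX
      · exact Or.inl (h.subA ⟨hb, hbX⟩)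
    · exact Set.union_subset_union_left _ h.subS
    · intro u hu hn hB
      simp only [Set.mem_union, not_or] at hn hu
      exact h.sepB u (hu.resolve_right hn.2) hn.1 ⟨hB, hn.2⟩
    · intro u hu hn v hv
      simp only [Set.mem_union, not_or] at hn hu
      by_cases hvX : v ∈ X
      · exact Or.inr hvX
      · exact Or.inl (h.sep u (hu.resolve_right hn.2) hn.1 v ⟨hv, hn.2, hvX⟩)
    · rintro u v huv (hs | hx)
      · exact h.halt u v huv hs
      · exact (hF u v huv).1 hx
    · rintro s (hs | hs)
      · obtain ⟨b, hb, h'⟩ := h.reach s hs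
        exact ⟨b, hb.1, h'⟩
      · exact ⟨s, hX hs, .refl⟩
  obtain ⟨s, hs, has⟩ := hu _ _ _ hW a ha.1
  rcases hs with hs | hs
  · exact ⟨s, hs, has⟩
  · rcases ReflTransGen.cases_tail has with rfl | ⟨d, _, hd⟩
    · exact absurd hs ha.2
    · exact absurd hs (hF _ _ hd).2

end Waves

section Concat

universe u
variable {V : Type u}

open Relation

/-! ### Concatenation of waves and maximal waves -/

/-- The concatenation of a well-ordered family of flows: an edge of `F i` is used if its head is
outside all earlier roofs. Only indices in `I` are used. -/
def concat {ι : Type*} [LT ι] (I : Set ι) (Q : ι → Set V) (F : ι → V → V → Prop) (u v : V) : Prop :=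
  ∃ i ∈ I, F i u v ∧ ∀ j < i, v ∉ Q j

/-- The ends of a concatenation. -/
def concatEnds {ι : Type*} (I : Set ι) (Q S : ι → Set V) : Set V :=
  {v | (∃ i ∈ I, v ∈ Q i) ∧ ∀ i ∈ I, v ∈ Q i → v ∈ S i}

variable {ι : Type*} [LinearOrder ι] {Γ : Web V} {I : Set ι}
  {X Q S : ι → Set V} {F : ι → V → V → Prop}

theorem concat_mono {J : Set ι} (h : I ⊆ J) {u v : V} (h' : concat I Q F u v) :
    concat J Q F u v := by
  obtain ⟨i, hi, h'⟩ := h'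
  exact ⟨i, h hi, h'⟩

theorem concat_from [WellFoundedLT ι] (hI : IsLowerSet I) (hW : ∀ i ∈ I, IsWave (Γ.del (X i)) (Q i) (S i) (F i))
    (hXQ : ∀ i ∈ I, X i ⊆ Q i)
    (hkey : ∀ i ∈ I, ∀ j < i, ∀ u v, F i u v → v ∉ Q j → u ∉ X j)
    {i : ι} (hi : i ∈ I) {x : V} (hx : From (F i) (Γ.del (X i)).A x)
    (hxj : ∀ j < i, x ∈ Q j → x ∈ S j) : From (concat I Q F) Γ.A x := by
  induction i using WellFoundedLT.induction generalizing x with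
  | ind i ih =>
  obtain ⟨a, ha, hax⟩ := hx
  induction hax with
  | refl => exact ⟨a, ha.1, .refl⟩
  | @tail p x hap hpx ih2 =>
    by_cases hxQ : ∃ j < i, x ∈ Q j
    · obtain ⟨j, hj, hxQ⟩ := hxQ
      have hjI := hI hj.le hi
      exact ih j hj hjI ((hW j hjI).reach x (hxj j hj hxQ))
        fun k hk => hxj k (hk.trans hj)
    · push Not at hxQ
      refine (ih2 fun j hj hpQ => ?_).step ⟨i, hi, hpx, hxQ⟩
      by_contra hpS
      have hjI := hI hj.le hi
      refine hxQ j hj ((hW j hjI).sep p hpQ hpS x ⟨((hW i hi).le _ _ hpx).1, ?_, ?_⟩)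
      · exact hkey i hi j hj p x hpx (hxQ j hj)
      · exact fun h => hxQ j hj (hXQ j hjI h)

theorem concat_bi (hW : ∀ i ∈ I, IsWave (Γ.del (X i)) (Q i) (S i) (F i))
    (hXQ : ∀ i ∈ I, X i ⊆ Q i)
    (hkey : ∀ i ∈ I, ∀ j < i, ∀ u v, F i u v → v ∉ Q j → u ∉ X j) :
    BiUnique (concat I Q F) := by
  constructor
  · have key : ∀ u v v' i i', i ∈ I → i' ∈ I → F i u v → F i' u v' → (∀ j < i', v' ∉ Q j) →
        ¬ i < i' := by
      intro u v v' i i' hi hi' h h' hj hlt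
      refine hj i hlt ((hW i hi).sep u ((hW i hi).inQ _ _ h) ((hW i hi).halt _ _ h) v'
        ⟨((hW i' hi').le _ _ h').1, ?_, ?_⟩)
      · exact hkey i' hi' i hlt u v' h' (hj i hlt)
      · exact fun hx => hj i hlt (hXQ i hi hx)
    rintro u v v' ⟨i, hi, h, hj⟩ ⟨i', hi', h', hj'⟩
    rcases lt_trichotomy i i' with hl | rfl | hl
    · exact absurd hl (key _ _ _ _ _ hi hi' h h' hj')
    · exact (hW i hi).bi.out h h'
    · exact absurd hl (key _ _ _ _ _ hi' hi h' h hj)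
  · rintro u u' v ⟨i, hi, h, hj⟩ ⟨i', hi', h', hj'⟩
    rcases lt_trichotomy i i' with hl | rfl | hl
    · exact absurd ((hW i hi).inQ' h) (hj' i hl)
    · exact (hW i hi).bi.inn h h'
    · exact absurd ((hW i' hi').inQ' h') (hj i' hl)

theorem concat_clean [WellFoundedLT ι] (hI : IsLowerSet I)
    (hW : ∀ i ∈ I, IsWave (Γ.del (X i)) (Q i) (S i) (F i)) (hXQ : ∀ i ∈ I, X i ⊆ Q i)
    (hkey : ∀ i ∈ I, ∀ j < i, ∀ u v, F i u v → v ∉ Q j → u ∉ X j)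
    (hcl : ∀ i ∈ I, Clean (F i) (Γ.del (X i)).A) : Clean (concat I Q F) Γ.A := by
  rintro u v ⟨i, hi, h, hj⟩
  refine concat_from hI hW hXQ hkey hi (hcl i hi u v h) fun j hlt hu => ?_
  by_contra hs
  have hjI := hI hlt.le hi
  refine hj j hlt ((hW j hjI).sep u hu hs v ⟨((hW i hi).le _ _ h).1, ?_, ?_⟩)
  · exact hkey i hi j hlt u v h (hj j hlt)
  · exact fun hx => hj j hlt (hXQ j hjI hx)

/-- Concatenation of waves in webs `Γ - X i` yields a wave of `Γ - Y`, provided `Y` is not entered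
or left by the concatenated flow. -/
theorem concat_wave [WellFoundedLT ι] (hI : IsLowerSet I) (hne : I.Nonempty)
    (hW : ∀ i ∈ I, IsWave (Γ.del (X i)) (Q i) (S i) (F i)) (hXQ : ∀ i ∈ I, X i ⊆ Q i)
    (hkey : ∀ i ∈ I, ∀ j < i, ∀ u v, F i u v → v ∉ Q j → u ∉ X j)
    {Y : Set V} (hXY : ∀ i ∈ I, X i ⊆ Y)
    (hY : ∀ u v, concat I Q F u v → (u ∈ Y ↔ v ∈ Y))
    (hYS : ∀ v ∈ concatEnds I Q S, v ∉ Y) :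
    IsWave (Γ.del Y) (⋃ i ∈ I, Q i) (concatEnds I Q S)
      (fun u v => concat I Q F u v ∧ u ∉ Y) := by
  have hsep : ∀ u ∈ ⋃ i ∈ I, Q i, u ∉ concatEnds I Q S → ∃ i ∈ I, u ∈ Q i ∧ u ∉ S i := by
    intro u hu hn
    by_contra hc
    push Not at hc
    refine hn ⟨by simpa using hu, hc⟩
  refine ⟨⟨?_, ?_, ?_, ?_, ?_, ?_, ?_, ?_⟩, ?_⟩
  · obtain ⟨i, hi⟩ := hne
    intro a ha
    simp only [Set.mem_iUnion]
    exact ⟨i, hi, (hW i hi).subA ⟨ha.1, fun h => ha.2 (hXY i hi h)⟩⟩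
  · rintro v ⟨⟨i, hi, hv⟩, -⟩
    simp only [Set.mem_iUnion]
    exact ⟨i, hi, hv⟩
  · intro u hu hn hB
    obtain ⟨i, hi, hu, hs⟩ := hsep u hu hn
    exact (hW i hi).sepB u hu hs ⟨hB.1, fun h => hB.2 (hXY i hi h)⟩
  · intro u hu hn v hv
    obtain ⟨i, hi, hu, hs⟩ := hsep u hu hn
    simp only [Set.mem_iUnion]
    exact ⟨i, hi, (hW i hi).sep u hu hs v
      ⟨hv.1, fun h => hv.2.1 (hXY i hi h), fun h => hv.2.2 (hXY i hi h)⟩⟩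
  · exact (concat_bi hW hXQ hkey).mono fun _ _ h => h.1
  · rintro u v ⟨h, hu⟩
    have hv := mt (hY u v h).2 hu
    obtain ⟨i, hi, h, -⟩ := h
    exact ⟨((hW i hi).le _ _ h).1, hu, hv⟩
  · rintro u v ⟨⟨i, hi, h, -⟩, -⟩
    simp only [Set.mem_iUnion]
    exact ⟨i, hi, (hW i hi).inQ _ _ h⟩
  · rintro u v ⟨⟨i, hi, h, -⟩, -⟩ hs
    exact (hW i hi).halt _ _ h (hs.2 i hi ((hW i hi).inQ _ _ h))
  · intro s hs
    have hsY := hYS s hs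
    obtain ⟨⟨i, hi, hsi⟩, hs⟩ := hs
    obtain ⟨a, ha, has⟩ := concat_from hI hW hXQ hkey hi ((hW i hi).reach s (hs i hi hsi))
      fun j hj hsj => hs j (hI hj.le hi) hsj
    have h1 : a ∉ Y := rtg_inv_back (P := (· ∉ Y)) has hsY fun u v huv hv => mt (hY u v huv).1 hv
    refine ⟨a, ⟨ha, h1⟩, rtg_restrict (P := (· ∉ Y)) has hsY fun u v huv hv => ?_⟩
    have := mt (hY u v huv).1 hv
    exact ⟨this, huv, this⟩

end Concat

section Maximal

universe u
variable {V : Type u}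

open Relation

/-- The union of all roofs of waves. -/
def Web.roof (Γ : Web V) : Set V := {v | ∃ Q S F, IsWave Γ Q S F ∧ v ∈ Q}

/-- The ends of the maximal wave: the vertices of the roof that are ends of every wave having
them in its roof. -/
def Web.ess (Γ : Web V) : Set V :=
  {v | v ∈ Γ.roof ∧ ∀ Q S F, IsWave Γ Q S F → v ∈ Q → v ∈ S}

theorem Web.exists_max (Γ : Web V) : ∃ F, IsWave Γ Γ.roof Γ.ess F ∧ Clean F Γ.A := by
  suffices h : ∃ F, IsWave Γ Γ.roof Γ.ess F by
    obtain ⟨F, hF⟩ := h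
    exact ⟨_, hF.clean, clean_clean⟩
  obtain ⟨ι, Q, S, F, hW, hall⟩ : ∃ (ι : Type u) (Q S : ι → Set V) (F : ι → V → V → Prop),
      (∀ i, IsWave Γ (Q i) (S i) (F i)) ∧
      ∀ Q' S' F', IsWave Γ Q' S' F' → ∃ i, Q i = Q' ∧ S i = S' :=
    ⟨{w : Set V × Set V × (V → V → Prop) // IsWave Γ w.1 w.2.1 w.2.2}, fun w => w.1.1,
      fun w => w.1.2.1, fun w => w.1.2.2, fun w => w.2,
      fun Q' S' F' h => ⟨⟨(Q', S', F'), h⟩, rfl, rfl⟩⟩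
  obtain ⟨_, _⟩ := exists_wellFoundedLT ι
  obtain ⟨i0, -⟩ := hall _ _ _ (trivial_wave Γ)
  have := concat_wave (Γ := Γ) (I := Set.univ) (X := fun _ => ∅) (Q := Q) (S := S) (F := F)
    (Y := ∅) isLowerSet_univ ⟨i0, trivial⟩
    (fun i _ => by rw [Web.del_empty]; exact hW i) (by simp) (by simp) (by simp) (by simp) (by simp)
  rw [Web.del_empty] at this
  refine ⟨fun u v => concat Set.univ Q F u v ∧ u ∉ (∅ : Set V), ?_⟩
  convert this
  · ext v
    simp only [Set.mem_univ, Set.iUnion_true, Set.mem_iUnion]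
    constructor
    · rintro ⟨Q', S', F', h, hv⟩
      obtain ⟨i, rfl, rfl⟩ := hall _ _ _ h
      exact ⟨i, hv⟩
    · rintro ⟨i, hv⟩
      exact ⟨_, _, _, hW i, hv⟩
  · ext v
    constructor
    · rintro ⟨⟨Q', S', F', h, hv⟩, h'⟩
      obtain ⟨i, rfl, rfl⟩ := hall _ _ _ h
      exact ⟨⟨i, trivial, hv⟩, fun j _ => h' _ _ _ (hW j)⟩
    · rintro ⟨⟨i, -, hv⟩, h'⟩
      refine ⟨⟨_, _, _, hW i, hv⟩, fun Q' S' F' h => ?_⟩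
      obtain ⟨i, rfl, rfl⟩ := hall _ _ _ h
      exact h' i trivial

/-- A chosen flow of the maximal wave. -/
noncomputable def Web.flow (Γ : Web V) : V → V → Prop := Classical.choose Γ.exists_max

theorem Web.max_wave (Γ : Web V) : IsWave Γ Γ.roof Γ.ess Γ.flow :=
  (Classical.choose_spec Γ.exists_max).1

theorem Web.flow_clean (Γ : Web V) : Clean Γ.flow Γ.A :=
  (Classical.choose_spec Γ.exists_max).2

theorem IsWave.subset_roof {Γ : Web V} {Q S : Set V} {F : V → V → Prop} (h : IsWave Γ Q S F) :
    Q ⊆ Γ.roof := fun _ hv => ⟨Q, S, F, h, hv⟩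

theorem IsWave.ess_of_mem {Γ : Web V} {Q S : Set V} {F : V → V → Prop} (h : IsWave Γ Q S F)
    {v : V} (hv : v ∈ Γ.ess) (hQ : v ∈ Q) : v ∈ S := hv.2 Q S F h hQ

/-- A wave with the maximal roof has the canonical ends as soon as these contain its ends. -/
theorem IsWave.ends_eq {Γ : Web V} {S : Set V} {F : V → V → Prop} (h : IsWave Γ Γ.roof S F)
    (hS : S ⊆ Γ.ess) : S = Γ.ess :=
  hS.antisymm fun _ hv => h.ess_of_mem hv hv.1

theorem Web.subset_roof_del (Γ : Web V) (X : Set V) : X ⊆ (Γ.del X).roof :=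
  fun _ hv => (trivial_wave (Γ.del X)).add_del.subset_roof (Or.inr hv)

theorem Web.ess_del (Γ : Web V) (X : Set V) {v : V} (hv : v ∈ (Γ.del X).ess) : v ∉ X :=
  (Γ.del X).max_wave.not_mem_del hv

theorem Web.roof_del_mono {Γ : Web V} {X : Set V} {u : V} (hu : u ∉ (Γ.del X).roof) :
    (Γ.del X).roof ⊆ (Γ.del (X ∪ {u})).roof := by
  have := ((Γ.del X).max_wave.del (X := {u}) (by simpa using hu)).subset_roof
  rwa [Web.del_del] at this

/-! ### Dividing by a wave -/

/-- A wave of the quotient continues the wave. -/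
theorem IsWave.quo_wave {Γ : Web V} {Q S Q' S' : Set V} {F F' : V → V → Prop}
    (h : IsWave Γ Q S F) (h' : IsWave (Γ.quo Q S) Q' S' F') :
    IsWave Γ (Q ∪ Q') S' (fun u v => F u v ∨ F' u v) := by
  have hS' : ∀ s ∈ S', s ∈ Q → s ∈ S := by
    intro s hs hsQ
    obtain ⟨a, ha, has⟩ := h'.reach s hs
    rcases ReflTransGen.cases_tail has with rfl | ⟨d, _, hd⟩
    · exact ha
    · exact absurd hsQ (h'.le _ _ hd).2.2.1
  have hin : ∀ u ∈ Q ∪ Q', u ∉ Q' → u ∈ Q ∧ u ∉ S := fun u hu hn =>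
    ⟨hu.resolve_right hn, fun hs => hn (h'.subA hs)⟩
  refine ⟨⟨?_, ?_, ?_, ?_, ⟨?_, ?_⟩, ?_, ?_, ?_⟩, ?_⟩
  · exact fun a ha => Or.inl (h.subA ha)
  · exact fun a ha => Or.inr (h'.subS ha)
  · intro u hu hs hB
    by_cases huQ : u ∈ Q ∧ u ∉ S
    · exact h.sepB u huQ.1 huQ.2 hB
    · refine h'.sepB u ?_ hs ⟨hB, huQ⟩
      by_contra hn
      exact huQ (hin u hu hn)
  · intro u hu hs v hv
    by_cases huQ : u ∈ Q ∧ u ∉ S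
    · exact Or.inl (h.sep u huQ.1 huQ.2 v hv)
    · by_cases hvQ : v ∈ Q
      · exact Or.inl hvQ
      · refine Or.inr (h'.sep u ?_ hs v ⟨hv, ?_, hvQ, fun hvs => hvQ (h.subS hvs)⟩)
        · by_contra hn
          exact huQ (hin u hu hn)
        · intro hq
          by_contra hn
          exact huQ ⟨hq, hn⟩
  · have key : ∀ u v v', F u v → F' u v' → False := fun u v v' h1 h2 =>
      h.halt u v h1 ((h'.le _ _ h2).2.1 (h.inQ _ _ h1))
    rintro u v v' (h1 | h1) (h2 | h2)
    · exact h.bi.out h1 h2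
    · exact (key _ _ _ h1 h2).elim
    · exact (key _ _ _ h2 h1).elim
    · exact h'.bi.out h1 h2
  · have key : ∀ u u' v, F u v → F' u' v → False := fun u u' v h1 h2 =>
      (h'.le _ _ h2).2.2.1 (h.inQ' h1)
    rintro u v v' (h1 | h1) (h2 | h2)
    · exact h.bi.inn h1 h2
    · exact (key _ _ _ h1 h2).elim
    · exact (key _ _ _ h2 h1).elim
    · exact h'.bi.inn h1 h2
  · rintro u v (h1 | h1)
    · exact h.le _ _ h1
    · exact (h'.le _ _ h1).1
  · rintro u v (h1 | h1)
    · exact Or.inl (h.inQ _ _ h1)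
    · exact Or.inr (h'.inQ _ _ h1)
  · rintro u v (h1 | h1) hs
    · exact h.halt _ _ h1 (hS' u hs (h.inQ _ _ h1))
    · exact h'.halt _ _ h1 hs
  · intro s hs
    obtain ⟨t, ht, hts⟩ := h'.reach s hs
    obtain ⟨a, ha, hat⟩ := h.reach t ht
    exact ⟨a, ha, (ReflTransGen.mono (fun _ _ h => Or.inl h) _ _ hat).trans
      (ReflTransGen.mono (fun _ _ h => Or.inr h) _ _ hts)⟩

/-- A web is loose if it has only trivial waves: these have empty flow and end in the sources, while
their roofs are arbitrary. -/
def Loose (Γ : Web V) : Prop := ∀ Q S F, IsWave Γ Q S F → S = Γ.A ∧ ∀ u v, ¬ F u v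

theorem Loose.unhindered {Γ : Web V} (h : Loose Γ) : Unhindered Γ := by
  intro Q S F hW a ha
  exact ⟨a, (h Q S F hW).1 ▸ ha, .refl⟩

theorem quo_max_roof (Γ : Web V) : (Γ.quo Γ.roof Γ.ess).roof ⊆ Γ.roof := by
  rintro v ⟨Q, S, F, h, hv⟩
  exact (Γ.max_wave.quo_wave h).subset_roof (Or.inr hv)

/-- Dividing by the maximal wave leaves no wave but the trivial ones. -/
theorem loose_quo_max (Γ : Web V) : Loose (Γ.quo Γ.roof Γ.ess) := by
  intro Q S F h
  have hF : ∀ u v, ¬ F u v := fun u v huv =>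
    (h.le _ _ huv).2.2.1 (quo_max_roof Γ (h.subset_roof (h.inQ' huv)))
  refine ⟨Set.Subset.antisymm ?_ ?_, hF⟩
  · intro s hs
    obtain ⟨a, ha, has⟩ := h.reach s hs
    rcases ReflTransGen.cases_tail has with rfl | ⟨d, _, hd⟩
    · exact ha
    · exact (hF _ _ hd).elim
  · intro s hs
    exact (Γ.max_wave.quo_wave h).ess_of_mem hs (Or.inl hs.1)

end Maximal

section DelVertex

universe u
variable {V : Type u}

open Relation

/-! ### Waves and deletion of a single vertex -/

/-- The edges of `F` not incident with `u`. -/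
def delF (F : V → V → Prop) (u : V) (x y : V) : Prop := F x y ∧ x ≠ u ∧ y ≠ u

theorem rtg_delF {F : V → V → Prop} {u a s : V} (h : ReflTransGen F a s) :
    (ReflTransGen F a u ∧ ReflTransGen F u s) ∨ ReflTransGen (delF F u) a s := by
  induction h with
  | refl => exact Or.inr .refl
  | @tail b c hb hbc ih =>
    rcases ih with ih | ih
    · exact Or.inl ⟨ih.1, ih.2.tail hbc⟩
    · by_cases hbu : b = u
      · subst hbu
        exact Or.inl ⟨hb, .single hbc⟩
      · by_cases hcu : c = u
        · subst hcu
          exact Or.inl ⟨hb.tail hbc, .refl⟩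
        · exact Or.inr (ih.tail ⟨hbc, hbu, hcu⟩)

theorem PreWave.del_vertex {Γ : Web V} {Q S : Set V} {F : V → V → Prop} (h : PreWave Γ Q S F)
    (u : V) : PreWave (Γ.del {u}) Q (S \ {u}) (delF F u) where
  subA := fun a ha => h.subA ha.1
  subS := fun s hs => h.subS hs.1
  sepB := fun x hx hs hB => h.sepB x hx (fun h => hs ⟨h, hB.2⟩) hB.1
  sep := fun x hx hs v hv => h.sep x hx (fun h => hs ⟨h, hv.2.1⟩) v hv.1
  bi := h.bi.mono fun _ _ h => h.1
  le := fun x y hxy => ⟨h.le _ _ hxy.1, hxy.2⟩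
  inQ := fun x y hxy => h.inQ _ _ hxy.1
  halt := fun x y hxy hs => h.halt _ _ hxy.1 hs.1

theorem IsWave.del_reach {Γ : Web V} {Q S : Set V} {F : V → V → Prop} (h : IsWave Γ Q S F)
    {u s : V} (hs : s ∈ S) (hus : ¬ ReflTransGen F u s) :
    From (delF F u) (Γ.del {u}).A s := by
  obtain ⟨a, ha, has⟩ := h.reach s hs
  rcases rtg_delF (u := u) has with h' | h'
  · exact absurd h'.2 hus
  · refine ⟨a, ⟨ha, ?_⟩, h'⟩
    rintro rfl
    exact hus has

theorem IsWave.end_unique {Γ : Web V} {Q S : Set V} {F : V → V → Prop} (h : PreWave Γ Q S F)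
    {u s t : V} (hs : s ∈ S) (ht : t ∈ S) (hus : ReflTransGen F u s) (hut : ReflTransGen F u t) :
    s = t := by
  rcases h.bi.total' hus hut with h' | h'
  · exact eq_of_rtg_of_noSucc h' fun p hp => h.halt _ _ hp hs
  · exact (eq_of_rtg_of_noSucc h' fun p hp => h.halt _ _ hp ht).symm

theorem IsWave.del_vertex {Γ : Web V} {Q S : Set V} {F : V → V → Prop} (h : IsWave Γ Q S F)
    {u : V} (hu : Unhindered (Γ.del {u}))
    (ha : ∀ s0 ∈ S, s0 ≠ u → ReflTransGen F u s0 →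
      ∃ a0 ∈ Γ.A, a0 ≠ u ∧ ∀ s ∈ S, s ≠ u → ¬ ReflTransGen (delF F u) a0 s) :
    ∃ S' F', IsWave (Γ.del {u}) Q S' F' := by
  by_cases hs0 : ∃ s0 ∈ S, s0 ≠ u ∧ ReflTransGen F u s0
  · obtain ⟨s0, hs0, hne, hus⟩ := hs0
    obtain ⟨a0, ha0, hau, hna⟩ := ha s0 hs0 hne hus
    refine ⟨_, (h.toPreWave.del_vertex u).dichotomy hu (s0 := s0) (a0 := a0) ⟨hs0, hne⟩
      (fun s hs hss => h.del_reach hs.1 fun hus' => hss ?_) ⟨ha0, hau⟩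
      fun s hs => hna s hs.1 hs.2⟩
    exact IsWave.end_unique h.toPreWave hs.1 hs0 hus' hus
  · push Not at hs0
    exact ⟨_, _, { h.toPreWave.del_vertex u with
      reach := fun s hs => h.del_reach hs.1 (hs0 s hs.1 hs.2) }⟩

/-- Deleting a vertex outside the maximal roof does not create a hindrance. -/
theorem Unhindered.del_vertex {Γ : Web V} (hu : Unhindered Γ) {v : V} (hv : v ∉ Γ.roof) :
    Unhindered (Γ.del {v}) := by
  intro Q S F h a0 ha0
  by_contra hna
  push Not at hna
  have hF : ∀ x y, F x y → x ≠ v ∧ y ≠ v := fun x y hxy => (h.le x y hxy).2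
  have hP : PreWave Γ (Q ∪ {v}) (S ∪ {v}) F := by
    refine ⟨?_, ?_, ?_, ?_, h.bi, fun x y hxy => (h.le x y hxy).1,
      fun x y hxy => Or.inl (h.inQ x y hxy), ?_⟩
    · intro b hb
      by_cases hbX : b = v
      · exact Or.inr hbX
      · exact Or.inl (h.subA ⟨hb, hbX⟩)
    · exact Set.union_subset_union_left _ h.subS
    · intro x hx hn hB
      simp only [Set.mem_union, not_or] at hn hx
      exact h.sepB x (hx.resolve_right hn.2) hn.1 ⟨hB, hn.2⟩
    · intro x hx hn y hy
      simp only [Set.mem_union, not_or] at hn hx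
      by_cases hvX : y = v
      · exact Or.inr hvX
      · exact Or.inl (h.sep x (hx.resolve_right hn.2) hn.1 y ⟨hy, hn.2, hvX⟩)
    · rintro x y hxy (hs | hx)
      · exact h.halt x y hxy hs
      · exact (hF x y hxy).1 hx
  obtain ⟨F', hF'⟩ := hP.dichotomy hu (s0 := v) (a0 := a0) (Or.inr rfl)
    (by
      rintro s (hs | hs) hsv
      · obtain ⟨a, ha, h'⟩ := h.reach s hs
        exact ⟨a, ha.1, h'⟩
      · exact absurd hs hsv)
    ha0.1
    (by
      rintro s (hs | rfl) has
      · exact hna s hs has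
      · rcases ReflTransGen.cases_tail has with hsa | ⟨d, _, hd⟩
        · exact ha0.2 hsa.symm
        · exact (hF _ _ hd).2 rfl)
  exact hv (hF'.subset_roof (Or.inr rfl))

/-- If `Γ - u` is unhindered, then the maximal roof of `Γ` is contained in that of `Γ - u`. -/
theorem roof_subset_del {Γ : Web V} {u : V} (huA : u ∉ Γ.A) (hu : Unhindered (Γ.del {u})) :
    Γ.roof ⊆ (Γ.del {u}).roof := by
  have hW := Γ.max_wave
  suffices h : ∃ S' F', IsWave (Γ.del {u}) Γ.roof S' F' by
    obtain ⟨S', F', h⟩ := h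
    exact h.subset_roof
  refine hW.del_vertex hu fun s0 hs0 hne hus => ?_
  rcases ReflTransGen.cases_head hus with h | ⟨d, hd, -⟩
  · exact absurd h.symm hne
  have huS : u ∉ Γ.ess := hW.halt _ _ hd
  obtain ⟨a0, ha0, h0⟩ := Γ.flow_clean u d hd
  refine ⟨a0, ha0, fun h => huA (h ▸ ha0), fun s hs hsu has => ?_⟩
  have key : ReflTransGen Γ.flow s u := by
    clear hs hsu
    induction has with
    | refl => exact h0
    | @tail b c hb hbc ih =>
      rcases ReflTransGen.cases_head ih with h | ⟨e, he, h⟩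
      · exact absurd h hbc.2.1
      · rwa [hW.bi.out hbc.1 he]
  exact huS (eq_of_rtg_of_noSucc key (fun p hp => hW.halt _ _ hp hs) ▸ hs)

/-- Putting back a vertex which is not a source keeps a web unhindered. -/
theorem Unhindered.of_del {Γ : Web V} {u : V} (huA : u ∉ Γ.A) (hu : Unhindered (Γ.del {u})) :
    Unhindered Γ := by
  intro Q S F h a0 ha0
  by_contra hna
  push Not at hna
  have haS : a0 ∉ S := fun hs => hna a0 hs .refl
  have hau : a0 ≠ u := fun h => huA (h ▸ ha0)
  have hu2 : Unhindered ((Γ.del {a0}).del {u}) := by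
    have := unhindered_del_sources hu (X := {a0})
      (by simpa [Web.del] using ⟨ha0, hau⟩)
    rwa [Web.del_del, Set.union_comm, ← Web.del_del] at this
  have hW1 : IsWave (Γ.del {a0}) Q (S \ {a0}) (delF F a0) :=
    { h.toPreWave.del_vertex a0 with
      reach := fun s hs => h.del_reach hs.1 (hna s hs.1) }
  have hsub := roof_subset_del (Γ := Γ.del {a0}) (u := u) (fun h => huA h.1) hu2
  have hW2 := ((Γ.del {a0}).del {u}).max_wave
  set R := ((Γ.del {a0}).del {u}).roof with hR
  set T := ((Γ.del {a0}).del {u}).ess with hT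
  set G := ((Γ.del {a0}).del {u}).flow with hG
  have hQR : Q ⊆ R := hW1.subset_roof.trans hsub
  have haT : a0 ∉ T := fun hs => by
    have := hW2.reach a0 hs
    rw [Web.del_del] at hW2
    exact hW2.not_mem_del hs (Or.inl rfl)
  have haG : ∀ x y, G x y → x ≠ a0 ∧ y ≠ a0 := fun x y hxy => (hW2.le x y hxy).1.2
  have hW3 : IsWave (Γ.del {u}) R T G := by
    refine ⟨⟨?_, hW2.subS, ?_, ?_, hW2.bi, ?_, hW2.inQ, hW2.halt⟩, ?_⟩
    · intro a ha
      by_cases haa : a = a0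
      · exact hQR (h.subA ha.1)
      · exact hW2.subA ⟨⟨ha.1, haa⟩, ha.2⟩
    · intro x hx hs hB
      by_cases hxa : x = a0
      · subst hxa
        exact h.sepB x (h.subA ha0) haS hB.1
      · exact hW2.sepB x hx hs ⟨⟨hB.1, hxa⟩, hB.2⟩
    · intro x hx hs y hy
      by_cases hxa : x = a0
      · subst hxa
        exact hQR (h.sep x (h.subA ha0) haS y hy.1)
      · exact hW2.sep x hx hs y
          ⟨⟨hy.1, hxa, fun h => Γ.hA _ _ hy.1 (by rw [Set.mem_singleton_iff.1 h]; exact ha0)⟩, hy.2⟩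
    · intro x y hxy
      have := hW2.le x y hxy
      exact ⟨this.1.1, this.2⟩
    · intro s hs
      obtain ⟨a, ha, h'⟩ := hW2.reach s hs
      exact ⟨a, ⟨ha.1.1, ha.2⟩, h'⟩
  obtain ⟨s, hs, has⟩ := hu R T G hW3 a0 ⟨ha0, hau⟩
  rcases ReflTransGen.cases_head has with rfl | ⟨d, hd, -⟩
  · exact haT hs
  · exact (haG _ _ hd).1 rfl

/-- A source with a neighbour outside the maximal roof can be added to an unhindered web. -/
theorem Unhindered.of_del_source {Γ : Web V} {u x : V} (hu : Unhindered (Γ.del {u}))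
    (hux : Γ.E u x) (hx : x ∉ (Γ.del {u}).roof) : Unhindered Γ := by
  intro Q S F h a0 ha0
  by_contra hna
  push Not at hna
  by_cases huA : u ∈ Γ.A
  swap
  · obtain ⟨s, hs, has⟩ := hu.of_del huA Q S F h a0 ha0
    exact hna s hs has
  by_cases huS : u ∈ S
  · have hau : a0 ≠ u := by
      rintro rfl
      exact hna _ huS .refl
    have hW : IsWave (Γ.del {u}) Q (S \ {u}) (delF F u) :=
      { h.toPreWave.del_vertex u with
        reach := fun s hs => h.del_reach hs.1 fun hus => hs.2
          (eq_of_rtg_of_noSucc hus fun p hp => h.halt _ _ hp huS).symm }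
    obtain ⟨s, hs, has⟩ := hu _ _ _ hW a0 ⟨ha0, hau⟩
    exact hna s hs.1 (ReflTransGen.mono (fun _ _ h => h.1) _ _ has)
  · have hxQ : x ∈ Q := h.sep u (h.subA huA) huS x hux
    suffices h : ∃ S' F', IsWave (Γ.del {u}) Q S' F' by
      obtain ⟨S', F', h⟩ := h
      exact hx (h.subset_roof hxQ)
    refine h.del_vertex hu fun s0 hs0 hne hus => ⟨a0, ha0, ?_, fun s hs _ has =>
      hna s hs (ReflTransGen.mono (fun _ _ h => h.1) _ _ has)⟩
    rintro rfl
    exact hna s0 hs0 hus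

end DelVertex

/-! ### Quotients and roofs -/

section QuoTools

universe u
variable {V : Type u}

open Relation

/-- A second wave induces a wave in the quotient. -/
theorem IsWave.wave_quo {Γ : Web V} {Q S Q' S' : Set V} {F F' : V → V → Prop}
    (h : IsWave Γ Q S F) (h' : IsWave Γ Q' S' F') :
    IsWave (Γ.quo Q S) (S ∪ (Q' \ Q)) ((S' \ Q) ∪ (S \ (Q' \ S')))
      (fun u v => F' u v ∧ v ∉ Q) := by
  have hout : ∀ u v, F' u v → v ∉ Q → (u ∈ Q → u ∈ S) := by
    intro u v huv hv hu
    by_contra hs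
    exact hv (h.sep u hu hs v (h'.le _ _ huv))
  have hin : ∀ u ∈ S ∪ (Q' \ Q), u ∉ (S' \ Q) ∪ (S \ (Q' \ S')) → u ∈ Q' ∧ u ∉ S' := by
    rintro u (hu | hu) hn
    · by_contra hc
      exact hn (Or.inr ⟨hu, hc⟩)
    · exact ⟨hu.1, fun hs => hn (Or.inl ⟨hs, hu.2⟩)⟩
  refine ⟨⟨?_, ?_, ?_, ?_, ?_, ?_, ?_, ?_⟩, ?_⟩
  · exact fun s hs => Or.inl hs
  · rintro s (hs | hs)
    · exact Or.inr ⟨h'.subS hs.1, hs.2⟩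
    · exact Or.inl hs.1
  · intro u hu hn hB
    exact h'.sepB u (hin u hu hn).1 (hin u hu hn).2 hB.1
  · intro u hu hn v hv
    exact Or.inr ⟨h'.sep u (hin u hu hn).1 (hin u hu hn).2 v hv.1, hv.2.2.1⟩
  · exact h'.bi.mono fun _ _ h => h.1
  · exact fun u v huv => ⟨h'.le _ _ huv.1, hout u v huv.1 huv.2, huv.2,
      fun hs => huv.2 (h.subS hs)⟩
  · intro u v huv
    by_cases hu : u ∈ Q
    · exact Or.inl (hout u v huv.1 huv.2 hu)
    · exact Or.inr ⟨h'.inQ _ _ huv.1, hu⟩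
  · rintro u v huv (hs | hs)
    · exact h'.halt _ _ huv.1 hs.1
    · exact hs.2 ⟨h'.inQ _ _ huv.1, h'.halt _ _ huv.1⟩
  · rintro s (hs | hs)
    · have key : ∀ a, a ∈ Γ.A → ∀ x, ReflTransGen F' a x → (x ∈ Q → x ∈ S) →
          From (fun u v => F' u v ∧ v ∉ Q) S x := by
        intro a ha x hax
        induction hax with
        | refl => exact fun hx => ⟨a, hx (h.subA ha), .refl⟩
        | @tail b c hb hbc ih =>
          intro hx
          by_cases hc : c ∈ Q
          · exact ⟨c, hx hc, .refl⟩
          · exact (ih (hout b c hbc hc)).step ⟨hbc, hc⟩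
      obtain ⟨a, ha, has⟩ := h'.reach s hs.1
      exact key a ha s has fun hq => absurd hq hs.2
    · exact ⟨s, hs.1, .refl⟩

/-- The divided-away vertices are isolated and may be added to any roof. -/
theorem IsWave.add_quo {Γ : Web V} {Q S Q' S' q : Set V} {F' : V → V → Prop}
    (h' : IsWave ((Γ.quo Q S).del q) Q' S' F') :
    IsWave ((Γ.quo Q S).del q) (Q' ∪ (Q \ S)) S' F' where
  subA := fun a ha => Or.inl (h'.subA ha)
  subS := fun s hs => Or.inl (h'.subS hs)
  sepB := by
    rintro u (hu | hu) hs hB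
    · exact h'.sepB u hu hs hB
    · exact hB.1.2 hu
  sep := by
    rintro u (hu | hu) hs v hv
    · exact Or.inl (h'.sep u hu hs v hv)
    · exact absurd (hv.1.2.1 hu.1) hu.2
  bi := h'.bi
  le := h'.le
  inQ := fun u v huv => Or.inl (h'.inQ u v huv)
  halt := h'.halt
  reach := h'.reach

theorem quo_del {Γ : Web V} {Q S q : Set V} (hS : S ⊆ Q) (hq : ∀ x ∈ q, x ∉ Q) :
    (Γ.del q).quo Q S = (Γ.quo Q S).del q := by
  ext x y
  · simp only [Web.del, Web.quo]
    tauto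
  · simp only [Web.del, Web.quo, Set.mem_sdiff]
    exact ⟨fun h => ⟨h, fun h' => hq _ h' (hS h)⟩, fun h => h.1⟩
  · simp only [Web.del, Web.quo, Set.mem_sdiff]
    tauto

/-- The roof of `Γ - q` can be computed in the quotient of `Γ` by its maximal wave. -/
theorem roof_del_eq {Γ : Web V} {q : Set V} (hq : ∀ x ∈ q, x ∉ Γ.roof) :
    (Γ.del q).roof = ((Γ.quo Γ.roof Γ.ess).del q).roof := by
  have hL : IsWave (Γ.del q) Γ.roof Γ.ess Γ.flow := Γ.max_wave.del hq
  have he := quo_del (Γ := Γ) Γ.max_wave.subS hq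
  have hbase : Γ.roof ⊆ ((Γ.quo Γ.roof Γ.ess).del q).roof := by
    intro v hv
    refine (trivial_wave ((Γ.quo Γ.roof Γ.ess).del q)).add_quo.subset_roof ?_
    by_cases hs : v ∈ Γ.ess
    · exact Or.inl ⟨hs, fun h => hq _ h hv⟩
    · exact Or.inr ⟨hv, hs⟩
  apply Set.Subset.antisymm
  · intro v hv
    by_cases hvQ : v ∈ Γ.roof
    · exact hbase hvQ
    · have := hL.wave_quo (Γ.del q).max_wave
      rw [he] at this
      exact this.subset_roof (Or.inr ⟨hv, hvQ⟩)
  · intro v hv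
    have h2 := ((Γ.quo Γ.roof Γ.ess).del q).max_wave
    rw [← he] at h2
    rw [← he] at hv
    exact (hL.quo_wave h2).subset_roof (Or.inr hv)

/-- Putting back finitely many non-sources into an unhindered web keeps it unhindered and does not
enlarge the maximal roof. -/
theorem del_finite_subset {Γ : Web V} {q q' : Set V} (hq : q.Finite) (hA : ∀ x ∈ q, x ∉ Γ.A)
    (hu : Unhindered (Γ.del q)) (hqq : q' ⊆ q) :
    Unhindered (Γ.del q') ∧ (Γ.del q').roof ⊆ (Γ.del q).roof := by
  suffices h : ∀ r : Set V, r.Finite → ∀ p, Unhindered (Γ.del (p ∪ r)) → (∀ x ∈ r, x ∉ Γ.A) →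
      Unhindered (Γ.del p) ∧ (Γ.del p).roof ⊆ (Γ.del (p ∪ r)).roof by
    have := h (q \ q') (hq.sdiff) q' (by rwa [Set.union_sdiff_cancel hqq]) fun x hx => hA x hx.1
    rwa [Set.union_sdiff_cancel hqq] at this
  intro r hr
  induction r, hr using Set.Finite.induction_on with
  | empty => intro p hp _; simpa using hp
  | @insert x r hx hr ih =>
    intro p hp hA
    have e : p ∪ insert x r = (p ∪ r) ∪ {x} := by
      rw [Set.union_assoc, Set.union_singleton]
    rw [e, ← Web.del_del] at hp ⊢
    have hxA : x ∉ (Γ.del (p ∪ r)).A := fun h => hA x (Or.inl rfl) h.1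
    have h1 := ih p (hp.of_del hxA) fun y hy => hA y (Or.inr hy)
    exact ⟨h1.1, h1.2.trans (roof_subset_del hxA hp)⟩

/-- A wave `W` of `Γ - X'` can be appended to a wave `L` of `Γ - X` with `X' ⊆ X`, provided `W`
does not leave `X` outside the roof of `L`. -/
theorem IsWave.append {Γ : Web V} {X X' Q S Q' S' : Set V} {F F' : V → V → Prop}
    (h : IsWave (Γ.del X) Q S F) (h' : IsWave (Γ.del X') Q' S' F') (hX : X' ⊆ X) (hXQ : X ⊆ Q)
    (hXQ' : X' ⊆ Q') (hkey : ∀ u v, F' u v → v ∉ Q → u ∉ X) : Q' ⊆ (Γ.del X).roof := by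
  have := concat_wave (Γ := Γ) (ι := Bool) (I := Set.univ) (X := fun b => cond b X' X)
    (Q := fun b => cond b Q' Q) (S := fun b => cond b S' S) (F := fun b => cond b F' F) (Y := X)
    isLowerSet_univ ⟨false, trivial⟩ (by rintro (_ | _) _ <;> assumption)
    (by rintro (_ | _) _ <;> assumption)
    (by
      rintro (_ | _) - (_ | _) hlt u v huv hv
      · exact absurd hlt (by decide)
      · exact absurd hlt (by decide)
      · exact hkey u v huv hv
      · exact absurd hlt (by decide))
    (by rintro (_ | _) _ <;> simp [hX])
    (by
      rintro u v ⟨_ | _, -, huv, hj⟩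
      · have := (h.le _ _ huv).2
        exact ⟨fun h => absurd h this.1, fun h => absurd h this.2⟩
      · have hv : v ∉ Q := hj false (by simp)
        have := hkey u v huv hv
        exact ⟨fun h => absurd h this, fun h => absurd (hXQ h) hv⟩)
    (by
      rintro v ⟨-, hv⟩ hvX
      exact h.not_mem_del (hv false trivial (hXQ hvX)) hvX)
  refine Set.Subset.trans (fun v hv => ?_) this.subset_roof
  simp only [Set.mem_iUnion]
  exact ⟨true, trivial, hv⟩

end QuoTools

section SingleSafe

universe u
variable {V : Type u}

open Relation

/-! ### Removing a single path safely -/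

/-- `P` is a finite set containing no source but `a`, the relation `f` is a path in `P` from `a` to
a sink, and the deletion of `P` leaves an unhindered web. -/
structure GoodPath (Γ : Web V) (a : V) (P : Set V) (f : V → V → Prop) : Prop where
  fin : P.Finite
  mem : a ∈ P
  src : ∀ x ∈ P, x ∈ Γ.A → x = a
  bi : BiUnique f
  le : ∀ u v, f u v → Γ.E u v ∧ u ∈ P ∧ v ∈ P
  reach : ∃ b ∈ Γ.B, b ∈ P ∧ ReflTransGen f a b
  unh : Unhindered (Γ.del P)

/-- The maximal roof after deletion of `a` and `X`. -/
def rho (Γ : Web V) (a : V) (X : Set V) : Set V := ((Γ.del {a}).del X).roof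

/-- All out-neighbours of `t` lie in the maximal roof after deletion of `a` and `X`. -/
def Fin' (Γ : Web V) (a : V) (t : V) (X : Set V) : Prop := ∀ w, Γ.E t w → w ∈ rho Γ a X

/-- Finite sets obtained from `∅` by adding, one at a time, out-neighbours of what has been
reached so far that lie outside the current maximal roof. -/
inductive RFree (Γ : Web V) (a : V) (X : Set V) : Set V → Prop
  | empty : RFree Γ a X ∅
  | add {q : Set V} {c u : V} : RFree Γ a X q → u ∉ rho Γ a (X ∪ q) → Γ.E c u →
      c ∈ insert a (X ∪ q) → RFree Γ a X (insert u q)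

variable {Γ : Web V} {a : V}

theorem subset_rho {X : Set V} : X ⊆ rho Γ a X := Web.subset_roof_del _ _

theorem mem_rho_self {X : Set V} : a ∈ rho Γ a X := by
  unfold rho
  rw [Web.del_del]
  exact Web.subset_roof_del _ _ (Or.inl rfl)

theorem src_mem_rho {X : Set V} {x : V} (hx : x ∈ Γ.A) : x ∈ rho Γ a X := by
  unfold rho
  rw [Web.del_del]
  by_cases h : x ∈ {a} ∪ X
  · exact Web.subset_roof_del _ _ h
  · exact (Web.max_wave _).subA ⟨hx, h⟩

theorem rho_mono {X Y : Set V} (h : ∀ y ∈ Y, y ∉ rho Γ a X) : rho Γ a X ⊆ rho Γ a (X ∪ Y) := by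
  have := ((Web.max_wave ((Γ.del {a}).del X)).del (X := Y) h).subset_roof
  rwa [Web.del_del _ X Y] at this

theorem RFree.finite {X q : Set V} (h : RFree Γ a X q) : q.Finite := by
  induction h with
  | empty => exact Set.finite_empty
  | add _ _ _ _ ih => exact ih.insert _

theorem RFree.disj {X q : Set V} (h : RFree Γ a X q) : ∀ x ∈ q, x ∉ rho Γ a X := by
  induction h with
  | empty => simp
  | add h hu _ _ ih =>
    rintro x (rfl | hx)
    · exact fun hx => hu (rho_mono ih hx)
    · exact ih x hx

theorem RFree.mono {X q : Set V} (h : RFree Γ a X q) : rho Γ a X ⊆ rho Γ a (X ∪ q) :=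
  rho_mono h.disj

theorem RFree.union {X q r : Set V} (h : RFree Γ a X q) (h' : RFree Γ a (X ∪ q) r) :
    RFree Γ a X (q ∪ r) := by
  induction h' with
  | empty => simpa using h
  | @add r c u _ hu hE hc ih =>
    rw [Set.union_insert]
    exact ih.add (by rwa [← Set.union_assoc]) hE (by rwa [← Set.union_assoc])

theorem RFree.unhindered {X q : Set V} (h : RFree Γ a X q) :
    Unhindered ((((Γ.del {a}).del X).quo (rho Γ a X) ((Γ.del {a}).del X).ess).del q) := by
  induction h with
  | empty =>
    rw [Web.del_empty]
    exact (loose_quo_max _).unhindered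
  | @add q c u h hu _ _ ih =>
    have hd := h.disj
    rw [← Set.union_singleton, ← Web.del_del]
    refine ih.del_vertex fun hc => hu ?_
    unfold rho at hc hd ⊢
    rw [← roof_del_eq hd, Web.del_del] at hc
    exact hc

/-- Maximal roofs are monotone on subsets of free sets, although a subset of a free set need not
be free. -/
theorem RFree.roof_subset {X q q' : Set V} (h : RFree Γ a X q) (hq : q' ⊆ q) :
    rho Γ a (X ∪ q') ⊆ rho Γ a (X ∪ q) := by
  have hd := h.disj
  have hu := h.unhindered
  have hs : ∀ x ∈ q, x ∉ ((Γ.del {a}).del X).ess := fun x hx hs => hd x hx hs.1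
  have := (del_finite_subset h.finite hs hu hq).2
  unfold rho at *
  rw [← roof_del_eq hd, ← roof_del_eq fun x hx => hd x (hq hx)] at this
  rwa [Web.del_del, Web.del_del _ X q] at this

theorem RFree.unhindered_empty (hu : Unhindered (Γ.del {a})) {q : Set V} (h : RFree Γ a ∅ q) :
    Unhindered ((Γ.del {a}).del q) := by
  induction h with
  | empty => rwa [Web.del_empty]
  | @add q c u h hu _ _ ih =>
    rw [← Set.union_singleton, ← Web.del_del]
    refine ih.del_vertex fun hc => hu ?_
    rwa [Set.empty_union]

theorem RFree.reach {q : Set V} (h : RFree Γ a ∅ q) {x : V} (hx : x ∈ q) :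
    ReflTransGen (fun u v => Γ.E u v ∧ u ∈ insert a q ∧ v ∈ insert a q) a x := by
  induction h generalizing x with
  | empty => exact hx.elim
  | @add q c u h hu hE hc ih =>
    have hm : ∀ y, ReflTransGen (fun u v => Γ.E u v ∧ u ∈ insert a q ∧ v ∈ insert a q) a y →
        ReflTransGen (fun u' v => Γ.E u' v ∧ u' ∈ insert a (insert u q) ∧
          v ∈ insert a (insert u q)) a y := by
      intro y
      refine ReflTransGen.mono (fun u v h => ⟨h.1, ?_, ?_⟩) _ _
      · exact Set.insert_subset_insert (Set.subset_insert _ _) h.2.1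
      · exact Set.insert_subset_insert (Set.subset_insert _ _) h.2.2
    rcases hx with rfl | hx
    · rw [Set.empty_union] at hc
      have : ReflTransGen (fun u v => Γ.E u v ∧ u ∈ insert a q ∧ v ∈ insert a q) a c := by
        rcases hc with rfl | hc
        · exact .refl
        · exact ih hc
      exact (hm c this).tail ⟨hE, Set.insert_subset_insert (Set.subset_insert _ _) hc,
        Or.inr (Or.inl rfl)⟩
    · exact hm x (ih hx)

/-- A sequence of finite sets `z i`, free over the union `T i` of the earlier ones. Members `t` of
`z j` are given the chance, at step `j + 1`, to have all their out-neighbours roofed. -/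
structure FreeSeq (Γ : Web V) (a : V) (z : Ordinal.{u} → Set V) (T : Ordinal.{u} → Set V) :
    Prop where
  T_eq : ∀ i, T i = ⋃ j < i, z j
  free : ∀ i, RFree Γ a (T i) (z i)
  done : ∀ j, ∀ t ∈ z j, ∀ z', RFree Γ a (T (Order.succ (Order.succ j))) z' →
    Fin' Γ a t (T (Order.succ (Order.succ j)) ∪ z') → Fin' Γ a t (T (Order.succ (Order.succ j)))
  exit : ∀ i, (∀ j, i ≠ Order.succ j) → z i = ∅ →
    ∀ c ∈ insert a (T i), ∀ w, Γ.E c w → w ∈ rho Γ a (T i)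

/-- The local requirement on `z i`. -/
def SeqSpec (Γ : Web V) (a : V) (i : Ordinal.{u}) (z : ∀ j, j < i → Set V) (Z : Set V) : Prop :=
  RFree Γ a (⋃ j, ⋃ h : j < i, z j h) Z ∧
  (∀ j, ∀ h : j < i, i = Order.succ j → (z j h).Finite →
    ∀ t ∈ z j h, ∀ z', RFree Γ a ((⋃ j, ⋃ h : j < i, z j h) ∪ Z) z' →
      Fin' Γ a t ((⋃ j, ⋃ h : j < i, z j h) ∪ Z ∪ z') →
      Fin' Γ a t ((⋃ j, ⋃ h : j < i, z j h) ∪ Z)) ∧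
  ((∀ j, i ≠ Order.succ j) → Z = ∅ →
    ∀ c ∈ insert a (⋃ j, ⋃ h : j < i, z j h), ∀ w, Γ.E c w →
      w ∈ rho Γ a (⋃ j, ⋃ h : j < i, z j h))

/-- The sequence can be continued so that each of finitely many given vertices has all its
out-neighbours roofed, unless no further free extension achieves this. -/
theorem exists_max_done (T : Set V) {p : Set V} (hp : p.Finite) :
    ∃ Z, RFree Γ a T Z ∧ ∀ t ∈ p, ∀ z', RFree Γ a (T ∪ Z) z' →
      Fin' Γ a t (T ∪ Z ∪ z') → Fin' Γ a t (T ∪ Z) := by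
  -- choose `Z` with the largest possible number of finished members of `p`
  let n : Set V → ℕ := fun Z => {t ∈ p | Fin' Γ a t (T ∪ Z)}.ncard
  have hb : ∀ Z, n Z ≤ p.ncard := fun Z => Set.ncard_le_ncard (fun t ht => ht.1) hp
  obtain ⟨k, ⟨Z, hZ, hk⟩, hmax⟩ : ∃ k, (∃ Z, RFree Γ a T Z ∧ n Z = k) ∧
      ∀ k', (∃ Z, RFree Γ a T Z ∧ n Z = k') → k' ≤ k := by
    have hbd : BddAbove {k | ∃ Z, RFree Γ a T Z ∧ n Z = k} :=
      ⟨p.ncard, by rintro _ ⟨Z, -, rfl⟩; exact hb Z⟩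
    have hne : {k | ∃ Z, RFree Γ a T Z ∧ n Z = k}.Nonempty := ⟨_, ∅, .empty, rfl⟩
    exact ⟨sSup {k | ∃ Z, RFree Γ a T Z ∧ n Z = k}, Nat.sSup_mem hne hbd,
      fun k' hk' => le_csSup hbd hk'⟩
  refine ⟨Z, hZ, fun t ht z' hz' hf => ?_⟩
  have hsub : {t ∈ p | Fin' Γ a t (T ∪ Z)} ⊆ {t ∈ p | Fin' Γ a t (T ∪ (Z ∪ z'))} := by
    rintro s ⟨hs, hs'⟩
    refine ⟨hs, fun w hw => ?_⟩
    rw [← Set.union_assoc]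
    exact hz'.mono (hs' w hw)
  have hle : n (Z ∪ z') ≤ n Z := hk ▸ hmax _ ⟨_, hZ.union hz', rfl⟩
  have heq := Set.eq_of_subset_of_ncard_le hsub hle (hp.subset fun t ht => ht.1)
  have : t ∈ {t ∈ p | Fin' Γ a t (T ∪ (Z ∪ z'))} := ⟨ht, by rwa [← Set.union_assoc]⟩
  rw [← heq] at this
  exact this.2

theorem exists_seqSpec (i : Ordinal.{u}) (z : ∀ j, j < i → Set V) :
    ∃ Z, SeqSpec Γ a i z Z := by
  by_cases hi : ∃ j, i = Order.succ j
  · obtain ⟨j, rfl⟩ := hi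
    by_cases hf : (z j (Order.lt_succ j)).Finite
    · obtain ⟨Z, h1, h2⟩ := exists_max_done (Γ := Γ) (a := a)
        (⋃ k, ⋃ h : k < Order.succ j, z k h) hf
      refine ⟨Z, h1, fun k hk hkj _ => ?_, fun h => absurd rfl (h j)⟩
      obtain rfl : j = k := Order.succ_injective hkj
      exact h2
    · refine ⟨∅, .empty, fun k hk hkj hkf => ?_, fun h => absurd rfl (h j)⟩
      obtain rfl : j = k := Order.succ_injective hkj
      exact absurd hkf hf
  · push Not at hi
    set T := ⋃ j, ⋃ h : j < i, z j h with hT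
    by_cases he : ∃ c ∈ insert a T, ∃ w, Γ.E c w ∧ w ∉ rho Γ a T
    · obtain ⟨c, hc, w, hcw, hw⟩ := he
      refine ⟨insert w ∅, RFree.empty.add (c := c) (by rwa [Set.union_empty]) hcw
        (by rwa [Set.union_empty]), fun j hj hij => absurd hij (hi j), fun _ h => ?_⟩
      exact absurd h (Set.insert_nonempty _ _).ne_empty
    · push Not at he
      exact ⟨∅, .empty, fun j hj hij => absurd hij (hi j), fun _ _ => he⟩

theorem exists_freeSeq (Γ : Web V) (a : V) : ∃ z T, FreeSeq Γ a z T := by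
  let z : Ordinal.{u} → Set V :=
    WellFoundedLT.fix fun i z => Classical.choose (exists_seqSpec (Γ := Γ) (a := a) i z)
  have hz : ∀ i, SeqSpec Γ a i (fun j _ => z j) (z i) := by
    intro i
    have := Classical.choose_spec (exists_seqSpec (Γ := Γ) (a := a) i (fun j _ => z j))
    have e : z i = Classical.choose (exists_seqSpec (Γ := Γ) (a := a) i (fun j _ => z j)) :=
      WellFoundedLT.fix_eq _ i
    rwa [← e] at this
  refine ⟨z, fun i => ⋃ j < i, z j, fun i => rfl, fun i => (hz i).1, ?_, fun i => (hz i).2.2⟩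
  intro j t ht z'
  have e : (⋃ k < Order.succ (Order.succ j), z k) = (⋃ k < Order.succ j, z k) ∪ z (Order.succ j) := by
    ext x
    simp only [Order.lt_succ_iff, Set.mem_iUnion, Set.mem_union, exists_prop]
    constructor
    · rintro ⟨k, hk, hx⟩
      rcases hk.lt_or_eq with h | rfl
      · exact Or.inl ⟨k, Order.lt_succ_iff.1 h, hx⟩
      · exact Or.inr hx
    · rintro (⟨k, hk, hx⟩ | hx)
      · exact ⟨k, hk.trans (Order.le_succ _), hx⟩
      · exact ⟨_, le_rfl, hx⟩
  rw [e]
  exact (hz (Order.succ j)).2.1 j (Order.lt_succ j) rfl (hz j).1.finite t ht z'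

namespace FreeSeq

variable {z T : Ordinal.{u} → Set V}

theorem T_mono (h : FreeSeq Γ a z T) {i j : Ordinal.{u}} (hij : i ≤ j) : T i ⊆ T j := by
  rw [h.T_eq, h.T_eq]
  intro x hx
  simp only [Set.mem_iUnion, exists_prop] at hx ⊢
  obtain ⟨k, hk, hx⟩ := hx
  exact ⟨k, hk.trans_le hij, hx⟩

theorem T_succ (h : FreeSeq Γ a z T) (i : Ordinal.{u}) : T (Order.succ i) = T i ∪ z i := by
  rw [h.T_eq, h.T_eq]
  ext x
  simp only [Order.lt_succ_iff, Set.mem_iUnion, Set.mem_union, exists_prop]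
  constructor
  · rintro ⟨k, hk, hx⟩
    rcases hk.lt_or_eq with h | rfl
    · exact Or.inl ⟨k, h, hx⟩
    · exact Or.inr hx
  · rintro (⟨k, hk, hx⟩ | hx)
    · exact ⟨k, hk.le, hx⟩
    · exact ⟨_, le_rfl, hx⟩

theorem mem_T (h : FreeSeq Γ a z T) {i : Ordinal.{u}} {x : V} :
    x ∈ T i ↔ ∃ j < i, x ∈ z j := by
  rw [h.T_eq]
  simp

theorem rho_mono' (h : FreeSeq Γ a z T) {m k : Ordinal.{u}} (hmk : m ≤ k) :
    rho Γ a (T m) ⊆ rho Γ a (T k) := by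
  induction k using WellFoundedLT.induction with
  | ind k ih =>
  have e : T k = T m ∪ T k := (Set.union_eq_self_of_subset_left (h.T_mono hmk)).symm
  have e2 : T k = T m ∪ (T k \ T m) := by simpa using e
  rw [e2]
  apply rho_mono
  rintro y ⟨hy, hym⟩ hyr
  obtain ⟨j, hj, hyj⟩ := h.mem_T.1 hy
  have hmj : m ≤ j := by
    by_contra hc
    exact hym (h.mem_T.2 ⟨j, not_le.1 hc, hyj⟩)
  exact (h.free j).disj y hyj (ih j hj hmj hyr)

/-- The finitary character of free sequences. A finite part of `T l` beyond `T i` extends, together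
with a set `Z` free over `T l`, to a set free over `T i`; and a finite part of `T l` never roofs more
than `T l` does. The first assertion gives a finite safe set around a given vertex of `T l`. -/
theorem claim (h : FreeSeq Γ a z T) (l : Ordinal.{u}) : ∀ i ≤ l, ∀ Z, RFree Γ a (T l) Z →
    (∀ F : Set V, F.Finite → F ⊆ T l \ T i → ∃ F', F'.Finite ∧ F ⊆ F' ∧ F' ⊆ T l \ T i ∧
      RFree Γ a (T i) (F' ∪ Z)) ∧
    (∀ F : Set V, F.Finite → F ⊆ T l \ T i → rho Γ a (T i ∪ (F ∪ Z)) ⊆ rho Γ a (T l ∪ Z)) := by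
  induction l using WellFoundedLT.induction with
  | ind l ih =>
  intro i hil Z hZ
  rcases hil.eq_or_lt with rfl | hlt
  · have e : ∀ F : Set V, F ⊆ T i \ T i → F = ∅ := by simp
    constructor
    · intro F _ hF
      obtain rfl := e F hF
      exact ⟨∅, Set.finite_empty, subset_rfl, hF, by simpa using hZ⟩
    · intro F _ hF
      obtain rfl := e F hF
      simp
  by_cases hs : ∃ k, l = Order.succ k
  · obtain ⟨k, rfl⟩ := hs
    have hik : i ≤ k := Order.lt_succ_iff.1 hlt
    rw [h.T_succ] at hZ
    have hZ' := (h.free k).union hZ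
    obtain ⟨c1, c2⟩ := ih k (Order.lt_succ k) i hik _ hZ'
    have hzi : ∀ x ∈ z k, x ∉ T i := fun x hx hxi =>
      (h.free k).disj x hx (subset_rho (h.T_mono hik hxi))
    have key : ∀ F : Set V, F.Finite → F ⊆ T (Order.succ k) \ T i → ∃ F', F'.Finite ∧
        F ⊆ F' ∪ z k ∧ F' ⊆ T k \ T i ∧ RFree Γ a (T i) (F' ∪ (z k ∪ Z)) := by
      intro F hF hFs
      obtain ⟨F', h1, h2, h3, h4⟩ := c1 (F ∩ T k) (hF.inter_of_left _)
        fun x hx => ⟨hx.2, (hFs hx.1).2⟩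
      refine ⟨F', h1, fun x hx => ?_, h3, h4⟩
      have := (hFs hx).1
      rw [h.T_succ] at this
      rcases this with h' | h'
      · exact Or.inl (h2 ⟨hx, h'⟩)
      · exact Or.inr h'
    constructor
    · intro F hF hFs
      obtain ⟨F', h1, h2, h3, h4⟩ := key F hF hFs
      refine ⟨F' ∪ z k, h1.union (h.free k).finite, h2, ?_, by rwa [Set.union_assoc]⟩
      rw [h.T_succ]
      rintro x (hx | hx)
      · exact ⟨Or.inl (h3 hx).1, (h3 hx).2⟩
      · exact ⟨Or.inr hx, hzi x hx⟩
    · intro F hF hFs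
      obtain ⟨F', h1, h2, h3, h4⟩ := key F hF hFs
      have := c2 F' h1 h3
      rw [h.T_succ, Set.union_assoc]
      refine Set.Subset.trans (h4.roof_subset ?_) this
      rw [← Set.union_assoc]
      exact Set.union_subset_union_left _ h2
  push Not at hs
  have hlim : ∀ j < l, Order.succ j < l := fun j hj =>
    lt_of_le_of_ne (Order.succ_le_of_lt hj) fun h => hs j h.symm
  -- the second assertion follows from the first one, used for all `i`
  have c2 : ∀ Z, RFree Γ a (T l) Z →
      (∀ i < l, ∀ F : Set V, F.Finite → F ⊆ T l \ T i → ∃ F', F'.Finite ∧ F ⊆ F' ∧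
        F' ⊆ T l \ T i ∧ RFree Γ a (T i) (F' ∪ Z)) →
      ∀ i < l, ∀ F : Set V, F.Finite → F ⊆ T l \ T i →
        rho Γ a (T i ∪ (F ∪ Z)) ⊆ rho Γ a (T l ∪ Z) := by
    intro Z hZ c1 i hil F hF hFs
    have hsub : T i ∪ (F ∪ Z) ⊆ T l ∪ Z := by
      rintro x (hx | hx | hx)
      · exact Or.inl (h.T_mono hil.le hx)
      · exact Or.inl (hFs hx).1
      · exact Or.inr hx
    refine IsWave.append (Web.max_wave _) (Web.max_wave _) hsub (Web.subset_roof_del _ _)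
      (Web.subset_roof_del _ _) fun u v huv hv hu => hv ?_
    have hW := Web.max_wave ((Γ.del {a}).del (T i ∪ (F ∪ Z)))
    have huE := hW.le _ _ huv
    have hun := huE.2.1
    simp only [Set.mem_union, not_or] at hun
    obtain ⟨j, hj, huj⟩ := h.mem_T.1 (hu.resolve_right hun.2.2)
    have hij : i ≤ j := by
      by_contra hc
      exact hun.1 (h.mem_T.2 ⟨j, not_le.1 hc, huj⟩)
    have hml := hlim _ (hlim j hj)
    set m := Order.succ (Order.succ j) with hm
    have him : i ≤ m := hij.trans ((Order.le_succ _).trans (Order.le_succ _))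
    obtain ⟨F', f1, f2, f3, f4⟩ := c1 m hml (F \ T m) hF.sdiff fun x hx => ⟨(hFs hx.1).1, hx.2⟩
    obtain ⟨d1, d2⟩ := ih m hml i him _ f4
    obtain ⟨F'', g1, g2, g3, g4⟩ := d1 (F ∩ T m) (hF.inter_of_left _)
      fun x hx => ⟨hx.2, (hFs hx.1).2⟩
    have hsub2 : F ∪ Z ⊆ F'' ∪ (F' ∪ Z) := by
      rintro x (hx | hx)
      · by_cases hxm : x ∈ T m
        · exact Or.inl (g2 ⟨hx, hxm⟩)
        · exact Or.inr (Or.inl (f2 ⟨hx, hxm⟩))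
      · exact Or.inr (Or.inr hx)
    have hr : rho Γ a (T i ∪ (F ∪ Z)) ⊆ rho Γ a (T m ∪ (F' ∪ Z)) :=
      (g4.roof_subset hsub2).trans (d2 F'' g1 g3)
    have hfin : Fin' Γ a u (T m ∪ (F' ∪ Z)) := by
      intro w hw
      apply hr
      by_cases hwX : w ∈ T i ∪ (F ∪ Z)
      · exact subset_rho hwX
      by_cases hwa : w = a
      · rw [hwa]; exact mem_rho_self
      · exact hW.sep u (hW.inQ _ _ huv) (hW.halt _ _ huv) w ⟨⟨hw, huE.1.2.1, hwa⟩, huE.2.1, hwX⟩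
    have := h.done j u huj _ f4 hfin
    exact hZ.mono (h.rho_mono' hml.le (this v huE.1.1))
  have c1 : ∀ i < l, ∀ F : Set V, F.Finite → F ⊆ T l \ T i → ∃ F', F'.Finite ∧ F ⊆ F' ∧
      F' ⊆ T l \ T i ∧ RFree Γ a (T i) (F' ∪ Z) := by
    clear hlt hil i
    induction hZ with
    | empty =>
      intro i hi F hF hFs
      obtain ⟨m, hml, him, hFm⟩ : ∃ m < l, i ≤ m ∧ F ⊆ T m := by
        induction F, hF using Set.Finite.induction_on with
        | empty => exact ⟨i, hi, le_rfl, by simp⟩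
        | @insert x F _ _ ihF =>
          obtain ⟨m, hm, him, hFm⟩ := ihF fun y hy => hFs (Or.inr hy)
          obtain ⟨j, hj, hxj⟩ := h.mem_T.1 (hFs (Or.inl rfl)).1
          refine ⟨max m (Order.succ j), max_lt hm (hlim j hj), him.trans (le_max_left _ _), ?_⟩
          rintro y (rfl | hy)
          · exact h.mem_T.2 ⟨j, (Order.lt_succ j).trans_le (le_max_right _ _), hxj⟩
          · exact h.T_mono (le_max_left _ _) (hFm hy)
      obtain ⟨F', h1, h2, h3, h4⟩ := (ih m hml i him ∅ .empty).1 F hF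
        fun x hx => ⟨hFm hx, (hFs hx).2⟩
      exact ⟨F', h1, h2, fun x hx => ⟨h.T_mono hml.le (h3 hx).1, (h3 hx).2⟩, h4⟩
    | @add q c u hq hu hE hc ihq =>
      intro i hi F hF hFs
      obtain ⟨F', h1, h2, h3, h4⟩ := ihq i hi (F ∪ ({c} ∩ (T l \ T i)))
        (hF.union ((Set.finite_singleton c).inter_of_left _))
        (Set.union_subset hFs Set.inter_subset_right)
      refine ⟨F', h1, fun x hx => h2 (Or.inl hx), h3, ?_⟩
      rw [Set.union_insert]
      refine h4.add (c := c) (fun hur => hu (c2 q hq ihq i hi F' h1 h3 hur)) hE ?_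
      rcases hc with hc | hc | hc
      · exact Or.inl hc
      · by_cases hci : c ∈ T i
        · exact Or.inr (Or.inl hci)
        · exact Or.inr (Or.inr (Or.inl (h2 (Or.inr ⟨rfl, hc, hci⟩))))
      · exact Or.inr (Or.inr (Or.inr hc))
  exact ⟨c1 i hlt, c2 Z hZ c1 i hlt⟩

/-- A free sequence gets stuck at some limit stage, since there are not enough vertices to continue
through all the ordinals: then every edge from `a` or `T l` ends under the roof. -/
theorem exists_halt (h : FreeSeq Γ a z T) :
    ∃ l, ∀ c ∈ insert a (T l), ∀ w, Γ.E c w → w ∈ rho Γ a (T l) := by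
  by_contra hc
  push Not at hc
  have hne : ∀ i : Ordinal.{u}, (z (Ordinal.omega0 * i)).Nonempty := by
    intro i
    rw [Set.nonempty_iff_ne_empty]
    intro he
    obtain ⟨c, hc1, w, hw, hw'⟩ := hc (Ordinal.omega0 * i)
    refine hw' (h.exit _ (fun j hj => ?_) he c hc1 w hw)
    rcases eq_or_ne i 0 with rfl | hi
    · rw [mul_zero] at hj
      exact absurd hj.symm (Order.succ_ne_bot j)
    · have : Order.IsSuccLimit (Ordinal.omega0 * i) :=
        Ordinal.isSuccLimit_mul_left Ordinal.isSuccLimit_omega0 (pos_iff_ne_zero.2 hi)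
      exact (Order.not_isSuccLimit_succ j) (hj ▸ this)
  choose f hf using hne
  refine not_injective_of_ordinal f fun i j hij => ?_
  have key : ∀ i j, i < j → f i ≠ f j := by
    intro i j hlt he
    have : f i ∈ T (Ordinal.omega0 * j) :=
      h.mem_T.2 ⟨_, (mul_lt_mul_iff_right₀ Ordinal.omega0_pos).2 hlt, hf i⟩
    exact (h.free _).disj _ (hf j) (subset_rho (he ▸ this))
  rcases lt_trichotomy i j with hl | hl | hl
  · exact absurd hij (key _ _ hl)
  · exact hl
  · exact absurd hij.symm (key _ _ hl)

end FreeSeq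

/-- A path in a digraph, as a biunique relation. -/
theorem exists_biUnique_path {E : V → V → Prop} {x y : V} (hx : ∀ u, ¬ E u x)
    (h : ReflTransGen E x y) :
    ∃ f : V → V → Prop, BiUnique f ∧ (∀ u v, f u v → E u v) ∧ ReflTransGen f x y := by
  obtain ⟨f, hf, -, -⟩ := aug (E := E) (F := fun _ _ => False) (A := {x}) (T := ∅) (a0 := x)
    (y0 := x) (y := y) (by rintro u v huv rfl; exact hx _ huv)
    ⟨⟨fun h => h.elim, fun h => h.elim⟩, fun _ _ h => h.elim, by simp, by simp⟩
    (fun _ _ h => h.elim) rfl (by simp) .refl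
    (ReflTransGen.mono (fun u v h => .free h fun p => id) _ _ h)
  obtain ⟨a, rfl, ha⟩ := hf.reach y (Or.inl rfl)
  exact ⟨f, hf.bi, hf.le, ha⟩

/-- In an unhindered web each source starts a path to a sink whose removal leaves the web
unhindered. -/
theorem single_safe {Γ : Web V} (hΓ : Unhindered Γ) {a : V} (ha : a ∈ Γ.A) :
    ∃ P f, GoodPath Γ a P f := by
  have hu0 : Unhindered (Γ.del {a}) := unhindered_del_sources hΓ (by simpa using ha)
  by_cases haB : a ∈ Γ.B
  · refine ⟨{a}, fun _ _ => False, Set.finite_singleton a, rfl, fun x hx _ => hx,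
      ⟨fun h => h.elim, fun h => h.elim⟩, fun _ _ h => h.elim, ⟨a, haB, rfl, .refl⟩, hu0⟩
  obtain ⟨z, T, h⟩ := exists_freeSeq Γ a
  obtain ⟨l, hl⟩ := h.exists_halt
  by_cases hB : ∃ t ∈ T l, t ∈ Γ.B
  · obtain ⟨t, ht, htB⟩ := hB
    have hT0 : T 0 = ∅ := by
      rw [h.T_eq]
      simp
    obtain ⟨F, hF, hFt, -, hfree⟩ := (h.claim l 0 zero_le ∅ .empty).1 {t}
      (Set.finite_singleton t) (by simpa [hT0] using ht)
    rw [hT0, Set.union_empty] at hfree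
    have htF : t ∈ F := hFt rfl
    have hr := hfree.reach htF
    obtain ⟨f, f1, f2, f3⟩ := exists_biUnique_path (fun u hu => Γ.hA _ _ hu.1 ha) hr
    refine ⟨insert a F, f, hF.insert a, Or.inl rfl, ?_, f1, f2, ⟨t, htB, Or.inr htF, f3⟩, ?_⟩
    · rintro x (rfl | hx) hxA
      · rfl
      · exact absurd (src_mem_rho hxA) (hfree.disj x hx)
    · have := hfree.unhindered_empty hu0
      rwa [Web.del_del, Set.singleton_union] at this
  · exfalso
    push Not at hB
    have hW := Web.max_wave ((Γ.del {a}).del (T l))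
    have hin : ∀ x, x ∈ insert a (T l) ↔ x = a ∨ x ∈ T l := fun x => Iff.rfl
    have hW' : IsWave Γ (rho Γ a (T l)) ((Γ.del {a}).del (T l)).ess
        ((Γ.del {a}).del (T l)).flow := by
      refine ⟨⟨fun x hx => src_mem_rho hx, hW.subS, ?_, ?_, hW.bi,
        fun u v huv => (hW.le u v huv).1.1, hW.inQ, hW.halt⟩, ?_⟩
      · intro x hx hs hxB
        by_cases hxa : x = a
        · exact haB (hxa ▸ hxB)
        · exact hW.sepB x hx hs ⟨⟨hxB, hxa⟩, fun hxT => hB x hxT hxB⟩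
      · intro x hx hs y hy
        by_cases hxT : x ∈ insert a (T l)
        · exact hl x hxT y hy
        by_cases hyT : y ∈ insert a (T l)
        · rcases hyT with rfl | hyT
          · exact mem_rho_self
          · exact subset_rho hyT
        · rw [hin, not_or] at hxT hyT
          exact hW.sep x hx hs y ⟨⟨hy, hxT.1, hyT.1⟩, hxT.2, hyT.2⟩
      · intro s hs
        obtain ⟨b, hb, h'⟩ := hW.reach s hs
        exact ⟨b, hb.1.1, h'⟩
    obtain ⟨s, hs, has⟩ := hΓ _ _ _ hW' a ha
    rcases ReflTransGen.cases_head has with rfl | ⟨d, hd, -⟩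
    · obtain ⟨b, hb, h'⟩ := hW.reach a hs
      rcases ReflTransGen.cases_tail h' with rfl | ⟨d, _, hd⟩
      · exact hb.1.2 rfl
      · exact (hW.le _ _ hd).1.2.2 rfl
    · exact (hW.le _ _ hd).1.2.1 rfl

end SingleSafe

/-! ### Well-orders of regular length -/

section Orders

universe u

open Cardinal Set

/-- `W` is a well-order of regular uncountable length `κ`. -/
structure RegOrder (κ : Cardinal.{u}) (W : Type u) [LinearOrder W] : Prop where
  unc : ℵ₀ < κ
  reg : κ.IsRegular
  card : #W = κ
  seg : ∀ c : W, #(Iio c) < κ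
  bdd : ∀ {ι : Type u}, #ι < κ → ∀ f : ι → W, ∃ b, ∀ i, f i < b

theorem regOrder_ord {κ : Cardinal.{u}} (hκ : κ.IsRegular) (h : ℵ₀ < κ) :
    RegOrder κ κ.ord.ToType where
  unc := h
  reg := hκ
  card := mk_ord_toType κ
  seg c := by simpa using mk_Iio_lt c
  bdd := by
    intro ι hι f
    have h1 : ¬ IsCofinal (range f) := by
      intro h
      have h2 := Order.cof_le h
      rw [Ordinal.cof_toType, hκ.cof_ord] at h2
      exact absurd (h2.trans mk_range_le) (not_le.2 hι)
    rw [IsCofinal] at h1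
    push Not at h1
    obtain ⟨b, hb⟩ := h1
    exact ⟨b, fun i => hb _ (mem_range_self i)⟩

variable {κ : Cardinal.{u}} {W : Type u} [LinearOrder W] [WellFoundedLT W]

theorem exists_least (P : W → Prop) (h : ∃ c, P c) : ∃ c, P c ∧ ∀ d < c, ¬ P d := by
  obtain ⟨c, hc, hmin⟩ := (wellFounded_lt (α := W)).has_min {c | P c} h
  exact ⟨c, hc, fun d hd hP => hmin d hP hd⟩

/-- `c` is not the least element, and the elements below `c` are closed under `f`. -/
def ClosedPt (f : W → W) (c : W) : Prop := (∃ b, b < c) ∧ ∀ γ < c, f γ < c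

/-- `D` contains all points closed under some function. -/
def Large (D : Set W) : Prop := ∃ f : W → W, ∀ c, ClosedPt f c → c ∈ D

/-- `D` meets the set of closed points of every function, that is, `D` is stationary. -/
def Stat (D : Set W) : Prop := ∀ f : W → W, ∃ c ∈ D, ClosedPt f c

theorem Stat.mono {D D' : Set W} (h : Stat D) (hD : D ⊆ D') : Stat D' := fun f =>
  let ⟨c, hc, h'⟩ := h f
  ⟨c, hD hc, h'⟩

theorem Large.mono {D D' : Set W} (h : Large D) (hD : D ⊆ D') : Large D' :=
  let ⟨f, hf⟩ := h
  ⟨f, fun c hc => hD (hf c hc)⟩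

theorem not_stat {D : Set W} (h : ¬ Stat D) : Large Dᶜ := by
  unfold Stat at h
  push Not at h
  obtain ⟨f, hf⟩ := h
  exact ⟨f, fun c hc hD => hf c hD hc⟩

theorem Large.inter {D D' : Set W} (h : Large D) (h' : Large D') : Large (D ∩ D') := by
  obtain ⟨f, hf⟩ := h
  obtain ⟨g, hg⟩ := h'
  refine ⟨fun γ => max (f γ) (g γ), fun c hc => ⟨hf c ⟨hc.1, fun γ h => ?_⟩,
    hg c ⟨hc.1, fun γ h => ?_⟩⟩⟩
  · exact (max_lt_iff.1 (hc.2 γ h)).1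
  · exact (max_lt_iff.1 (hc.2 γ h)).2

theorem Stat.inter {D D' : Set W} (h : Stat D) (h' : Large D') : Stat (D ∩ D') := by
  obtain ⟨g, hg⟩ := h'
  intro f
  obtain ⟨c, hc, hc1, hc2⟩ := h (fun γ => max (f γ) (g γ))
  exact ⟨c, ⟨hc, hg c ⟨hc1, fun γ h => (max_lt_iff.1 (hc2 γ h)).2⟩⟩, hc1,
    fun γ h => (max_lt_iff.1 (hc2 γ h)).1⟩

theorem large_gt (a : W) : Large {c | a < c} :=
  ⟨fun _ => a, fun _ ⟨⟨b, hb⟩, h⟩ => h b hb⟩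

theorem Stat.exists_gt {D : Set W} (h : Stat D) (a : W) : ∃ c ∈ D, a < c := by
  obtain ⟨c, hc, _⟩ := h.inter (large_gt a) id
  exact ⟨c, hc⟩

theorem RegOrder.card_Iic (hW : RegOrder κ W) (a : W) : #(Iic a) < κ := by
  have h : Iic a ⊆ insert a (Iio a) := by
    intro x hx
    rcases eq_or_lt_of_le (show x ≤ a from hx) with h | h
    · exact Or.inl h
    · exact Or.inr h
  refine (mk_le_mk_of_subset h).trans_lt ((mk_insert_le).trans_lt ?_)
  exact add_lt_of_lt hW.reg.aleph0_le (hW.seg a) (one_lt_aleph0.trans hW.unc)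

theorem RegOrder.card_iUnion (hW : RegOrder κ W) {V ι : Type u} (hι : #ι < κ) {t : ι → Set V}
    (ht : ∀ i, #(t i) < κ) : #(⋃ i, t i) < κ :=
  (card_iUnion_lt_iff_forall_of_isRegular hW.reg hι).2 ht

theorem RegOrder.card_biUnion (hW : RegOrder κ W) {V ι : Type u} {s : Set ι} (hs : #s < κ)
    {t : ι → Set V} (ht : ∀ i ∈ s, #(t i) < κ) : #(⋃ i ∈ s, t i) < κ :=
  (card_biUnion_lt_iff_forall_of_isRegular hW.reg hs).2 ht

theorem RegOrder.card_union (hW : RegOrder κ W) {V : Type u} {s t : Set V} (hs : #s < κ)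
    (ht : #t < κ) : #(s ∪ t : Set V) < κ :=
  (mk_union_le s t).trans_lt (add_lt_of_lt hW.reg.aleph0_le hs ht)

theorem RegOrder.card_countable (hW : RegOrder κ W) {V : Type u} {s : Set V} (hs : s.Countable) :
    #s < κ :=
  (le_aleph0_iff_set_countable.2 hs).trans_lt hW.unc

theorem RegOrder.exists_closedPt (hW : RegOrder κ W) (f : W → W) (a : W) :
    ∃ c, a < c ∧ ClosedPt f c := by
  have h1 : ∀ x : W, ∃ y, ∀ δ ≤ x, f δ < y ∧ δ < y := by
    intro x
    obtain ⟨b, hb⟩ := hW.bdd (hW.card_Iic x) fun δ => max (f δ.1) δ.1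
    exact ⟨b, fun δ hδ => max_lt_iff.1 (hb ⟨δ, hδ⟩)⟩
  choose g hg using h1
  let s : ℕ → W := fun n => g^[n] (g a)
  have hs : ∀ n, s (n + 1) = g (s n) := fun n => Function.iterate_succ_apply' g n _
  obtain ⟨b, hb⟩ := hW.bdd (ι := ULift ℕ) (by simpa using hW.unc) fun n => s n.down
  obtain ⟨c, hc, hmin⟩ := exists_least (fun c => ∀ n, s n < c) ⟨b, fun n => hb ⟨n⟩⟩
  refine ⟨c, ((hg a a le_rfl).2.trans (hc 0)), ⟨_, hc 0⟩, fun γ hγ => ?_⟩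
  have : ∃ n, γ ≤ s n := by
    by_contra hcon
    push Not at hcon
    exact hmin γ hγ hcon
  obtain ⟨n, hn⟩ := this
  have := (hg (s n) γ hn).1
  rw [← hs] at this
  exact this.trans (hc _)

theorem RegOrder.stat_of_large (hW : RegOrder κ W) {D : Set W} (h : Large D) : Stat D := by
  obtain ⟨g, hg⟩ := h
  intro f
  obtain ⟨b, -⟩ := hW.bdd (ι := PEmpty) (by simpa using hW.reg.pos) (fun x => x.elim)
  obtain ⟨c, -, hc1, hc2⟩ := hW.exists_closedPt (fun γ => max (f γ) (g γ)) b
  exact ⟨c, hg c ⟨hc1, fun γ h => (max_lt_iff.1 (hc2 γ h)).2⟩, hc1,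
    fun γ h => (max_lt_iff.1 (hc2 γ h)).1⟩

/-- Diagonal intersection: for `c` in a large set, no index available below `c` has `c` in its
set, unless that set is stationary. -/
theorem RegOrder.diag (hW : RegOrder κ W) {ι : Type u} {J : W → Set ι}
    (hJ : ∀ α β, α ≤ β → J α ⊆ J β) (hc : ∀ α, #(J α) < κ) (D : ι → Set W) :
    Large {c | ∀ γ < c, ∀ x ∈ J γ, c ∈ D x → Stat (D x)} := by
  have h1 : ∀ x, ∃ f : W → W, ¬ Stat (D x) → ∀ c, ClosedPt f c → c ∉ D x := by
    intro x
    by_cases h : Stat (D x)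
    · exact ⟨id, fun h' => absurd h h'⟩
    · obtain ⟨f, hf⟩ := not_stat h
      exact ⟨f, fun _ => hf⟩
  choose f hf using h1
  have h2 : ∀ γ : W, ∃ b, ∀ x ∈ J γ, ∀ δ ≤ γ, f x δ < b := by
    intro γ
    have : #(J γ × Iic γ) < κ := by
      rw [mk_prod, lift_id, lift_id]
      exact mul_lt_of_lt hW.reg.aleph0_le (hc γ) (hW.card_Iic γ)
    obtain ⟨b, hb⟩ := hW.bdd this fun p => f p.1.1 p.2.1
    exact ⟨b, fun x hx δ hδ => hb (⟨x, hx⟩, ⟨δ, hδ⟩)⟩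
  choose g hg using h2
  refine ⟨g, fun c hcl γ hγ x hx hcD => ?_⟩
  by_contra hns
  refine hf x hns c ⟨hcl.1, fun δ hδ => ?_⟩ hcD
  have hm : max γ δ < c := max_lt hγ hδ
  exact (hg (max γ δ) x (hJ _ _ (le_max_left _ _) hx) δ (le_max_right _ _)).trans (hcl.2 _ hm)

/-- At most `κ` many unbounded sets have an injective choice function. -/
theorem RegOrder.exists_injective (hW : RegOrder κ W) {ι : Type u} (hι : #ι ≤ κ)
    {D : ι → Set W} (hD : ∀ i a, ∃ c ∈ D i, a < c) :
    ∃ b : ι → W, Function.Injective b ∧ ∀ i, b i ∈ D i := by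
  rw [← hW.card] at hι
  obtain ⟨e⟩ := hι
  choose p hpD hp using hD
  have h1 : ∀ (x : W) (g : ∀ y, y < x → W), ∃ s, ∀ y h, g y h < s := by
    intro x g
    obtain ⟨s, hs⟩ := hW.bdd (hW.seg x) fun y => g y.1 y.2
    exact ⟨s, fun y h => hs ⟨y, h⟩⟩
  choose s hs using h1
  classical
  let b : W → W := WellFoundedLT.fix fun x g =>
    if h : ∃ i, e i = x then p h.choose (s x g) else x
  have hb : ∀ i, b (e i) = p i (s (e i) fun y _ => b y) := by
    intro i
    have h : ∃ j, e j = e i := ⟨i, rfl⟩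
    have h' : h.choose = i := e.injective h.choose_spec
    have h3 : b (e i) = if h : ∃ j, e j = e i then p h.choose (s (e i) fun y _ => b y)
      else e i := WellFoundedLT.fix_eq _ _
    rw [h3, dif_pos h, h']
  have hlt : ∀ i j, e j < e i → b (e j) < b (e i) := by
    intro i j hij
    rw [hb i]
    exact (hs (e i) (fun y _ => b y) (e j) hij).trans (hp _ _)
  refine ⟨fun i => b (e i), fun i j hij => ?_, fun i => ?_⟩
  · rcases lt_trichotomy (e i) (e j) with h | h | h
    · exact absurd hij (hlt _ _ h).ne
    · exact e.injective h
    · exact absurd hij (hlt _ _ h).ne'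
  · simp only [hb i]
    exact hpD _ _

/-- The members of a large set (together with the least element) cut `W` into intervals: every
element has a greatest closed point below it. -/
theorem exists_greatest_closedPt {f : W → W} (e : W) :
    ∃ c ≤ e, (ClosedPt f c ∨ ∀ b, c ≤ b) ∧ ∀ d ≤ e, (ClosedPt f d ∨ ∀ b, d ≤ b) → d ≤ c := by
  obtain ⟨c, hc, hmin⟩ := exists_least
    (fun c => ∀ d ≤ e, (ClosedPt f d ∨ ∀ b, d ≤ b) → d ≤ c) ⟨e, fun d hd _ => hd⟩
  have hce : c ≤ e := by
    by_contra h
    exact hmin e (not_le.1 h) fun d hd _ => hd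
  refine ⟨c, hce, ?_, hc⟩
  by_cases hbot : ∀ b, c ≤ b
  · exact Or.inr hbot
  refine Or.inl ?_
  push Not at hbot
  refine ⟨hbot, fun γ hγ => ?_⟩
  have h1 := hmin γ hγ
  push Not at h1
  obtain ⟨d, hde, hd, hγd⟩ := h1
  rcases hd with hd | hd
  · exact (hd.2 γ hγd).trans_le (hc d hde (Or.inl hd))
  · exact absurd (hd γ) (not_le.2 hγd)

end Orders

/-! ### Ladders -/

section Ladder

universe u
variable {V : Type u}

open Relation Cardinal Set

/-- Edges leading to a vertex under the roof of `Γ - X` outside `X`. -/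
def wE (Γ : Web V) (X : Set V) (u w : V) : Prop := Γ.E u w ∧ w ∈ (Γ.del X).roof ∧ w ∉ X

/-- The flow `g` outside `X`. -/
def wF (X : Set V) (g : V → V → Prop) (u v : V) : Prop := g u v ∧ u ∉ X

/-- Some alternating walk outside `X`, under the roof of `Γ - X`, leads from `y0` to a vertex
which has an edge to the vertex `x` of `X`. -/
def Hit (Γ : Web V) (X : Set V) (g : V → V → Prop) (y0 x : V) : Prop :=
  ∃ y, ReflTransGen (Step (wE Γ X) (wF X g)) y0 y ∧ Γ.E y x ∧ x ∈ X

/-- The source `h` of `Γ - X` is not led to the ends of the maximal wave by `g`. -/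
def Unc (Γ : Web V) (X : Set V) (g : V → V → Prop) (h : V) : Prop :=
  h ∈ Γ.A ∧ h ∉ X ∧ ∀ s ∈ (Γ.del X).ess, ¬ ReflTransGen (wF X g) h s

/-- The quotient of `Γ - X` by its maximal wave. -/
def quoW (Γ : Web V) (X : Set V) : Web V := (Γ.del X).quo (Γ.del X).roof (Γ.del X).ess

/-- The quotient of `Γ - X` by its maximal wave, with `u` as an additional source. -/
def addSrc (Γ : Web V) (X : Set V) (u : V) : Web V where
  E x y := ((quoW Γ X).E x y ∨ (x = u ∧ Γ.E x y ∧ y ∉ (Γ.del X).roof)) ∧ y ≠ u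
  A := insert u (Γ.del X).ess
  B := (quoW Γ X).B
  hA := by
    rintro x y ⟨h, h'⟩ (h'' | h'')
    · exact h' h''
    · rcases h with h | ⟨-, -, h⟩
      · exact h.2.2.2 h''
      · exact h h''.1

theorem quoW_unhindered (Γ : Web V) (X : Set V) : Unhindered (quoW Γ X) :=
  (loose_quo_max _).unhindered

theorem not_ess_of_mem {Γ : Web V} {X : Set V} {u : V} (hu : u ∈ X) : u ∉ (Γ.del X).ess :=
  fun h => Γ.ess_del X h hu

theorem addSrc_del {Γ : Web V} {X P : Set V} {u : V} (hu : u ∈ X) (hP : u ∈ P) :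
    (addSrc Γ X u).del P = (quoW Γ X).del P := by
  have hQ : u ∈ (Γ.del X).roof := Γ.subset_roof_del X hu
  apply Web.ext'
  · intro x y
    constructor
    · rintro ⟨⟨h | h, h'⟩, hx, hy⟩
      · exact ⟨h, hx, hy⟩
      · exact absurd (h.1 ▸ hP) hx
    · rintro ⟨h, hx, hy⟩
      exact ⟨⟨Or.inl h, fun h' => hy (h' ▸ hP)⟩, hx, hy⟩
  · ext x
    constructor
    · rintro ⟨h | h, hx⟩
      · exact absurd (h ▸ hP) hx
      · exact ⟨h, hx⟩
    · rintro ⟨h, hx⟩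
      exact ⟨Or.inr h, hx⟩
  · rfl

/-- A vertex `u` of `X` with an out-neighbour beyond the roof still is a possible source beyond the
maximal wave of `Γ - X`. -/
theorem addSrc_unhindered {Γ : Web V} {X : Set V} {u x : V} (hu : u ∈ X) (hux : Γ.E u x)
    (hx : x ∉ (Γ.del X).roof) : Unhindered (addSrc Γ X u) := by
  have hd : (addSrc Γ X u).del {u} = quoW Γ X := by
    rw [addSrc_del (P := {u}) hu (Set.mem_singleton u)]
    have hQ : u ∈ (Γ.del X).roof := Γ.subset_roof_del X hu
    apply Web.ext'
    · intro a b
      refine ⟨fun h => h.1, fun h => ⟨h, ?_, ?_⟩⟩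
      · rintro rfl
        exact not_ess_of_mem hu (h.2.1 hQ)
      · rintro rfl
        exact h.2.2.1 hQ
    · ext a
      refine ⟨fun h => h.1, fun h => ⟨h, ?_⟩⟩
      rintro rfl
      exact not_ess_of_mem hu h
    · ext a
      refine ⟨fun h => h.1, fun h => ⟨h, ?_⟩⟩
      rintro rfl
      exact h.2 ⟨hQ, not_ess_of_mem hu⟩
  refine Unhindered.of_del_source (u := u) (x := x) ?_ ⟨Or.inr ⟨rfl, hux, hx⟩, ?_⟩ ?_
  · rw [hd]
    exact quoW_unhindered Γ X
  · rintro rfl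
    exact hx (Γ.subset_roof_del X hu)
  · rw [hd]
    exact fun h => hx (quo_max_roof _ h)

theorem rtg_finite {R : V → V → Prop} {a b : V} (h : ReflTransGen R a b) :
    ∃ s : Set V, s.Finite ∧ a ∈ s ∧ b ∈ s ∧ ReflTransGen (fun u v => R u v ∧ v ∈ s) a b := by
  induction h with
  | refl => exact ⟨{a}, finite_singleton a, rfl, rfl, .refl⟩
  | @tail b c hb hc ih =>
    obtain ⟨s, h1, h2, h3, h4⟩ := ih
    refine ⟨insert c s, h1.insert c, Or.inr h2, Or.inl rfl, ?_⟩
    exact (ReflTransGen.mono (fun u v h => ⟨h.1, Or.inr h.2⟩) _ _ h4).tail ⟨hc, Or.inl rfl⟩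

variable {κ : Cardinal.{u}} {W : Type u} [LinearOrder W] [WellFoundedLT W]

/-- Closing a small set under a binary operation with countable values. -/
theorem RegOrder.exists_closure (hW : RegOrder κ W) {X : Set V} (hX : #X < κ)
    {op : V → V → Set V} (hop : ∀ y x, (op y x).Countable) :
    ∃ m : Set V, X ⊆ m ∧ #m < κ ∧ ∀ y ∈ m, ∀ x ∈ m, op y x ⊆ m := by
  let F : Set V → Set V := fun s => s ∪ ⋃ y ∈ s, ⋃ x ∈ s, op y x
  have hF : ∀ s : Set V, #s < κ → #(F s) < κ := fun s hs => hW.card_union hs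
    (hW.card_biUnion hs fun y _ => hW.card_biUnion hs fun x _ => hW.card_countable (hop y x))
  let t : ℕ → Set V := fun n => F^[n] X
  have ht : ∀ n, t (n + 1) = F (t n) := fun n => Function.iterate_succ_apply' F n _
  have hmono : Monotone t := monotone_nat_of_le_succ fun n => by
    rw [ht]
    exact subset_union_left
  refine ⟨⋃ n : ULift.{u} ℕ, t n.down, subset_iUnion_of_subset ⟨0⟩ subset_rfl,
    hW.card_iUnion (by simpa using hW.unc) ?_, ?_⟩
  · rintro ⟨n⟩
    induction n with
    | zero => exact hX
    | succ n ih =>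
      simp only [ht]
      exact hF _ ih
  · intro y hy x hx v hv
    obtain ⟨⟨n⟩, hn⟩ := mem_iUnion.1 hy
    obtain ⟨⟨k⟩, hk⟩ := mem_iUnion.1 hx
    refine mem_iUnion.2 ⟨⟨max n k + 1⟩, ?_⟩
    simp only [ht]
    refine Or.inr ?_
    simp only [mem_iUnion]
    exact ⟨y, hmono (le_max_left _ _) hn, x, hmono (le_max_right _ _) hk, hv⟩

/-- The closure properties of the step from `X` to `m` in a ladder with flow `g`. -/
structure Rung (Γ : Web V) (X : Set V) (g : V → V → Prop) (m : Set V) : Prop where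
  sub : X ⊆ m
  clo : ∀ u v, g u v → (u ∈ m ↔ v ∈ m)
  hit : ∀ y0 ∈ m, ∀ x, Hit Γ X g y0 x → ∃ y ∈ m,
    ReflTransGen (fun a b => Step (wE Γ X) (wF X g) a b ∧ b ∈ m) y0 y ∧ Γ.E y x
  unc : (∃ h, Unc Γ X g h) → ∃ h ∈ m, Unc Γ X g h
  gp : ∀ y ∈ m, y ∈ (Γ.del X).ess → ∃ P ⊆ m, ∃ f, GoodPath (quoW Γ X) y P f
  gpw : ∀ y ∈ X, (∃ x, Γ.E y x ∧ x ∉ (Γ.del X).roof) →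
    ∃ P ⊆ m, ∃ f, GoodPath (addSrc Γ X y) y P f

/-- Every small set `X` has a small extension with the closure properties of a rung: each of them
asks for finitely many vertices per pair of vertices, or is closure under `g`. -/
theorem RegOrder.exists_rung (hW : RegOrder κ W) (Γ : Web V) {X Z : Set V} (hX : #X < κ)
    (hZ : #Z < κ) {g : V → V → Prop} (hg : BiUnique g) :
    ∃ m, Rung Γ X g m ∧ Z ⊆ m ∧ #m < κ := by
  classical
  have h1 : ∀ y x, ∃ s : Set V, s.Finite ∧ (Hit Γ X g y x → ∃ y' ∈ s,
      ReflTransGen (fun a b => Step (wE Γ X) (wF X g) a b ∧ b ∈ s) y y' ∧ Γ.E y' x) := by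
    intro y x
    by_cases h : Hit Γ X g y x
    · obtain ⟨y', hy, h2, h3⟩ := h
      obtain ⟨s, hs, -, hb, h4⟩ := rtg_finite hy
      exact ⟨s, hs, fun _ => ⟨y', hb, h4, h2⟩⟩
    · exact ⟨∅, finite_empty, fun h' => absurd h' h⟩
  have h2 : ∀ y, ∃ s : Set V, s.Finite ∧ (y ∈ (Γ.del X).ess →
      ∃ f, GoodPath (quoW Γ X) y s f) := by
    intro y
    by_cases h : y ∈ (Γ.del X).ess
    · obtain ⟨P, f, hP⟩ := single_safe (quoW_unhindered Γ X) h
      exact ⟨P, hP.fin, fun _ => ⟨f, hP⟩⟩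
    · exact ⟨∅, finite_empty, fun h' => absurd h' h⟩
  have h3 : ∀ y, ∃ s : Set V, s.Finite ∧ (y ∈ X → (∃ x, Γ.E y x ∧ x ∉ (Γ.del X).roof) →
      ∃ f, GoodPath (addSrc Γ X y) y s f) := by
    intro y
    by_cases h : y ∈ X ∧ ∃ x, Γ.E y x ∧ x ∉ (Γ.del X).roof
    · obtain ⟨hy, x, hx, hx'⟩ := h
      obtain ⟨P, f, hP⟩ := single_safe (addSrc_unhindered hy hx hx') (Or.inl rfl)
      exact ⟨P, hP.fin, fun _ _ => ⟨f, hP⟩⟩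
    · exact ⟨∅, finite_empty, fun h' h'' => absurd ⟨h', h''⟩ h⟩
  choose s1 hs1 hs1' using h1
  choose s2 hs2 hs2' using h2
  choose s3 hs3 hs3' using h3
  have h4 : ∃ H : Set V, H.Finite ∧ ((∃ h, Unc Γ X g h) → ∃ h ∈ H, Unc Γ X g h) := by
    by_cases h : ∃ h, Unc Γ X g h
    · obtain ⟨h, hh⟩ := h
      exact ⟨{h}, finite_singleton h, fun _ => ⟨h, rfl, hh⟩⟩
    · exact ⟨∅, finite_empty, fun h' => absurd h' h⟩
  obtain ⟨H, hH, hH'⟩ := h4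
  obtain ⟨m, hm1, hm2, hm3⟩ := hW.exists_closure (X := X ∪ Z ∪ H)
    (hW.card_union (hW.card_union hX hZ) (hW.card_countable hH.countable))
    (op := fun y x => ({v | g y v} ∪ {v | g v y}) ∪ (s1 y x ∪ (s2 y ∪ s3 y))) (by
      intro y x
      refine Countable.union (Countable.union ?_ ?_) (Countable.union (hs1 y x).countable
        ((hs2 y).countable.union (hs3 y).countable))
      · exact (Set.Subsingleton.finite fun a ha b hb => hg.out ha hb).countable
      · exact (Set.Subsingleton.finite fun a ha b hb => hg.inn ha hb).countable)
  have hXm : X ⊆ m := fun x hx => hm1 (Or.inl (Or.inl hx))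
  refine ⟨m, ⟨hXm, ?_, ?_, ?_, ?_, ?_⟩, fun x hx => hm1 (Or.inl (Or.inr hx)), hm2⟩
  · intro u v h
    exact ⟨fun hu => hm3 u hu u hu (Or.inl (Or.inl h)), fun hv => hm3 v hv v hv (Or.inl (Or.inr h))⟩
  · intro y0 hy0 x hx
    obtain ⟨y', h5, h6, h7⟩ := hs1' y0 x hx
    have hsub : s1 y0 x ⊆ m := fun z hz =>
      hm3 y0 hy0 x (hXm hx.choose_spec.2.2) (Or.inr (Or.inl hz))
    exact ⟨y', hsub h5, ReflTransGen.mono (fun a b h => ⟨h.1, hsub h.2⟩) _ _ h6, h7⟩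
  · intro h
    obtain ⟨x, hx, hx'⟩ := hH' h
    exact ⟨x, hm1 (Or.inr hx), hx'⟩
  · intro y hy hy'
    exact ⟨s2 y, fun z hz => hm3 y hy y hy (Or.inr (Or.inr (Or.inl hz))), hs2' y hy'⟩
  · intro y hy hy'
    exact ⟨s3 y, fun z hz => hm3 y (hXm hy) y (hXm hy) (Or.inr (Or.inr (Or.inr hz))),
      hs3' y hy hy'⟩

/-- The concatenation up to `α` of the maximal waves of the webs `Γ - N i`. -/
def LG (Γ : Web V) (N : W → Set V) (α : W) : V → V → Prop :=
  concat (Iic α) (fun i => (Γ.del (N i)).roof) (fun i => (Γ.del (N i)).flow)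

theorem LG_congr {Γ : Web V} {N N' : W → Set V} {α : W} (h : ∀ γ ≤ α, N γ = N' γ) :
    LG Γ N α = LG Γ N' α := by
  have key : ∀ {N N' : W → Set V}, (∀ γ ≤ α, N γ = N' γ) → ∀ u v, LG Γ N α u v → LG Γ N' α u v := by
    rintro N N' h u v ⟨i, hi, h1, h2⟩
    refine ⟨i, hi, by simpa only [h i hi] using h1, fun j hj => ?_⟩
    have := h2 j hj
    simpa only [h j (hj.le.trans hi)] using this
  funext u v
  exact propext ⟨key h u v, key (fun γ hγ => (h γ hγ).symm) u v⟩

theorem LG_bi {Γ : Web V} {N : W → Set V} {α : W} (hN : ∀ β γ, β ≤ γ → γ ≤ α → N β ⊆ N γ) :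
    BiUnique (LG Γ N α) := by
  refine concat_bi (Γ := Γ) (X := N) (S := fun i => (Γ.del (N i)).ess)
    (fun i _ => (Γ.del (N i)).max_wave) (fun i _ => Γ.subset_roof_del _) ?_
  intro i hi j hj u v h _ hu
  exact ((Γ.del (N i)).max_wave.le u v h).2.1 (hN j i hj.le hi hu)

/-- A ladder: an increasing continuous sequence `N` of small sets, each step of which is closed
for the relevant operations. The set `M β` takes the role of the successor of `N β`. -/
structure Ladder (κ : Cardinal.{u}) (Γ : Web V) (N M : W → Set V) : Prop where
  hN : ∀ α, N α = ⋃ β ∈ Iio α, M β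
  card : ∀ β, #(M β) < κ
  rung : ∀ β, Rung Γ (N β) (LG Γ N β) (M β)

theorem RegOrder.exists_ladder (hW : RegOrder κ W) (Γ : Web V) (seed : W → Set V)
    (hseed : ∀ α, #(seed α) < κ) :
    ∃ N M : W → Set V, Ladder κ Γ N M ∧ ∀ α, seed α ⊆ M α := by
  classical
  let tr : (β : W) → ((γ : W) → γ < β → Set V) → W → Set V := fun β H γ =>
    ⋃ δ ∈ Iio γ, if h : δ < β then H δ h else ∅
  let OK : (β : W) → (W → Set V) → Set V → Prop := fun β N m =>
    Rung Γ (N β) (LG Γ N β) m ∧ seed β ⊆ m ∧ #m < κ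
  let M : W → Set V := WellFoundedLT.fix fun β H =>
    if h : ∃ m, OK β (tr β H) m then h.choose else ∅
  let N : W → Set V := fun α => ⋃ β ∈ Iio α, M β
  have hmono : ∀ β γ, β ≤ γ → N β ⊆ N γ := fun β γ h =>
    biUnion_subset_biUnion_left fun x hx => lt_of_lt_of_le hx h
  have htr : ∀ β, ∀ γ ≤ β, tr β (fun δ _ => M δ) γ = N γ := by
    intro β γ hγ
    refine iUnion₂_congr fun δ hδ => ?_
    rw [dif_pos (lt_of_lt_of_le hδ hγ)]
  have hOK : ∀ β m, OK β (tr β (fun δ _ => M δ)) m ↔ OK β N m := by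
    intro β m
    simp only [OK]
    rw [htr β β le_rfl, LG_congr (htr β)]
  have hM : ∀ β, M β = if h : ∃ m, OK β (tr β (fun δ _ => M δ)) m then h.choose else ∅ :=
    fun β => WellFoundedLT.fix_eq _ _
  have main : ∀ β, OK β N (M β) := by
    intro β
    induction β using WellFoundedLT.induction with
    | ind β ih =>
      have hNβ : #(N β) < κ := hW.card_biUnion (hW.seg β) fun γ hγ => (ih γ hγ).2.2
      obtain ⟨m, hm⟩ := hW.exists_rung Γ hNβ (hseed β) (LG_bi (Γ := Γ) (N := N) (α := β)
        fun β γ h _ => hmono β γ h)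
      have hex : ∃ m, OK β (tr β (fun δ _ => M δ)) m := ⟨m, (hOK β m).2 hm⟩
      rw [← hOK, hM β, dif_pos hex]
      exact hex.choose_spec
  exact ⟨N, M, ⟨fun α => rfl, fun β => (main β).2.2, fun β => (main β).1⟩,
    fun α => (main α).2.1⟩

end Ladder

/-! ### The flows of a ladder -/

section LadderFacts

universe u
variable {V : Type u}

open Relation Cardinal Set

variable {κ : Cardinal.{u}} {W : Type u} [LinearOrder W] [WellFoundedLT W]
  {Γ : Web V} {N M : W → Set V}

/-- The flow of the wave of `Γ - N α` provided by a ladder: the concatenation `LG`, outside `N α`. -/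
def LF (Γ : Web V) (N : W → Set V) (α : W) : V → V → Prop := wF (N α) (LG Γ N α)

/-- The union of all the flows of a ladder. -/
def GG (Γ : Web V) (N : W → Set V) (u v : V) : Prop := ∃ α, LG Γ N α u v

theorem LG_mono {α β : W} (h : α ≤ β) {u v : V} (h' : LG Γ N α u v) : LG Γ N β u v :=
  concat_mono (Iic_subset_Iic.2 h) h'

namespace Ladder

theorem mono (L : Ladder κ Γ N M) {β γ : W} (h : β ≤ γ) : N β ⊆ N γ := by
  rw [L.hN, L.hN]
  exact biUnion_subset_biUnion_left fun x hx => lt_of_lt_of_le hx h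

theorem M_sub (L : Ladder κ Γ N M) {γ c : W} (h : γ < c) : M γ ⊆ N c := by
  rw [L.hN]
  exact subset_biUnion_of_mem (u := fun β => M β) h

theorem M_mono (L : Ladder κ Γ N M) {β γ : W} (h : β ≤ γ) : M β ⊆ M γ := by
  rcases h.eq_or_lt with rfl | h
  · exact subset_rfl
  · exact (L.M_sub h).trans (L.rung γ).sub

theorem exists_mem (L : Ladder κ Γ N M) {α : W} {x : V} (h : x ∈ N α) : ∃ β < α, x ∈ M β := by
  rw [L.hN] at h
  simpa using h

theorem key (L : Ladder κ Γ N M) {i j : W} (h : j ≤ i) {u v : V} (h' : (Γ.del (N i)).flow u v) :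
    u ∉ N j ∧ v ∉ N j := by
  have := (Γ.del (N i)).max_wave.le u v h'
  exact ⟨fun hu => this.2.1 (L.mono h hu), fun hv => this.2.2 (L.mono h hv)⟩

theorem clo (L : Ladder κ Γ N M) {u v : V} (h : GG Γ N u v) (α : W) : u ∈ N α ↔ v ∈ N α := by
  obtain ⟨δ, i, -, h1, h2⟩ := h
  rcases lt_or_ge i α with hi | hi
  · have hg : ∀ γ, i ≤ γ → LG Γ N γ u v := fun γ hγ => ⟨i, hγ, h1, h2⟩
    constructor
    · intro hu
      obtain ⟨β, hβ, hu⟩ := L.exists_mem hu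
      refine L.M_sub (max_lt hβ hi) (((L.rung (max β i)).clo u v (hg _ (le_max_right _ _))).1 ?_)
      exact L.M_mono (le_max_left _ _) hu
    · intro hu
      obtain ⟨β, hβ, hu⟩ := L.exists_mem hu
      refine L.M_sub (max_lt hβ hi) (((L.rung (max β i)).clo u v (hg _ (le_max_right _ _))).2 ?_)
      exact L.M_mono (le_max_left _ _) hu
  · exact iff_of_false (L.key hi h1).1 (L.key hi h1).2

theorem wave_aux (L : Ladder κ Γ N M) (α : W) :
    (⋃ i ∈ Iic α, (Γ.del (N i)).roof) = (Γ.del (N α)).roof ∧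
    IsWave (Γ.del (N α)) (Γ.del (N α)).roof (Γ.del (N α)).ess (LF Γ N α) := by
  have hw := concat_wave (Γ := Γ) (I := Iic α) (X := N) (Q := fun i => (Γ.del (N i)).roof)
    (S := fun i => (Γ.del (N i)).ess) (F := fun i => (Γ.del (N i)).flow) (Y := N α)
    (isLowerSet_Iic α) ⟨α, le_rfl⟩
    (fun i _ => (Γ.del (N i)).max_wave) (fun i _ => Γ.subset_roof_del _)
    (fun i _ j hj u v h _ => (L.key hj.le h).1) (fun i hi => L.mono hi)
    (fun u v h => L.clo ⟨α, h⟩ α)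
    (fun v hv hvN => Γ.ess_del _ (hv.2 α le_rfl (Γ.subset_roof_del _ hvN)) hvN)
  have hQ : (⋃ i ∈ Iic α, (Γ.del (N i)).roof) = (Γ.del (N α)).roof :=
    subset_antisymm hw.subset_roof
      (subset_biUnion_of_mem (u := fun i => (Γ.del (N i)).roof) (le_refl α))
  refine ⟨hQ, ?_⟩
  rw [hQ] at hw
  have hS := hw.ends_eq fun v hv => hv.2 α le_rfl (hw.subS hv)
  rw [hS] at hw
  exact hw

theorem wave (L : Ladder κ Γ N M) (α : W) :
    IsWave (Γ.del (N α)) (Γ.del (N α)).roof (Γ.del (N α)).ess (LF Γ N α) := (L.wave_aux α).2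

theorem roof_mono (L : Ladder κ Γ N M) {α β : W} (h : α ≤ β) :
    (Γ.del (N α)).roof ⊆ (Γ.del (N β)).roof := by
  rw [← (L.wave_aux β).1]
  exact subset_biUnion_of_mem (u := fun i => (Γ.del (N i)).roof) h

theorem G_bi (L : Ladder κ Γ N M) : BiUnique (GG Γ N) := by
  have h : ∀ α, BiUnique (LG Γ N α) := fun α => LG_bi fun β γ h _ => L.mono h
  constructor
  · rintro u v w ⟨α, h1⟩ ⟨β, h2⟩
    exact (h (max α β)).out (LG_mono (le_max_left _ _) h1) (LG_mono (le_max_right _ _) h2)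
  · rintro u v w ⟨α, h1⟩ ⟨β, h2⟩
    exact (h (max α β)).inn (LG_mono (le_max_left _ _) h1) (LG_mono (le_max_right _ _) h2)

theorem lg_clean (L : Ladder κ Γ N M) (α : W) : Clean (LG Γ N α) Γ.A :=
  concat_clean (Γ := Γ) (I := Iic α) (X := N) (Q := fun i => (Γ.del (N i)).roof)
    (S := fun i => (Γ.del (N i)).ess) (F := fun i => (Γ.del (N i)).flow)
    (isLowerSet_Iic α) (fun i _ => (Γ.del (N i)).max_wave) (fun i _ => Γ.subset_roof_del _)
    (fun i _ j hj u v h _ => (L.key hj.le h).1) (fun i _ => (Γ.del (N i)).flow_clean)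

theorem G_clean (L : Ladder κ Γ N M) : Clean (GG Γ N) Γ.A := by
  rintro u v ⟨α, h⟩
  exact (L.lg_clean α u v h).mono fun u v h => ⟨α, h⟩

theorem G_le (L : Ladder κ Γ N M) {u v : V} (h : GG Γ N u v) : Γ.E u v := by
  obtain ⟨α, i, -, h, -⟩ := h
  exact ((Γ.del (N i)).max_wave.le u v h).1

theorem F_G {α : W} {u v : V} (h : LF Γ N α u v) : GG Γ N u v := ⟨α, h.1⟩

theorem F_clean (L : Ladder κ Γ N M) (α : W) : Clean (LF Γ N α) (Γ.del (N α)).A := by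
  intro u v h
  obtain ⟨a, ha, h1⟩ := L.lg_clean α u v h.1
  have h2 : a ∉ N α := rtg_inv_back (P := fun x => x ∉ N α) h1 h.2
    fun x y hxy hy hx => hy ((L.clo ⟨α, hxy⟩ α).1 hx)
  refine ⟨a, ⟨ha, h2⟩, rtg_restrict (P := fun x => x ∉ N α) h1 h.2 fun x y hxy hy => ?_⟩
  have hx : x ∉ N α := fun hx => hy ((L.clo ⟨α, hxy⟩ α).1 hx)
  exact ⟨hx, hxy, hx⟩

theorem F_mono (L : Ladder κ Γ N M) {α β : W} (h : α ≤ β) {u v : V} (h' : LF Γ N α u v)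
    (hu : u ∉ N β) : LF Γ N β u v := ⟨LG_mono h h'.1, hu⟩

theorem G_F (L : Ladder κ Γ N M) {α : W} {u v : V} (h : GG Γ N u v) (hu : u ∉ N α)
    (hv : v ∈ (Γ.del (N α)).roof) : LF Γ N α u v := by
  obtain ⟨δ, i, -, h1, h2⟩ := h
  refine ⟨⟨i, ?_, h1, h2⟩, hu⟩
  by_contra hi
  exact h2 α (not_le.1 hi) hv

theorem G_F' (L : Ladder κ Γ N M) {α : W} {u v : V} (h : GG Γ N u v) (hu : u ∉ N α)
    (hQ : u ∈ (Γ.del (N α)).roof) (hS : u ∉ (Γ.del (N α)).ess) : LF Γ N α u v :=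
  L.G_F h hu ((L.wave α).sep u hQ hS v ⟨L.G_le h, hu, fun hv => hu ((L.clo h α).2 hv)⟩)

theorem clo_M (L : Ladder κ Γ N M) {β : W} {u v : V} (h : LF Γ N β u v) :
    u ∈ M β ↔ v ∈ M β := (L.rung β).clo u v h.1

/-- Vertices on alternating walks under the roof stay properly under the roof. -/
theorem step_in (L : Ladder κ Γ N M) {α : W} {a b : V}
    (h : Step (wE Γ (N α)) (LF Γ N α) a b) :
    b ∈ (Γ.del (N α)).roof ∧ b ∉ (Γ.del (N α)).ess ∧ b ∉ N α := by
  have h2 : ∀ {p w}, LF Γ N α p w → p ∈ (Γ.del (N α)).roof ∧ p ∉ (Γ.del (N α)).ess ∧ p ∉ N α :=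
    fun h => ⟨(L.wave α).inQ _ _ h, (L.wave α).halt _ _ h, h.2⟩
  cases h with
  | free h h' =>
    refine ⟨h.2.1, fun hS => ?_, h.2.2⟩
    obtain ⟨x, hx, hxb⟩ := (L.wave α).reach b hS
    rcases ReflTransGen.cases_tail hxb with h3 | ⟨p, -, h3⟩
    · exact Γ.hA _ _ h.1 (h3 ▸ hx.1)
    · exact h' p h3
  | swap h h' => exact h2 h'
  | back h => exact h2 h

end Ladder

end LadderFacts

/-! ### Rerouting inside blocks -/

section Block

universe u
variable {V : Type u}

open Relation Cardinal Set

/-- Edges available inside the block `K` for rerouting the flow `G` with domain `R`. -/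
def bE (E G : V → V → Prop) (R A0 K : Set V) (a0 : V) (u v : V) : Prop :=
  E u v ∧ (u = a0 ∨ u ∈ R ∧ u ∈ K) ∧ v ∈ K ∧ v ∉ A0 ∧ (v ∈ R ∨ ∃ p ∈ R, G p v)

/-- The part of the flow `G` on `R` inside the block `K`. -/
def bF (G : V → V → Prop) (R K : Set V) (u v : V) : Prop := G u v ∧ u ∈ R ∧ u ∈ K

/-- The ends of the flow `G` on `R` inside the block `K`. -/
def bT (G : V → V → Prop) (R A0 K : Set V) : Set V :=
  {t | t ∈ K ∧ t ∉ R ∧ (t ∈ A0 ∨ ∃ p ∈ R, G p t)}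

/-- A flow `G` in `E` with a set `R`, such that the restriction of `G` to `R` starts in `A0`. -/
structure Base (E G : V → V → Prop) (R A0 : Set V) : Prop where
  bi : BiUnique G
  le : ∀ u v, G u v → E u v
  src : ∀ u v, G u v → v ∉ A0
  clean : Clean (fun u v => G u v ∧ u ∈ R) A0

variable {E G : V → V → Prop} {R A0 K : Set V}

theorem Base.from_block (hb : Base E G R A0) (hK : ∀ u v, G u v → (u ∈ K ↔ v ∈ K)) {p : V}
    (hp : From (fun u v => G u v ∧ u ∈ R) A0 p) (hpK : p ∈ K) (a0 : V) :
    From (bF G R K) (insert a0 (A0 ∩ K)) p := by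
  obtain ⟨a, ha, h⟩ := hp
  have haK : a ∈ K := rtg_inv_back (P := fun x => x ∈ K) h hpK fun x y hxy => (hK x y hxy.1).2
  refine ⟨a, Or.inr ⟨ha, haK⟩, rtg_restrict (P := fun x => x ∈ K) h hpK fun x y hxy hy => ?_⟩
  have hx := (hK x y hxy.1).2 hy
  exact ⟨hx, hxy.1, hxy.2, hx⟩

theorem Base.serves (hb : Base E G R A0) (hK : ∀ u v, G u v → (u ∈ K ↔ v ∈ K)) (a0 : V) :
    Serves (bE E G R A0 K a0) (insert a0 (A0 ∩ K)) (bT G R A0 K) (bF G R K) where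
  bi := hb.bi.mono fun u v h => h.1
  le u v h := ⟨hb.le u v h.1, Or.inr h.2, (hK u v h.1).1 h.2.2, hb.src u v h.1,
    Or.inr ⟨u, h.2.1, h.1⟩⟩
  reach t ht := by
    obtain ⟨h1, h2, h3 | ⟨p, hp, h3⟩⟩ := ht
    · exact ⟨t, Or.inr ⟨h3, h1⟩, .refl⟩
    · have hpK := (hK p t h3).2 h1
      exact (hb.from_block hK (hb.clean p t ⟨h3, hp⟩) hpK a0).step ⟨h3, hp, hpK⟩
  halt t ht v h := ht.2.1 h.2.1

theorem Base.bF_clean (hb : Base E G R A0) (hK : ∀ u v, G u v → (u ∈ K ↔ v ∈ K)) (a0 : V) :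
    Clean (bF G R K) (insert a0 (A0 ∩ K)) := fun u v h =>
  hb.from_block hK (hb.clean u v ⟨h.1, h.2.1⟩) h.2.2 a0

/-- Rerouting inside a block: an alternating walk from `a0` to `y` gives a flow serving `y` and
all the former ends. -/
theorem Base.reroute (hb : Base E G R A0) (hK : ∀ u v, G u v → (u ∈ K ↔ v ∈ K)) {a0 y0 y : V}
    (ha0 : a0 ∉ K ∨ a0 ∈ A0) (hT : ∀ t ∈ bT G R A0 K, ¬ ReflTransGen (bF G R K) a0 t)
    (hy0 : ReflTransGen (bF G R K) a0 y0)
    (h : ReflTransGen (Step (bE E G R A0 K a0) (bF G R K)) y0 y) :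
    ∃ F', Serves (bE E G R A0 K a0) (insert a0 (A0 ∩ K)) (insert y (bT G R A0 K)) F' ∧
      Clean F' (insert a0 (A0 ∩ K)) ∧
      ((∀ a ∈ A0 ∩ K, a ≠ a0 → ∃ t ∈ bT G R A0 K, ReflTransGen (bF G R K) a t) →
        ∀ a ∈ insert a0 (A0 ∩ K), ∃ t ∈ insert y (bT G R A0 K), ReflTransGen F' a t) := by
  obtain ⟨F', h1, h2, h3⟩ := aug (E := bE E G R A0 K a0) (A := insert a0 (A0 ∩ K)) (by
    rintro u v ⟨-, -, h1, h2, -⟩ (rfl | h)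
    · rcases ha0 with h | h
      · exact h h1
      · exact h2 h
    · exact h2 h.1) (hb.serves hK a0) (hb.bF_clean hK a0) (Or.inl rfl) hT hy0 h
  refine ⟨F', h1, h2, fun h4 => h3 ?_⟩
  rintro a (rfl | ha) hne
  · exact absurd rfl hne
  · exact h4 a ha hne

section Walk

variable {κ : Cardinal.{u}} {W : Type u} [LinearOrder W] [WellFoundedLT W]
  {Γ : Web V} {N M : W → Set V}

theorem Ladder.clo_M' (L : Ladder κ Γ N M) {u v : V} (h : GG Γ N u v) (γ : W) :
    u ∈ M γ ↔ v ∈ M γ := by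
  obtain ⟨δ, i, -, h1, h2⟩ := h
  rcases le_or_gt i γ with hi | hi
  · exact (L.rung γ).clo u v ⟨i, hi, h1, h2⟩
  · exact iff_of_false (fun h => (L.key le_rfl h1).1 (L.M_sub hi h))
      (fun h => (L.key le_rfl h1).2 (L.M_sub hi h))

theorem Ladder.clo_K (L : Ladder κ Γ N M) {u v : V} (h : GG Γ N u v) (γ : W) :
    u ∈ M γ \ N γ ↔ v ∈ M γ \ N γ := by
  rw [mem_sdiff, mem_sdiff, L.clo_M' h, L.clo h]

theorem Ladder.disj (L : Ladder κ Γ N M) {β γ : W} {x : V} (h : x ∈ M β \ N β)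
    (h' : x ∈ M γ \ N γ) : β = γ := by
  rcases lt_trichotomy β γ with hl | hl | hl
  · exact absurd (L.M_sub hl h.1) h'.2
  · exact hl
  · exact absurd (L.M_sub hl h'.1) h.2

/-- An alternating walk of stage `γ` inside `M γ` is an alternating walk of the block `M γ \ N γ`, as
far as the flow of stage `γ` agrees with `G` along the walk. -/
theorem Ladder.transfer (L : Ladder κ Γ N M) {γ : W} {a0 y0 y : V} (hGG : ∀ u v, G u v → GG Γ N u v)
    (hGF : ∀ p b, p ∈ R → b ∈ (Γ.del (N γ)).roof → b ∉ N γ → (G p b ↔ LF Γ N γ p b))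
    (hwalk : ReflTransGen (fun a b => Step (wE Γ (N γ)) (LF Γ N γ) a b ∧ b ∈ M γ) y0 y)
    (hR : ∀ z z', ReflTransGen (fun a b => Step (wE Γ (N γ)) (LF Γ N γ) a b ∧ b ∈ M γ) y0 z →
      ReflTransGen (fun a b => Step (wE Γ (N γ)) (LF Γ N γ) a b ∧ b ∈ M γ) z' y →
      Step (wE Γ (N γ)) (LF Γ N γ) z z' → z' ∈ M γ → z' ∈ R)
    (hA0 : ∀ z z' w, ReflTransGen (fun a b => Step (wE Γ (N γ)) (LF Γ N γ) a b ∧ b ∈ M γ) y0 z →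
      ReflTransGen (fun a b => Step (wE Γ (N γ)) (LF Γ N γ) a b ∧ b ∈ M γ) z' y →
      Step (wE Γ (N γ)) (LF Γ N γ) z z' → wE Γ (N γ) z w →
      (w = z' ∧ (∀ p, ¬ LF Γ N γ p w) ∨ LF Γ N γ z' w) → w ∉ A0)
    (hy0 : y0 = a0 ∨ y0 ∈ R ∧ y0 ∈ M γ \ N γ) :
    ReflTransGen (Step (bE Γ.E G R A0 (M γ \ N γ) a0) (bF G R (M γ \ N γ))) y0 y ∧
      (y = a0 ∨ y ∈ R ∧ y ∈ M γ \ N γ) := by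
  have main : ∀ x, ReflTransGen (fun a b => Step (wE Γ (N γ)) (LF Γ N γ) a b ∧ b ∈ M γ) y0 x →
      ReflTransGen (fun a b => Step (wE Γ (N γ)) (LF Γ N γ) a b ∧ b ∈ M γ) x y →
      ReflTransGen (Step (bE Γ.E G R A0 (M γ \ N γ) a0) (bF G R (M γ \ N γ))) y0 x ∧
      (x = a0 ∨ x ∈ R ∧ x ∈ M γ \ N γ) := by
    intro x hx
    induction hx with
    | refl => exact fun _ => ⟨.refl, hy0⟩
    | @tail a b hab hs ih =>
      intro hby
      obtain ⟨ih1, ih2⟩ := ih (hby.head hs)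
      have hbin := L.step_in hs.1
      have hbR := hR a b hab hby hs.1 hs.2
      have hA' := fun w => hA0 a b w hab hby hs.1
      refine ⟨ih1.tail ?_, Or.inr ⟨hbR, hs.2, hbin.2.2⟩⟩
      obtain ⟨hs1, hs2⟩ := hs
      cases hs1 with
      | free h h' =>
        refine .free ⟨h.1, ih2, ⟨hs2, hbin.2.2⟩, hA' b h (Or.inl ⟨rfl, h'⟩), Or.inl hbR⟩ ?_
        rintro p ⟨hp, hpR, -⟩
        exact h' p ((hGF p b hpR hbin.1 hbin.2.2).1 hp)
      | @swap w _ h h' =>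
        have hG := (hGF b w hbR h.2.1 h.2.2).2 h'
        exact .swap ⟨h.1, ih2, ⟨(L.clo_M h').1 hs2, h.2.2⟩, hA' w h (Or.inr h'), Or.inr ⟨b, hbR, hG⟩⟩
          ⟨hG, hbR, hs2, hbin.2.2⟩
      | back h =>
        have ha : a ∉ N γ := fun ha => hbin.2.2 ((L.clo (Ladder.F_G h) γ).2 ha)
        exact .back ⟨(hGF b a hbR ((L.wave γ).inQ' h) ha).2 h, hbR, hs2, hbin.2.2⟩
  exact main y hwalk .refl

end Walk

/-- Disjoint blocks `K i`, in each of which the flow `G` is rerouted to `F' i`, so as to serve the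
vertex `y i` by an additional track from `a i`, together with cross edges `y i → w i` prolonging this
track. -/
structure Pieces (E G : V → V → Prop) (R A0 : Set V) {ι : Type*} (K : ι → Set V) (a y w : ι → V)
    (F' : ι → V → V → Prop) : Prop where
  hK : ∀ i u v, G u v → (u ∈ K i ↔ v ∈ K i)
  hF : ∀ i, Serves (bE E G R A0 (K i) (a i)) (insert (a i) (A0 ∩ K i))
    (insert (y i) (bT G R A0 (K i))) (F' i)
  hy : ∀ i, y i = a i ∨ y i ∈ R ∧ y i ∈ K i
  hyw : ∀ i, E (y i) (w i)
  hKK : ∀ i j x, x ∈ K i → x ∈ K j → i = j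
  ha : ∀ i, (a i ∈ R ∧ a i ∈ K i) ∨
    (∀ j, a i ∈ K j → a i ∉ R) ∧ (∀ v, G (a i) v → a i ∉ R) ∧ ∀ j, a i = a j → i = j
  hw : ∀ i j, w i = w j → i = j
  hwG : ∀ i, ∀ p ∈ R, ¬ G p (w i)
  hwR : ∀ i j, w i ∈ K j → w i ∉ R

/-- The flow `G` on `R`, replaced by `F' i` inside each block `K i`, with all cross edges. -/
def asm (G : V → V → Prop) (R : Set V) {ι : Type*} (K : ι → Set V) (y w : ι → V)
    (F' : ι → V → V → Prop) (u v : V) : Prop :=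
  (∃ i, F' i u v ∨ u = y i ∧ v = w i) ∨ G u v ∧ u ∈ R ∧ ∀ i, u ∉ K i

variable {ι : Type*} {Kf : ι → Set V} {a y w : ι → V} {F' : ι → V → V → Prop}

theorem Pieces.dom (hp : Pieces E G R A0 Kf a y w F') {i : ι} {u v : V}
    (h : F' i u v ∨ u = y i ∧ v = w i) : u = a i ∨ u ∈ R ∧ u ∈ Kf i := by
  rcases h with h | ⟨rfl, -⟩
  · exact ((hp.hF i).le u v h).2.1
  · exact hp.hy i

theorem Pieces.dom_inj (hp : Pieces E G R A0 Kf a y w F') {i j : ι} {u : V}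
    (h : u = a i ∨ u ∈ R ∧ u ∈ Kf i) (h' : u = a j ∨ u ∈ R ∧ u ∈ Kf j) : i = j := by
  have key : ∀ {i}, (u = a i ∨ u ∈ R ∧ u ∈ Kf i) → u ∈ R ∧ u ∈ Kf i ∨
      (∀ j, u ∈ Kf j → u ∉ R) ∧ u = a i ∧ ∀ j, u = a j → i = j := by
    rintro i (rfl | h)
    · rcases hp.ha i with h | h
      · exact Or.inl h
      · exact Or.inr ⟨h.1, rfl, h.2.2⟩
    · exact Or.inl h
  rcases key h with h1 | h1 <;> rcases key h' with h2 | h2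
  · exact hp.hKK i j u h1.2 h2.2
  · exact absurd h1.1 (h2.1 i h1.2)
  · exact absurd h2.1 (h1.1 j h2.2)
  · exact h1.2.2 j h2.2.1

theorem Pieces.rng (hp : Pieces E G R A0 Kf a y w F') {i : ι} {u v : V}
    (h : F' i u v) : v ∈ Kf i ∧ (v ∈ R ∨ ∃ p ∈ R, G p v) :=
  ⟨((hp.hF i).le u v h).2.2.1, ((hp.hF i).le u v h).2.2.2.2⟩

theorem Pieces.bi (hp : Pieces E G R A0 Kf a y w F') (hG : BiUnique G) :
    BiUnique (asm G R Kf y w F') := by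
  have hwrng : ∀ i j u, ¬ F' i u (w j) := by
    intro i j u h
    obtain ⟨h1, h2 | ⟨p, hpR, h2⟩⟩ := hp.rng h
    · exact hp.hwR j i h1 h2
    · exact hp.hwG j p hpR h2
  have hdG : ∀ {i u v v'}, (F' i u v ∨ u = y i ∧ v = w i) → (G u v' ∧ u ∈ R ∧ ∀ i, u ∉ Kf i) →
      False := by
    intro i u v v' h h'
    rcases hp.dom h with rfl | h1
    · rcases hp.ha i with h2 | h2
      · exact h'.2.2 i h2.2
      · exact h2.2.1 v' h'.1 h'.2.1
    · exact h'.2.2 i h1.2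
  have hrG : ∀ {i u u' v}, (F' i u v ∨ u = y i ∧ v = w i) → (G u' v ∧ u' ∈ R ∧ ∀ i, u' ∉ Kf i) →
      False := by
    intro i u u' v h h'
    rcases h with h | ⟨-, rfl⟩
    · exact h'.2.2 i ((hp.hK i u' v h'.1).2 (hp.rng h).1)
    · exact hp.hwG i u' h'.2.1 h'.1
  constructor
  · rintro u v v' (⟨i, h⟩ | h) (⟨j, h'⟩ | h')
    · obtain rfl := hp.dom_inj (hp.dom h) (hp.dom h')
      rcases h with h | ⟨rfl, rfl⟩ <;> rcases h' with h' | ⟨h', rfl⟩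
      · exact (hp.hF i).bi.out h h'
      · exact absurd h ((hp.hF i).halt u (Or.inl h') v)
      · exact absurd h' ((hp.hF i).halt _ (Or.inl rfl) v')
      · rfl
    · exact (hdG h h').elim
    · exact (hdG h' h).elim
    · exact hG.out h.1 h'.1
  · rintro u u' v (⟨i, h⟩ | h) (⟨j, h'⟩ | h')
    · rcases h with h | ⟨rfl, rfl⟩ <;> rcases h' with h' | ⟨rfl, h'⟩
      · obtain rfl := hp.hKK i j v (hp.rng h).1 (hp.rng h').1
        exact (hp.hF i).bi.inn h h'
      · exact absurd (h' ▸ h) (hwrng i j u)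
      · exact absurd h' (hwrng j i u')
      · obtain rfl := hp.hw i j h'
        rfl
    · exact (hrG h h').elim
    · exact (hrG h' h).elim
    · exact hG.inn h.1 h'.1

theorem Pieces.le (hp : Pieces E G R A0 Kf a y w F') (hG : ∀ u v, G u v → E u v) {u v : V}
    (h : asm G R Kf y w F' u v) : E u v := by
  rcases h with ⟨i, h | ⟨rfl, rfl⟩⟩ | h
  · exact ((hp.hF i).le u v h).1
  · exact hp.hyw i
  · exact hG u v h.1

theorem Pieces.dom' (hp : Pieces E G R A0 Kf a y w F') {u v : V}
    (h : asm G R Kf y w F' u v) : u ∈ R ∨ ∃ i, u = a i := by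
  rcases h with ⟨i, h⟩ | h
  · rcases hp.dom h with h | h
    · exact Or.inr ⟨i, h⟩
    · exact Or.inl h.1
  · exact Or.inl h.2.1

theorem Pieces.reach_base (hp : Pieces E G R A0 Kf a y w F') (hb : Base E G R A0) {t : V}
    (ht : ∀ i, t ∉ Kf i) (h : t ∈ A0 ∨ ∃ p ∈ R, G p t) : From (asm G R Kf y w F') A0 t := by
  rcases h with h | ⟨p, hpR, h⟩
  · exact ⟨t, h, .refl⟩
  · have hpK : ∀ i, p ∉ Kf i := fun i hi => ht i ((hp.hK i p t h).1 hi)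
    obtain ⟨x, hx, h'⟩ := hb.clean p t ⟨h, hpR⟩
    refine ⟨x, hx, ?_⟩
    refine (rtg_restrict (P := fun x => ∀ i, x ∉ Kf i) h' hpK fun u v huv hv => ?_).tail
      (Or.inr ⟨h, hpR, hpK⟩)
    have hu : ∀ i, u ∉ Kf i := fun i hi => hv i ((hp.hK i u v huv.1).1 hi)
    exact ⟨hu, Or.inr ⟨huv.1, huv.2, hu⟩⟩

theorem Pieces.reach_piece (hp : Pieces E G R A0 Kf a y w F') (i : ι) {t : V}
    (ht : t = y i ∨ t ∈ bT G R A0 (Kf i)) :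
    From (asm G R Kf y w F') A0 t ∨ ReflTransGen (asm G R Kf y w F') (a i) t := by
  obtain ⟨x, hx, h⟩ := (hp.hF i).reach t ht
  have h' := ReflTransGen.mono (fun u v (h : F' i u v) =>
    (Or.inl ⟨i, Or.inl h⟩ : asm G R Kf y w F' u v)) _ _ h
  rcases hx with rfl | hx
  · exact Or.inr h'
  · exact Or.inl ⟨x, hx.1, h'⟩

theorem Pieces.cross (i : ι) : asm G R Kf y w F' (y i) (w i) := Or.inl ⟨i, Or.inr ⟨rfl, rfl⟩⟩

end Block

/-! ### Almost all stages cover the sources -/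

section Uncovered

universe u
variable {V : Type u}

open Relation Cardinal Set

variable {κ : Cardinal.{u}} {W : Type u} [LinearOrder W] [WellFoundedLT W]
  {Γ : Web V} {N M : W → Set V}

theorem Ladder.card_N (L : Ladder κ Γ N M) (hW : RegOrder κ W) (α : W) : #(N α) < κ := by
  rw [L.hN]
  exact hW.card_biUnion (hW.seg α) fun β _ => L.card β

theorem Ladder.card_all (L : Ladder κ Γ N M) (hW : RegOrder κ W) : #(⋃ α, M α) ≤ κ := by
  refine (mk_iUnion_le_sum_mk).trans ((sum_le_sum _ (fun _ => κ) fun α => (L.card α).le).trans ?_)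
  rw [sum_const', hW.card, mul_eq_self hW.reg.aleph0_le]

/-- In an unhindered web, the flows of a ladder cover all the sources at almost all stages.

Suppose that at stationarily many stages `α` some source `h α` is not covered. Let `R` collect the
vertices on alternating walks from `h α`, for almost all such `α`. An edge leaving `R` ends at a vertex
served by the flow, or at a vertex `w` hit at stationarily many stages. Each `w` of the second kind
receives a stage of its own, in whose block `M α \ N α` the flow is rerouted to serve `w` as well,
from `h α`. This gives a wave, which is a hindrance because one stage `βs` has been kept back. -/
theorem Ladder.large_covered (L : Ladder κ Γ N M) (hW : RegOrder κ W) (hu : Unhindered Γ) :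
    Large {α | ∃ h, Unc Γ (N α) (LG Γ N α) h}ᶜ := by
  apply not_stat
  intro hstat
  set Φ := {α | ∃ h, Unc Γ (N α) (LG Γ N α) h} with hΦ
  have : Nonempty V := by
    obtain ⟨α, ⟨h, -⟩, -⟩ := hstat id
    exact ⟨h⟩
  have hex : ∀ α ∈ Φ, ∃ h ∈ M α, Unc Γ (N α) (LG Γ N α) h := fun α hα => (L.rung α).unc hα
  choose! h hhM hh using hex
  let Out : W → Set V := fun α => {y | ∃ y0, ReflTransGen (LF Γ N α) (h α) y0 ∧
    ReflTransGen (Step (wE Γ (N α)) (LF Γ N α)) y0 y}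
  have hy0Q : ∀ α ∈ Φ, ∀ y0, ReflTransGen (LF Γ N α) (h α) y0 → y0 ∈ (Γ.del (N α)).roof ∧
      y0 ∉ (Γ.del (N α)).ess ∧ y0 ∉ N α := by
    intro α hα y0 hy0
    refine ⟨?_, fun hs => (hh α hα).2.2 y0 hs hy0, ?_⟩
    · exact rtg_inv (P := fun x => x ∈ (Γ.del (N α)).roof) hy0
        ((L.wave α).subA ⟨(hh α hα).1, (hh α hα).2.1⟩) fun u v huv _ => (L.wave α).inQ' huv
    · exact rtg_inv (P := fun x => x ∉ N α) hy0 (hh α hα).2.1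
        fun u v huv hu hv => hu ((L.clo (Ladder.F_G huv) α).2 hv)
  have houtQ : ∀ α ∈ Φ, ∀ y ∈ Out α, y ∈ (Γ.del (N α)).roof ∧
      y ∉ (Γ.del (N α)).ess ∧ y ∉ N α := by
    rintro α hα y ⟨y0, h1, h2⟩
    rcases ReflTransGen.cases_tail h2 with rfl | ⟨p, -, h3⟩
    · exact hy0Q α hα y h1
    · exact L.step_in h3
  have houtF : ∀ α p y, y ∈ Out α → LF Γ N α p y → p ∈ Out α := by
    rintro α p y ⟨y0, h1, h2⟩ hp
    exact ⟨y0, h1, h2.tail (.back hp)⟩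
  have houtG : ∀ α ∈ Φ, ∀ p y, y ∈ Out α → GG Γ N p y → p ∈ Out α := by
    intro α hα p y hy hp
    obtain ⟨h1, h2, h3⟩ := houtQ α hα y hy
    exact houtF α p y hy (L.G_F hp (fun hpN => h3 ((L.clo hp α).1 hpN)) h1)
  have htrack : ∀ α ∈ Φ, ∀ x, ReflTransGen (GG Γ N) (h α) x → ReflTransGen (LF Γ N α) (h α) x := by
    intro α hα x hx
    induction hx with
    | refl => exact .refl
    | tail _ hbc ih =>
      obtain ⟨h1, h2, h3⟩ := hy0Q α hα _ ih
      exact ih.tail (L.G_F' hbc h3 h1 h2)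
  have houtE : ∀ α ∈ Φ, ∀ y ∈ Out α, ∀ w, Γ.E y w →
      w ∈ N α ∨ w ∈ Out α ∨ ∃ p ∈ Out α, GG Γ N p w := by
    intro α hα y hy w hyw
    obtain ⟨h1, h2, h3⟩ := houtQ α hα y hy
    by_cases hw : w ∈ N α
    · exact Or.inl hw
    have hwE : wE Γ (N α) y w := ⟨hyw, (L.wave α).sep y h1 h2 w ⟨hyw, h3, hw⟩, hw⟩
    obtain ⟨y0, h4, h5⟩ := hy
    by_cases hp : ∃ p, LF Γ N α p w
    · obtain ⟨p, hp⟩ := hp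
      exact Or.inr (Or.inr ⟨p, ⟨y0, h4, h5.tail (.swap hwE hp)⟩, Ladder.F_G hp⟩)
    · push Not at hp
      exact Or.inr (Or.inl ⟨y0, h4, h5.tail (.free hwE hp)⟩)
  -- `Ψ w` collects the stages at which `w` is hit
  let Ψ : V → Set W := fun w => {α | α ∈ Φ ∧ w ∈ N α ∧ ∃ y ∈ Out α, Γ.E y w}
  have hdiag := hW.diag (J := M) (fun α β hαβ => L.M_mono hαβ) L.card Ψ
  set C := {c | ∀ γ < c, ∀ x ∈ M γ, c ∈ Ψ x → Stat (Ψ x)} with hC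
  have hpop : ∀ α ∈ Φ ∩ C, ∀ w ∈ N α, (∃ y ∈ Out α, Γ.E y w) → Stat (Ψ w) := by
    intro α hα w hw hy
    obtain ⟨γ, hγ, hwM⟩ := L.exists_mem hw
    exact hα.2 γ hγ w hwM ⟨hα.1, hw, hy⟩
  obtain ⟨βs, hβs, -⟩ := (hstat.inter hdiag) id
  let R : Set V := ⋃ α ∈ Φ ∩ C, Out α
  have hRmem : ∀ {x}, x ∈ R ↔ ∃ α ∈ Φ ∩ C, x ∈ Out α := by
    intro x
    simp only [R, mem_iUnion, exists_prop]
  have hRG : ∀ p y, y ∈ R → GG Γ N p y → p ∈ R := by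
    intro p y hy hp
    obtain ⟨α, hα, hy⟩ := hRmem.1 hy
    exact hRmem.2 ⟨α, hα, houtG α hα.1 p y hy hp⟩
  have hb : Base Γ.E (GG Γ N) R Γ.A := by
    refine ⟨L.G_bi, fun u v h => L.G_le h, fun u v h => Γ.hA u v (L.G_le h), ?_⟩
    rintro u v ⟨huv, huR⟩
    obtain ⟨a, ha, hau⟩ := L.G_clean u v huv
    refine ⟨a, ha, rtg_restrict (P := fun x => x ∈ R) hau huR fun x y hxy hy => ?_⟩
    have := hRG x y hy hxy
    exact ⟨this, hxy, this⟩
  -- the out-neighbours of `R` not yet served by the flow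
  let U : Set V := {w | w ∉ R ∧ w ∉ Γ.A ∧ (∃ y ∈ R, Γ.E y w) ∧ ∀ p ∈ R, ¬ GG Γ N p w}
  have hU : ∀ w ∈ U, Stat (Ψ w) ∧ w ∈ ⋃ α, M α := by
    rintro w ⟨h1, h2, ⟨y, hy, hyw⟩, h4⟩
    obtain ⟨α, hα, hy⟩ := hRmem.1 hy
    rcases houtE α hα.1 y hy w hyw with h5 | h5 | ⟨p, hp, h5⟩
    · refine ⟨hpop α hα w h5 ⟨y, hy, hyw⟩, mem_iUnion.2 ⟨α, (L.rung α).sub h5⟩⟩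
    · exact absurd (hRmem.2 ⟨α, hα, h5⟩) h1
    · exact absurd h5 (h4 p (hRmem.2 ⟨α, hα, hp⟩))
  obtain ⟨b, hbinj, hbD⟩ := hW.exists_injective (ι := U)
    (D := fun w => {c | c ∈ Ψ w ∩ C ∧ βs < c})
    ((mk_le_mk_of_subset fun w hw => (hU w hw).2).trans (L.card_all hW)) (by
      intro w a
      obtain ⟨c, hc, hac⟩ := ((hU w w.2).1.inter hdiag).exists_gt (max a βs)
      exact ⟨c, ⟨hc, (le_max_right _ _).trans_lt hac⟩, (le_max_left _ _).trans_lt hac⟩)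
  have hbΦ : ∀ w : U, b w ∈ Φ ∩ C := fun w => ⟨(hbD w).1.1.1, (hbD w).1.2⟩
  have hyex : ∀ w : U, ∃ y F', Serves (bE Γ.E (GG Γ N) R Γ.A (M (b w) \ N (b w)) (h (b w)))
      (insert (h (b w)) (Γ.A ∩ (M (b w) \ N (b w))))
      (insert y (bT (GG Γ N) R Γ.A (M (b w) \ N (b w)))) F' ∧
      (y = h (b w) ∨ y ∈ R ∧ y ∈ M (b w) \ N (b w)) ∧ Γ.E y w := by
    intro w
    obtain ⟨⟨hβ, hwN, y1, ⟨y0, hy01, hy02⟩, hy1w⟩, hβC⟩ := (hbD w).1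
    have hβΦ := hbΦ w
    generalize b w = β at *
    have hout0 : ∀ x, ReflTransGen (LF Γ N β) (h β) x → x ∈ R ∧ x ∈ M β \ N β := by
      intro x hx
      refine ⟨hRmem.2 ⟨β, hβΦ, x, hx, .refl⟩, ?_, (hy0Q β hβ x hx).2.2⟩
      exact rtg_inv (P := fun x => x ∈ M β) hx (hhM β hβ) fun u v huv => (L.clo_M huv).1
    obtain ⟨y, hyM, hwalk, hyw⟩ := (L.rung β).hit y0 (hout0 y0 hy01).2.1 w ⟨y1, hy02, hy1w, hwN⟩
    obtain ⟨ht1, ht2⟩ := L.transfer (G := GG Γ N) (R := R) (A0 := Γ.A) (γ := β) (a0 := h β)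
      (y0 := y0) (y := y) (fun _ _ h => h) (by
        intro p b hp hbQ hbN
        exact ⟨fun hG => L.G_F hG (fun hpN => hbN ((L.clo hG β).1 hpN)) hbQ, Ladder.F_G⟩) hwalk
      (fun z z' hz _ hs _ => hRmem.2 ⟨β, hβΦ, y0, hy01,
        (ReflTransGen.mono (fun _ _ h => h.1) _ _ hz).tail hs⟩)
      (fun z z' w _ _ _ hw _ => Γ.hA _ _ hw.1) (Or.inr (hout0 y0 hy01))
    obtain ⟨F', hF', -, -⟩ := hb.reroute (fun u v huv => L.clo_K huv β) (Or.inr (hh β hβ).1)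
      (by
        intro t ht hht
        have := htrack β hβ t (ReflTransGen.mono (fun _ _ h => h.1) _ _ hht)
        exact ht.2.1 (hout0 t this).1)
      (rtg_restrict' (P := fun x => ReflTransGen (LF Γ N β) (h β) x) hy01 .refl
        fun x z hxz hx => ⟨hx.tail hxz, Ladder.F_G hxz, hout0 x hx⟩).1 ht1
    exact ⟨y, F', hF', ht2, hyw⟩
  choose y F' hF' hy hyw using hyex
  have hp : Pieces Γ.E (GG Γ N) R Γ.A (fun w : U => M (b w) \ N (b w)) (fun w => h (b w)) y
      (fun w => w.1) F' := by
    refine ⟨fun w u v huv => L.clo_K huv _, hF', hy, hyw, ?_, ?_, ?_, ?_, ?_⟩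
    · intro w w' x hx hx'
      exact hbinj (L.disj hx hx')
    · intro w
      refine Or.inl ⟨hRmem.2 ⟨_, hbΦ w, _, .refl, .refl⟩, hhM _ (hbΦ w).1, (hh _ (hbΦ w).1).2.1⟩
    · exact fun w w' hww => Subtype.ext hww
    · exact fun w => w.2.2.2.2
    · exact fun w _ _ => w.2.1
  have hwave : IsWave Γ (Γ.A ∪ R ∪ {w | ∃ y ∈ R, Γ.E y w})
      ((Γ.A ∪ R ∪ {w | ∃ y ∈ R, Γ.E y w}) \ R)
      (asm (GG Γ N) R (fun w : U => M (b w) \ N (b w)) y (fun w => w.1) F') := by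
    have hdom : ∀ u v, asm (GG Γ N) R (fun w : U => M (b w) \ N (b w)) y (fun w => w.1) F' u v →
        u ∈ R := by
      intro u v huv
      rcases hp.dom' huv with h1 | ⟨w, rfl⟩
      · exact h1
      · exact hRmem.2 ⟨_, hbΦ w, _, .refl, .refl⟩
    have hnR : ∀ u ∈ Γ.A ∪ R ∪ {w | ∃ y ∈ R, Γ.E y w},
        u ∉ (Γ.A ∪ R ∪ {w | ∃ y ∈ R, Γ.E y w}) \ R → u ∈ R := by
      intro u h1 h2
      by_contra h3
      exact h2 ⟨h1, h3⟩
    refine ⟨⟨fun x hx => Or.inl (Or.inl hx), fun x hx => hx.1, ?_, ?_, hp.bi L.G_bi,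
      fun u v huv => hp.le hb.le huv, fun u v huv => Or.inl (Or.inr (hdom u v huv)),
      fun u v huv h' => h'.2 (hdom u v huv)⟩, ?_⟩
    · intro u h1 h2 huB
      obtain ⟨α, hα, h3⟩ := hRmem.1 (hnR u h1 h2)
      obtain ⟨h4, h5, h6⟩ := houtQ α hα.1 u h3
      exact (L.wave α).sepB u h4 h5 ⟨huB, h6⟩
    · intro u h1 h2 v huv
      exact Or.inr ⟨u, hnR u h1 h2, huv⟩
    · rintro s ⟨h1, h2⟩
      have hfromA : ∀ (w : U) t, ReflTransGen (asm (GG Γ N) R (fun w : U => M (b w) \ N (b w)) y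
          (fun w => w.1) F') (h (b w)) t → From (asm (GG Γ N) R (fun w : U => M (b w) \ N (b w)) y
          (fun w => w.1) F') Γ.A t := fun w t ht => ⟨_, (hh _ (hbΦ w).1).1, ht⟩
      by_cases hsU : s ∈ U
      · have : From (asm (GG Γ N) R (fun w : U => M (b w) \ N (b w)) y
          (fun w => w.1) F') Γ.A (y ⟨s, hsU⟩) := by
          rcases hp.reach_piece ⟨s, hsU⟩ (Or.inl rfl) with h3 | h3
          · exact h3
          · exact hfromA _ _ h3
        exact this.step (Pieces.cross (⟨s, hsU⟩ : U))
      · have hserved : s ∈ Γ.A ∨ ∃ p ∈ R, GG Γ N p s := by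
          by_contra hcon
          push Not at hcon
          refine hsU ⟨h2, hcon.1, ?_, hcon.2⟩
          rcases h1 with (h1 | h1) | h1
          · exact absurd h1 hcon.1
          · exact absurd h1 h2
          · exact h1
        by_cases hsK : ∃ w : U, s ∈ M (b w) \ N (b w)
        · obtain ⟨w, hw⟩ := hsK
          rcases hp.reach_piece w (Or.inr ⟨hw, h2, hserved⟩) with h3 | h3
          · exact h3
          · exact hfromA _ _ h3
        · push Not at hsK
          exact hp.reach_base hb hsK hserved
  -- the block of `βs` is untouched, so the track from `h βs` still ends inside `R`
  obtain ⟨s, hs, hreach⟩ := hu _ _ _ hwave (h βs) (hh βs hβs.1).1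
  have hK : ∀ x ∈ M βs \ N βs, ∀ w : U, x ∉ M (b w) \ N (b w) := by
    intro x hx w hx'
    exact absurd (L.disj hx hx') (hbD w).2.ne
  have : ReflTransGen (GG Γ N) (h βs) s ∧ s ∈ M βs \ N βs := by
    refine rtg_restrict' (P := fun x => x ∈ M βs \ N βs) hreach
      ⟨hhM βs hβs.1, (hh βs hβs.1).2.1⟩ ?_
    rintro u v (⟨w, h1⟩ | h1) hu
    · rcases hp.dom h1 with rfl | h2
      · exact absurd ⟨hhM _ (hbΦ w).1, (hh _ (hbΦ w).1).2.1⟩ (hK _ hu w)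
      · exact absurd h2.2 (hK _ hu w)
    · exact ⟨(L.clo_K h1.1 βs).1 hu, h1.1⟩
  exact hs.2 (hRmem.2 ⟨βs, hβs, s, htrack βs hβs.1 s this.1, .refl⟩)

end Uncovered

/-! ### Popular pairs -/

section DeltaWeb

universe u
variable {V : Type u}

open Relation Cardinal Set

variable {κ : Cardinal.{u}} {W : Type u} [LinearOrder W] [WellFoundedLT W]
  {Γ : Web V} {N M : W → Set V}

/-- At every stage, `u` has an out-neighbour beyond the roof. -/
def Wait (Γ : Web V) (N : W → Set V) (u : V) : Prop :=
  ∀ c, ∃ x, Γ.E u x ∧ x ∉ (Γ.del (N c)).roof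

/-- Popular pairs: at stationarily many stages, an alternating walk leads from `u` to a vertex with an
edge to `v`. -/
def Pop (Γ : Web V) (N : W → Set V) (u v : V) : Prop :=
  Stat {c | Hit Γ (N c) (LG Γ N c) u v}

/-- The stages with the properties of a generic stage: all remaining sources are covered, only
waiting vertices have out-neighbours beyond the roof, and only popular pairs are joined by
alternating walks. -/
structure Good (Γ : Web V) (N : W → Set V) (c : W) : Prop where
  cov : ∀ h, ¬ Unc Γ (N c) (LG Γ N c) h
  nowait : ∀ u ∈ N c, ¬ Wait Γ N u → ∀ x, Γ.E u x → x ∈ (Γ.del (N c)).roof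
  pop : ∀ u ∈ N c, ∀ v ∈ N c, Hit Γ (N c) (LG Γ N c) u v → Pop Γ N u v

/-- The good stages contain a closed unbounded set and the least stage. -/
theorem Ladder.exists_good (L : Ladder κ Γ N M) (hW : RegOrder κ W) (hu : Unhindered Γ) :
    ∃ f : W → W, ∀ c, (ClosedPt f c ∨ ∀ b, c ≤ b) → Good Γ N c := by
  have h1 := L.large_covered hW hu
  have h2 := hW.diag (ι := V × V) (J := fun γ => M γ ×ˢ M γ)
    (fun α β h => prod_mono (L.M_mono h) (L.M_mono h)) (by
      intro α
      have := mk_setProd (M α) (M α)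
      rw [this]
      exact mul_lt_of_lt hW.reg.aleph0_le (L.card α) (L.card α))
    (fun p => {c | Hit Γ (N c) (LG Γ N c) p.1 p.2})
  have h3 : ∃ f : W → W, ∀ γ, ∀ u ∈ M γ, ¬ Wait Γ N u → ∃ e < f γ, ∀ x, Γ.E u x →
      x ∈ (Γ.del (N e)).roof := by
    have h4 : ∀ γ, ∃ b, ∀ u ∈ M γ, ¬ Wait Γ N u → ∃ e < b, ∀ x, Γ.E u x →
        x ∈ (Γ.del (N e)).roof := by
      intro γ
      have h5 : ∀ u : M γ, ∃ e, ¬ Wait Γ N u → ∀ x, Γ.E u x → x ∈ (Γ.del (N e)).roof := by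
        intro u
        by_cases hu : Wait Γ N u
        · exact ⟨γ, fun h => absurd hu h⟩
        · have h6 := hu
          rw [Wait] at h6
          push Not at h6
          obtain ⟨e, he⟩ := h6
          exact ⟨e, fun _ => he⟩
      choose e he using h5
      obtain ⟨b, hb⟩ := hW.bdd (L.card γ) e
      exact ⟨b, fun u hu hnu => ⟨e ⟨u, hu⟩, hb ⟨u, hu⟩, he ⟨u, hu⟩ hnu⟩⟩
    choose f hf using h4
    exact ⟨f, hf⟩
  obtain ⟨f3, hf3⟩ := h3
  obtain ⟨f, hf⟩ := (h1.inter h2).inter ⟨f3, fun c hc => hc⟩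
  refine ⟨f, fun c hc => ?_⟩
  rcases hc with hc | hc
  · obtain ⟨⟨g1, g2⟩, g3⟩ := hf c hc
    refine ⟨fun h hh => g1 ⟨h, hh⟩, ?_, ?_⟩
    · intro u hu hnu x hux
      obtain ⟨γ, hγ, huM⟩ := L.exists_mem hu
      obtain ⟨e, he, h4⟩ := hf3 γ u huM hnu
      exact L.roof_mono (he.trans (g3.2 γ hγ)).le (h4 x hux)
    · intro u hu v hv hh
      obtain ⟨γ, hγ, huM⟩ := L.exists_mem hu
      obtain ⟨δ, hδ, hvM⟩ := L.exists_mem hv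
      exact g2 (max γ δ) (max_lt hγ hδ) (u, v)
        ⟨L.M_mono (le_max_left _ _) huM, L.M_mono (le_max_right _ _) hvM⟩ hh
  · have hN : N c = ∅ := by
      refine eq_empty_of_forall_notMem fun x hx => ?_
      obtain ⟨β, hβ, -⟩ := L.exists_mem hx
      exact absurd (hc β) (not_le.2 hβ)
    refine ⟨?_, ?_, ?_⟩
    · rintro h ⟨h1, h2, h3⟩
      have hw := L.wave c
      have hd : Unhindered (Γ.del (N c)) := by
        rw [hN, Γ.del_empty]
        exact hu
      obtain ⟨s, hs, hr⟩ := hd _ _ _ hw h ⟨h1, h2⟩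
      exact h3 s hs hr
    · intro u hu
      rw [hN] at hu
      exact absurd hu (notMem_empty u)
    · intro u hu
      rw [hN] at hu
      exact absurd hu (notMem_empty u)

/-- The web of popular pairs between the stages `c` and `c'`, with the set `P` deleted. It leads from
the ends of the maximal wave of stage `c` to sinks and waiting vertices. -/
def Delta (Γ : Web V) (N : W → Set V) (c c' : W) (P : Set V) : Web V where
  E u v := Pop Γ N u v ∧ (u ∈ (Γ.del (N c)).roof → u ∈ (Γ.del (N c)).ess) ∧
    v ∉ (Γ.del (N c)).roof ∧ (u ∈ N c' ∧ v ∈ N c') ∧ u ∉ P ∧ v ∉ P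
  A := {s | s ∈ (Γ.del (N c)).ess ∧ s ∈ N c' ∧ s ∉ P}
  B := {b | (b ∈ Γ.B ∨ Wait Γ N b) ∧ b ∈ N c' ∧
    (b ∈ (Γ.del (N c)).roof → b ∈ (Γ.del (N c)).ess) ∧ b ∉ P}
  hA _ _ h h' := h.2.2.1 h'.1.1

/-- Alternating walks cannot leave the part properly below an earlier roof. -/
theorem Ladder.dip (L : Ladder κ Γ N M) {c γ : W} (hcγ : c ≤ γ) {z z' : V}
    (hs : Step (wE Γ (N γ)) (LF Γ N γ) z z') (hz : z ∈ (Γ.del (N c)).roof)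
    (hz' : z ∉ (Γ.del (N c)).ess) (hzN : z ∉ N γ) :
    z' ∈ (Γ.del (N c)).roof ∧ z' ∉ (Γ.del (N c)).ess := by
  have hzc : z ∉ N c := fun h => hzN (L.mono hcγ h)
  have hE : ∀ {w}, wE Γ (N γ) z w → w ∈ (Γ.del (N c)).roof := fun {w} h =>
    (L.wave c).sep z hz hz' w ⟨h.1, hzc, fun h' => h.2.2 (L.mono hcγ h')⟩
  have hF : ∀ {p w}, w ∈ (Γ.del (N c)).roof → LF Γ N γ p w →
      p ∈ (Γ.del (N c)).roof ∧ p ∉ (Γ.del (N c)).ess := by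
    intro p w hw h
    have := L.G_F (Ladder.F_G h) (fun h' => h.2 (L.mono hcγ h')) hw
    exact ⟨(L.wave c).inQ _ _ this, (L.wave c).halt _ _ this⟩
  cases hs with
  | free h h' =>
    refine ⟨hE h, fun hS => ?_⟩
    obtain ⟨x, hx, hxb⟩ := (L.wave c).reach z' hS
    rcases ReflTransGen.cases_tail hxb with h3 | ⟨p, -, h3⟩
    · exact Γ.hA _ _ h.1 (h3 ▸ hx.1)
    · exact h' p (L.F_mono hcγ h3 fun hp => h.2.2 ((L.clo (Ladder.F_G h3) γ).1 hp))
  | swap h h' => exact hF (hE h) h'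
  | back h => exact hF hz h

/-- A step of an alternating walk at a late stage `γ` is such a step at the earlier stage `c'`, if
the out-neighbours of its initial vertex lie under the roof of stage `c'`. -/
theorem Ladder.step_down (L : Ladder κ Γ N M) {c' γ : W} (h : c' ≤ γ) {z z' : V}
    (hs : Step (wE Γ (N γ)) (LF Γ N γ) z z')
    (hE : ∀ w, Γ.E z w → w ∉ N γ → w ∈ (Γ.del (N c')).roof)
    (hz : z ∉ N γ → z ∈ (Γ.del (N c')).roof) :
    Step (wE Γ (N c')) (LF Γ N c') z z' := by
  have hE' : ∀ {w}, wE Γ (N γ) z w → wE Γ (N c') z w := fun {w} h' =>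
    ⟨h'.1, hE w h'.1 h'.2.2, fun hw => h'.2.2 (L.mono h hw)⟩
  have hF : ∀ {p w}, w ∈ (Γ.del (N c')).roof → LF Γ N γ p w → LF Γ N c' p w := fun {p w} hw h' =>
    L.G_F (Ladder.F_G h') (fun h'' => h'.2 (L.mono h h'')) hw
  cases hs with
  | free h1 h2 =>
    exact .free (hE' h1) fun p hp =>
      h2 p (L.F_mono h hp fun hp' => h1.2.2 ((L.clo (Ladder.F_G hp) γ).1 hp'))
  | swap h1 h2 => exact .swap (hE' h1) (hF (hE' h1).2.1 h2)
  | back h1 => exact .back (hF (hz fun h2 => h1.2 ((L.clo (Ladder.F_G h1) γ).2 h2)) h1)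

/-- A hindrance of `Delta` would yield one of the unhindered web `(quoW Γ (N c)).del P`: each of its
edges is a popular pair and can be realised by rerouting the flow in the block of a stage of its own,
above `c'`. -/
theorem Ladder.delta_unhindered (L : Ladder κ Γ N M) (hW : RegOrder κ W) {c c' : W} (hcc : c ≤ c')
    (hg : Good Γ N c') {P : Set V} (hP : P ⊆ N c') (hu : Unhindered ((quoW Γ (N c)).del P)) :
    Unhindered (Delta Γ N c c' P) := by
  intro QH SH FH hH s0 hs0
  by_contra hmiss
  push Not at hmiss
  -- the flow of the hindrance, restricted to the tracks not starting at `s0`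
  let F2 : V → V → Prop := fun u v => FH u v ∧ From FH ((Delta Γ N c c' P).A \ {s0}) u
  have hF2c : Clean F2 ((Delta Γ N c c' P).A \ {s0}) := clean_clean
  have hF2bi : BiUnique F2 := hH.bi.mono fun u v h => h.1
  have hF2S : ∀ s ∈ SH, From F2 ((Delta Γ N c c' P).A \ {s0}) s := by
    intro s hs
    obtain ⟨a, ha, has⟩ := hH.reach s hs
    refine from_clean ⟨a, ⟨ha, ?_⟩, has⟩
    rintro rfl
    exact hmiss s hs has
  have hF2s0 : ∀ v, ¬ F2 s0 v := by
    rintro v ⟨-, a, ha, has⟩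
    rcases ReflTransGen.cases_tail has with h | ⟨p, -, h⟩
    · exact ha.2 h.symm
    · exact (Delta Γ N c c' P).hA _ _ (hH.le _ _ h) hs0
  have hs0S : s0 ∉ SH := fun h => hmiss s0 h .refl
  -- the vertices of `Delta` properly below the roof of the hindrance
  let Ho : Set V := {u | u ∈ QH ∧ u ∉ SH ∧ u ∈ N c' ∧
    (u ∈ (Γ.del (N c)).roof → u ∈ (Γ.del (N c)).ess) ∧ u ∉ P}
  have hHoB : ∀ u ∈ Ho, u ∉ Γ.B ∧ ¬ Wait Γ N u := by
    rintro u ⟨h1, h2, h3, h4, h5⟩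
    have := hH.sepB u h1 h2
    exact ⟨fun h => this ⟨Or.inl h, h3, h4, h5⟩, fun h => this ⟨Or.inr h, h3, h4, h5⟩⟩
  have hHoE : ∀ u ∈ Ho, ∀ x, Γ.E u x → x ∈ (Γ.del (N c')).roof := fun u hu =>
    hg.nowait u hu.2.2.1 (hHoB u hu).2
  have hF2Ho : ∀ u v, F2 u v → u ∈ Ho := by
    intro u v h
    have hE := hH.le u v h.1
    exact ⟨hH.inQ u v h.1, hH.halt u v h.1, hE.2.2.2.1.1, hE.2.1, hE.2.2.2.2.1⟩
  -- the vertices reached from `Ho` by alternating walks of stage `c'`: the roof of the new hindrance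
  -- consists of them, their out-neighbours and the sources
  let R : Set V := {y | (y ∈ (Γ.del (N c)).roof → y ∈ (Γ.del (N c)).ess) ∧
    ∃ u ∈ Ho, ReflTransGen (Step (wE Γ (N c')) (LF Γ N c')) u y}
  have hHoR : ∀ u ∈ Ho, u ∈ R := fun u hu => ⟨hu.2.2.2.1, u, hu, .refl⟩
  have hRcases : ∀ y ∈ R, y ∈ Ho ∨ y ∈ (Γ.del (N c')).roof ∧ y ∉ (Γ.del (N c')).ess ∧ y ∉ N c' := by
    rintro y ⟨-, u, hu, h⟩
    rcases ReflTransGen.cases_tail h with rfl | ⟨p, -, h⟩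
    · exact Or.inl hu
    · exact Or.inr (L.step_in h)
  have hRN : ∀ y ∈ R, y ∉ N c' → y ∈ (Γ.del (N c')).roof ∧ y ∉ (Γ.del (N c')).ess := by
    intro y hy hyN
    rcases hRcases y hy with h | h
    · exact absurd h.2.2.1 hyN
    · exact ⟨h.1, h.2.1⟩
  have hRE : ∀ y ∈ R, ∀ w, Γ.E y w → w ∉ N c' → w ∈ (Γ.del (N c')).roof := by
    intro y hy w hyw hw
    rcases hRcases y hy with h | h
    · exact hHoE y h w hyw
    · exact (L.wave c').sep y h.1 h.2.1 w ⟨hyw, h.2.2, hw⟩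
  have hRP : ∀ y ∈ R, y ∉ P := by
    intro y hy hyP
    rcases hRcases y hy with h | h
    · exact h.2.2.2.2 hyP
    · exact h.2.2 (hP hyP)
  have hRB : ∀ y ∈ R, y ∉ Γ.B := by
    intro y hy hyB
    rcases hRcases y hy with h | h
    · exact (hHoB y h).1 hyB
    · exact (L.wave c').sepB y h.1 h.2.1 ⟨hyB, h.2.2⟩
  -- the flow at stage `c'`, outside the roof at stage `c`
  let G : V → V → Prop := fun u v => LF Γ N c' u v ∧ v ∉ (Γ.del (N c)).roof
  have hGdom : ∀ u v, G u v → u ∈ (Γ.del (N c)).roof → u ∈ (Γ.del (N c)).ess := by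
    rintro u v ⟨h1, h2⟩ h3
    by_contra h4
    have h5 : u ∉ N c := fun h => h1.2 (L.mono hcc h)
    exact h2 ((L.wave c).sep u h3 h4 v ⟨L.G_le (Ladder.F_G h1), h5,
      fun h => h5 ((L.clo (Ladder.F_G h1) c).2 h)⟩)
  have hRpred : ∀ p y, y ∈ R → G p y → p ∈ R := by
    rintro p y ⟨-, u, hu, h⟩ hp
    exact ⟨hGdom p y hp, u, hu, h.tail (.back hp.1)⟩
  have hb : Base Γ.E G R ((Γ.del (N c)).ess \ P) := by
    refine ⟨(L.wave c').bi.mono fun u v h => h.1, fun u v h => L.G_le (Ladder.F_G h.1),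
      fun u v h h' => h.2 ((L.wave c).subS h'.1), ?_⟩
    rintro u v ⟨huv, huR⟩
    obtain ⟨a, ha, hau⟩ := L.F_clean c' u v huv.1
    clear huv
    have hstart : ∀ x ∈ R, x ∉ N c' → x ∈ (Γ.del (N c)).roof →
        From (fun u v => G u v ∧ u ∈ R) ((Γ.del (N c)).ess \ P) x := fun x hx hxN hxQ =>
      ⟨x, ⟨hx.1 hxQ, fun h => hxN (hP h)⟩, .refl⟩
    induction hau with
    | refl => exact hstart a huR ha.2 ((L.wave c).subA ⟨ha.1, fun h => ha.2 (L.mono hcc h)⟩)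
    | @tail b x _ hbx ih =>
      have hxN : x ∉ N c' := fun h => hbx.2 ((L.clo (Ladder.F_G hbx) c').2 h)
      by_cases hxQ : x ∈ (Γ.del (N c)).roof
      · exact hstart x huR hxN hxQ
      · have hbR := hRpred b x huR ⟨hbx, hxQ⟩
        exact (ih hbR).step ⟨⟨hbx, hxQ⟩, hbR⟩
  have hGN : ∀ u v, G u v → u ∉ N c' ∧ v ∉ N c' := fun u v h =>
    ⟨h.1.2, fun h' => h.1.2 ((L.clo (Ladder.F_G h.1) c').2 h')⟩
  -- distinct stages for the edges of the hindrance
  let ι : Type u := {e : V × V // F2 e.1 e.2}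
  have hιE : ∀ e : ι, (Delta Γ N c c' P).E e.1.1 e.1.2 := fun e => hH.le _ _ e.2.1
  obtain ⟨b, hbinj, hbD⟩ := hW.exists_injective (ι := ι)
    (D := fun e => {γ | Hit Γ (N γ) (LG Γ N γ) e.1.1 e.1.2 ∧ c' < γ}) (by
      have h1 : #ι ≤ #(N c' ×ˢ N c' : Set (V × V)) := by
        refine mk_le_mk_of_subset (s := {e : V × V | F2 e.1 e.2}) ?_
        intro e he
        exact (hH.le _ _ he.1).2.2.2.1
      refine h1.trans ?_
      have := mk_setProd (N c') (N c')
      rw [this]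
      exact (mul_lt_of_lt hW.reg.aleph0_le (L.card_N hW c') (L.card_N hW c')).le) (by
      intro e a
      obtain ⟨γ, hγ, hlt⟩ := Stat.exists_gt (hιE e).1 (max a c')
      exact ⟨γ, ⟨hγ, (le_max_right _ _).trans_lt hlt⟩, (le_max_left _ _).trans_lt hlt⟩)
  have hyex : ∀ e : ι, ∃ y F', Serves (bE Γ.E G R ((Γ.del (N c)).ess \ P) (M (b e) \ N (b e)) e.1.1)
      (insert e.1.1 (((Γ.del (N c)).ess \ P) ∩ (M (b e) \ N (b e))))
      (insert y (bT G R ((Γ.del (N c)).ess \ P) (M (b e) \ N (b e)))) F' ∧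
      (y = e.1.1 ∨ y ∈ R ∧ y ∈ M (b e) \ N (b e)) ∧ Γ.E y e.1.2 := by
    intro e
    obtain ⟨hhit, hlt⟩ := hbD e
    have hE := hιE e
    have huHo := hF2Ho _ _ e.2
    generalize b e = γ at *
    obtain ⟨⟨u, v⟩, huv⟩ := e
    simp only at *
    have huγ : u ∈ N γ := L.mono hlt.le hE.2.2.2.1.1
    obtain ⟨y, hyM, hwalk, hyv⟩ := (L.rung γ).hit u ((L.rung γ).sub huγ) v hhit
    -- the vertices of the walk
    have hdown : ∀ z, ReflTransGen (fun a b => Step (wE Γ (N γ)) (LF Γ N γ) a b ∧ b ∈ M γ) u z →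
        ReflTransGen (Step (wE Γ (N c')) (LF Γ N c')) u z ∧ (z = u ∨ z ∉ N γ) := by
      intro z hz
      induction hz with
      | refl => exact ⟨.refl, Or.inl rfl⟩
      | @tail z z' _ hs ih =>
        refine ⟨ih.1.tail (L.step_down hlt.le hs.1 ?_ ?_), Or.inr (L.step_in hs.1).2.2⟩
        · intro w hzw hw
          have hw' : w ∉ N c' := fun h => hw (L.mono hlt.le h)
          rcases ReflTransGen.cases_tail ih.1 with rfl | ⟨p, -, h⟩
          · exact hHoE _ huHo w hzw
          · obtain ⟨h1, h2, h3⟩ := L.step_in h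
            exact (L.wave c').sep z h1 h2 w ⟨hzw, h3, hw'⟩
        · intro hzN
          rcases ReflTransGen.cases_tail ih.1 with rfl | ⟨p, -, h⟩
          · exact absurd huγ hzN
          · exact (L.step_in h).1
    have havoid : ∀ z, z ∉ N γ →
        ReflTransGen (fun a b => Step (wE Γ (N γ)) (LF Γ N γ) a b ∧ b ∈ M γ) z y →
        z ∈ (Γ.del (N c)).roof → z ∈ (Γ.del (N c)).ess := by
      intro z hzN hzy hzQ
      by_contra hzS
      have : (y ∈ (Γ.del (N c)).roof ∧ y ∉ (Γ.del (N c)).ess) ∧ y ∉ N γ := by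
        refine rtg_inv (P := fun y => (y ∈ (Γ.del (N c)).roof ∧ y ∉ (Γ.del (N c)).ess) ∧ y ∉ N γ)
          hzy ⟨⟨hzQ, hzS⟩, hzN⟩ ?_
        intro a b hab ha
        exact ⟨L.dip (hcc.trans hlt.le) hab.1 ha.1.1 ha.1.2 ha.2, (L.step_in hab.1).2.2⟩
      refine hE.2.2.1 ((L.wave c).sep y this.1.1 this.1.2 v ⟨hyv, ?_, ?_⟩)
      · exact fun h => this.2 (L.mono (hcc.trans hlt.le) h)
      · exact fun h => hE.2.2.1 (Γ.subset_roof_del _ h)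
    have hR1 : ∀ z z', ReflTransGen (fun a b => Step (wE Γ (N γ)) (LF Γ N γ) a b ∧ b ∈ M γ) u z →
        ReflTransGen (fun a b => Step (wE Γ (N γ)) (LF Γ N γ) a b ∧ b ∈ M γ) z' y →
        Step (wE Γ (N γ)) (LF Γ N γ) z z' → z' ∈ M γ → z' ∈ R := by
      intro z z' hz hz' hs hM
      exact ⟨havoid z' (L.step_in hs).2.2 hz', u, huHo, (hdown z' (hz.tail ⟨hs, hM⟩)).1⟩
    have hGF : ∀ p b, p ∈ R → b ∈ (Γ.del (N γ)).roof → b ∉ N γ → (G p b ↔ LF Γ N γ p b) := by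
      intro p b hp hbQ hbN
      constructor
      · intro h
        exact L.F_mono hlt.le h.1 fun hpN => hbN ((L.clo (Ladder.F_G h.1) γ).1 hpN)
      · intro h
        have hpN : p ∉ N c' := fun h' => h.2 (L.mono hlt.le h')
        have h1 := hRN p hp hpN
        refine ⟨L.G_F' (Ladder.F_G h) hpN h1.1 h1.2, fun hbQc => ?_⟩
        have h2 := L.G_F (α := c) (Ladder.F_G h) (fun h' => hpN (L.mono hcc h')) hbQc
        exact (L.wave c).halt _ _ h2 (hp.1 ((L.wave c).inQ _ _ h2))
    obtain ⟨ht1, ht2⟩ := L.transfer (G := G) (R := R) (A0 := (Γ.del (N c)).ess \ P) (γ := γ)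
      (a0 := u) (y0 := u) (y := y) (fun _ _ h => Ladder.F_G h.1) hGF hwalk
      hR1 (by
        rintro z z' w hz hz' hs hzw h hwA
        have hcγ := hcc.trans hlt.le
        rcases h with ⟨rfl, h⟩ | h
        · obtain ⟨x, hx, hxb⟩ := (L.wave c).reach w hwA.1
          rcases ReflTransGen.cases_tail hxb with h3 | ⟨p, -, h3⟩
          · exact Γ.hA _ _ hzw.1 (h3 ▸ hx.1)
          · exact h p (L.F_mono hcγ h3 fun hp => hzw.2.2 ((L.clo (Ladder.F_G h3) γ).1 hp))
        · have h2 := L.G_F (α := c) (Ladder.F_G h) (fun h' => h.2 (L.mono hcγ h'))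
            ((L.wave c).subS hwA.1)
          exact (L.wave c).halt _ _ h2 (havoid z' h.2 hz' ((L.wave c).inQ _ _ h2)))
      (Or.inl rfl)
    have huK : u ∉ M γ \ N γ := fun h => h.2 huγ
    have hnoF : ∀ x, ReflTransGen (bF G R (M γ \ N γ)) u x → x = u := by
      intro x hx
      rcases ReflTransGen.cases_head hx with h | ⟨p, h, -⟩
      · exact h.symm
      · exact absurd h.2.2 huK
    obtain ⟨F', hF', -, -⟩ := hb.reroute (fun u v huv => L.clo_K (Ladder.F_G huv.1) γ)
      (Or.inl huK) (fun t ht hut => huK (hnoF t hut ▸ ht.1)) .refl ht1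
    exact ⟨y, F', hF', ht2, hyv⟩
  choose y F' hF' hy hyw using hyex
  have hNb : ∀ (e : ι) x, x ∈ N c' → x ∉ M (b e) \ N (b e) := fun e x hx h =>
    h.2 (L.mono (hbD e).2.le hx)
  have hp : Pieces Γ.E G R ((Γ.del (N c)).ess \ P) (fun e : ι => M (b e) \ N (b e))
      (fun e => e.1.1) y (fun e => e.1.2) F' := by
    refine ⟨fun e u v huv => L.clo_K (Ladder.F_G huv.1) _, hF', hy, hyw, ?_, ?_, ?_, ?_, ?_⟩
    · intro w w' x hx hx'
      exact hbinj (L.disj hx hx')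
    · intro e
      refine Or.inr ⟨fun j h => absurd h (hNb j _ (hιE e).2.2.2.1.1),
        fun v h => absurd (hιE e).2.2.2.1.1 (hGN _ _ h).1,
        ?_⟩
      intro j hj
      have h1 := e.2
      rw [hj] at h1
      exact Subtype.ext (Prod.ext hj (hF2bi.out h1 j.2))
    · intro e j hj
      have h1 := e.2
      rw [hj] at h1
      exact Subtype.ext (Prod.ext (hF2bi.inn h1 j.2) hj)
    · exact fun e p _ h => (hGN _ _ h).2 (hιE e).2.2.2.1.2
    · exact fun e j h => absurd h (hNb j _ (hιE e).2.2.2.1.2)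
  set FF := asm G R (fun e : ι => M (b e) \ N (b e)) y (fun e => e.1.2) F' with hFF
  have hdom : ∀ u v, FF u v → u ∈ R := by
    intro u v huv
    rcases hp.dom' huv with h1 | ⟨e, rfl⟩
    · exact h1
    · exact hHoR _ (hF2Ho _ _ e.2)
  have hrng : ∀ u v, FF u v → v ∉ (Γ.del (N c)).roof ∧ v ∉ P := by
    rintro u v (⟨e, h | ⟨-, rfl⟩⟩ | h)
    · have h1 := (hp.hF e).le u v h
      have h2 : v ∉ P := fun h2 => hNb e v (hP h2) h1.2.2.1
      refine ⟨fun hvQ => ?_, h2⟩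
      rcases h1.2.2.2.2 with h3 | ⟨p, hp, h3⟩
      · exact h1.2.2.2.1 ⟨h3.1 hvQ, h2⟩
      · exact h3.2 hvQ
    · exact ⟨(hιE e).2.2.1, (hιE e).2.2.2.2.2⟩
    · exact ⟨h.1.2, fun h2 => (hGN _ _ h.1).2 (hP h2)⟩
  have hmk : ∀ u v, u ∈ R → Γ.E u v → v ∉ (Γ.del (N c)).roof → v ∉ P →
      ((quoW Γ (N c)).del P).E u v := by
    intro u v hu huv hv hvP
    refine ⟨⟨⟨huv, fun h => ?_, fun h => hv (Γ.subset_roof_del _ h)⟩, hu.1, hv,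
      fun h => hv ((L.wave c).subS h)⟩, hRP u hu, hvP⟩
    exact not_ess_of_mem h (hu.1 (Γ.subset_roof_del _ h))
  let Q' : Set V := ((Γ.del (N c)).ess \ P) ∪ R ∪ {w | ∃ y ∈ R, ((quoW Γ (N c)).del P).E y w}
  have hnR : ∀ u ∈ Q', u ∉ Q' \ R → u ∈ R := by
    intro u h1 h2
    by_contra h3
    exact h2 ⟨h1, h3⟩
  have hfromH : ∀ x, From F2 ((Delta Γ N c c' P).A \ {s0}) x →
      From FF ((Γ.del (N c)).ess \ P) x := by
    rintro x ⟨a, ha, hax⟩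
    induction hax with
    | refl => exact ⟨a, ⟨ha.1.1, ha.1.2.2⟩, .refl⟩
    | @tail p x _ hpx ih =>
      have h1 : From FF ((Γ.del (N c)).ess \ P) (y ⟨(p, x), hpx⟩) := by
        rcases hp.reach_piece ⟨(p, x), hpx⟩ (Or.inl rfl) with h | h
        · exact h
        · obtain ⟨a', ha', h'⟩ := ih
          exact ⟨a', ha', h'.trans h⟩
      exact h1.step (Pieces.cross (⟨(p, x), hpx⟩ : ι))
  have hwave : IsWave ((quoW Γ (N c)).del P) Q' (Q' \ R) FF := by
    refine ⟨⟨fun x hx => Or.inl (Or.inl hx), fun x hx => hx.1, ?_, ?_, hp.bi hb.bi,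
      fun u v huv => hmk u v (hdom u v huv) (hp.le hb.le huv) (hrng u v huv).1 (hrng u v huv).2,
      fun u v huv => Or.inl (Or.inr (hdom u v huv)),
      fun u v huv h' => h'.2 (hdom u v huv)⟩, ?_⟩
    · intro u h1 h2 huB
      exact hRB u (hnR u h1 h2) huB.1.1.1
    · intro u h1 h2 v huv
      exact Or.inr ⟨u, hnR u h1 h2, huv⟩
    · rintro s ⟨h1, h2⟩
      by_cases hsA : s ∈ (Γ.del (N c)).ess \ P
      · exact ⟨s, hsA, .refl⟩
      have h3 : ∃ y ∈ R, ((quoW Γ (N c)).del P).E y s := by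
        rcases h1 with (h1 | h1) | h1
        · exact absurd h1 hsA
        · exact absurd h1 h2
        · exact h1
      obtain ⟨y1, hy1, hE⟩ := h3
      have hsQ : s ∉ (Γ.del (N c)).roof := hE.1.2.2.1
      have hy1s : Γ.E y1 s := hE.1.1.1
      obtain ⟨hy1Q, u, huHo, hwalk⟩ := hy1
      by_cases hsN : s ∈ N c'
      · have hpop : Pop Γ N u s := hg.pop u huHo.2.2.1 s hsN ⟨y1, hwalk, hy1s, hsN⟩
        have hsQH : s ∈ QH := hH.sep u huHo.1 huHo.2.1 s
          ⟨hpop, huHo.2.2.2.1, hsQ, ⟨huHo.2.2.1, hsN⟩, huHo.2.2.2.2, hE.2.2⟩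
        have hsSH : s ∈ SH := by
          by_contra h
          exact h2 (hHoR s ⟨hsQH, h, hsN, fun h => absurd h hsQ, hE.2.2⟩)
        exact hfromH s (hF2S s hsSH)
      · have hw : wE Γ (N c') y1 s :=
          ⟨hy1s, hRE y1 ⟨hy1Q, u, huHo, hwalk⟩ s hy1s hsN, hsN⟩
        have hserved : ∃ p ∈ R, G p s := by
          by_cases hpre : ∃ p, LF Γ N c' p s
          · obtain ⟨p, hp'⟩ := hpre
            exact ⟨p, ⟨hGdom p s ⟨hp', hsQ⟩, u, huHo, hwalk.tail (.swap hw hp')⟩, hp', hsQ⟩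
          · push Not at hpre
            exact absurd ⟨fun h => absurd h hsQ, u, huHo, hwalk.tail (.free hw hpre)⟩ h2
        by_cases hsK : ∃ e : ι, s ∈ M (b e) \ N (b e)
        · obtain ⟨e, he⟩ := hsK
          rcases hp.reach_piece e (Or.inr ⟨he, h2, Or.inr hserved⟩) with h | h
          · exact h
          · obtain ⟨a', ha', h'⟩ := hfromH _ (hF2c _ _ e.2)
            exact ⟨a', ha', h'.trans h⟩
        · push Not at hsK
          exact hp.reach_base hb hsK (Or.inr hserved)
  obtain ⟨s, hs, hreach⟩ := hu _ _ _ hwave s0 ⟨hs0.1, hs0.2.2⟩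
  have hs0Ho : s0 ∈ Ho := ⟨hH.subA hs0, hs0S, hs0.2.1, fun _ => hs0.1, hs0.2.2⟩
  rcases ReflTransGen.cases_head hreach with rfl | ⟨x, h | h, -⟩
  · exact hs.2 (hHoR _ hs0Ho)
  · obtain ⟨e, h⟩ := h
    rcases hp.dom h with h1 | h1
    · exact hF2s0 e.1.2 (h1 ▸ e.2)
    · exact hNb e s0 hs0.2.1 h1.2
  · exact (hGN _ _ h.1).1 hs0.2.1

end DeltaWeb

/-! ### Linkages and plans -/

section Assembly

universe u
variable {V : Type u}

open Relation Cardinal Set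

/-- All sources are led to sinks by one system of disjoint paths. -/
def Linkable (Γ : Web V) : Prop :=
  ∃ F : V → V → Prop, BiUnique F ∧ (∀ u v, F u v → Γ.E u v) ∧
    ∀ a ∈ Γ.A, ∃ b ∈ Γ.B, ReflTransGen F a b

theorem rtg_trim {F : V → V → Prop} {B : Set V} {a b : V} (h : ReflTransGen F a b) (hb : b ∈ B) :
    ∃ b ∈ B, ReflTransGen (fun u v => F u v ∧ u ∉ B) a b := by
  induction h using ReflTransGen.head_induction_on with
  | refl => exact ⟨b, hb, .refl⟩
  | @head x y hxy _ ih =>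
    by_cases hx : x ∈ B
    · exact ⟨x, hx, .refl⟩
    · obtain ⟨b', hb', h⟩ := ih
      exact ⟨b', hb', h.head ⟨hxy, hx⟩⟩

/-- A linkage may be chosen so that it halts at the sinks and every edge of it leads to a sink. -/
theorem Linkable.trim {Γ : Web V} (h : Linkable Γ) : ∃ F : V → V → Prop, BiUnique F ∧
    (∀ u v, F u v → Γ.E u v) ∧ (∀ a ∈ Γ.A, ∃ b ∈ Γ.B, ReflTransGen F a b) ∧
    (∀ u v, F u v → u ∉ Γ.B) ∧ ∀ u v, F u v → ∃ b ∈ Γ.B, ReflTransGen F v b := by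
  obtain ⟨F, hbi, hle, hr⟩ := h
  let F0 : V → V → Prop := fun u v => F u v ∧ u ∉ Γ.B
  have hr0 : ∀ a ∈ Γ.A, ∃ b ∈ Γ.B, ReflTransGen F0 a b := fun a ha =>
    let ⟨b, hb, h⟩ := hr a ha
    rtg_trim h hb
  have hlift : ∀ {x y}, From F0 Γ.A x → ReflTransGen F0 x y →
      ReflTransGen (fun u v => F0 u v ∧ From F0 Γ.A u) x y := by
    intro x y hx h
    exact (rtg_restrict' (P := fun z => From F0 Γ.A z) h hx
      fun u v huv hu => ⟨hu.step huv, huv, hu⟩).1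
  refine ⟨fun u v => F0 u v ∧ From F0 Γ.A u, hbi.mono fun u v h => h.1.1,
    fun u v h => hle u v h.1.1, ?_, fun u v h => h.1.2, ?_⟩
  · intro a ha
    obtain ⟨b, hb, h⟩ := hr0 a ha
    exact ⟨b, hb, hlift ⟨a, ha, .refl⟩ h⟩
  · rintro u v ⟨huv, hu⟩
    have hv := hu.step huv
    obtain ⟨a, ha, hau⟩ := hu
    obtain ⟨b, hb, hab⟩ := hr0 a ha
    have hbi0 : BiUnique F0 := hbi.mono fun u v h => h.1
    rcases hbi0.total' (hau.tail huv) hab with h | h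
    · exact ⟨b, hb, hlift hv h⟩
    · obtain rfl := eq_of_rtg_of_noSucc h fun p hp => hp.2 hb
      exact ⟨b, hb, .refl⟩

variable {κ : Cardinal.{u}} {W : Type u} [LinearOrder W] [WellFoundedLT W]
  {Γ : Web V} {N M : W → Set V}

/-- A closed unbounded set `C` of good stages, with its successor function `nx`. -/
structure Club (Γ : Web V) (N M : W → Set V) (C : Set W) (nx : W → W) : Prop where
  lt : ∀ c ∈ C, c < nx c
  mem : ∀ c ∈ C, nx c ∈ C
  le : ∀ c ∈ C, ∀ d ∈ C, c < d → nx c ≤ d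
  cover : ∀ e x, x ∈ M e → ∃ c ∈ C, x ∈ N (nx c) \ N c
  good : ∀ c ∈ C, Good Γ N c

theorem Ladder.exists_club (L : Ladder κ Γ N M) (hW : RegOrder κ W) (hu : Unhindered Γ) :
    ∃ C nx, Club Γ N M C nx ∧ Large C := by
  obtain ⟨f, hf⟩ := L.exists_good hW hu
  have hnx : ∀ c : W, ∃ d, (c < d ∧ ClosedPt f d) ∧ ∀ e < d, ¬ (c < e ∧ ClosedPt f e) := fun c =>
    exists_least _ (hW.exists_closedPt f c)
  choose nx hnx1 hnx2 using hnx
  have hle : ∀ c d, (ClosedPt f d ∨ ∀ b, d ≤ b) → c < d → nx c ≤ d := by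
    intro c d hd hcd
    by_contra h
    rcases hd with hd | hd
    · exact hnx2 c d (not_le.1 h) ⟨hcd, hd⟩
    · exact absurd (hd c) (not_le.2 hcd)
  refine ⟨{c | ClosedPt f c ∨ ∀ b, c ≤ b}, nx, ⟨fun c _ => (hnx1 c).1, fun c _ => Or.inl (hnx1 c).2,
    fun c _ d hd h => hle c d hd h, ?_, fun c hc => hf c hc⟩, ⟨f, fun c hc => Or.inl hc⟩⟩
  intro e x hx
  obtain ⟨e, hxe, hmin⟩ := exists_least (fun e => x ∈ M e) ⟨e, hx⟩
  obtain ⟨c, hce, hc, hmax⟩ := exists_greatest_closedPt (f := f) e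
  refine ⟨c, hc, L.M_sub ?_ hxe, fun h => ?_⟩
  · by_contra h
    exact absurd (hmax _ (not_lt.1 h) (Or.inl (hnx1 c).2)) (not_le.2 (hnx1 c).1)
  · obtain ⟨β, hβ, h⟩ := L.exists_mem h
    exact hmin β (hβ.trans_le hce) h

variable {C : Set W} {nx : W → W}

theorem Club.uniq (hC : Club Γ N M C nx) (L : Ladder κ Γ N M) {c d : W} (hc : c ∈ C) (hd : d ∈ C)
    {x : V} (h : x ∈ N (nx c) \ N c) (h' : x ∈ N (nx d) \ N d) : c = d := by
  rcases lt_trichotomy c d with hl | hl | hl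
  · exact absurd (L.mono (hC.le c hc d hd hl) h.1) h'.2
  · exact hl
  · exact absurd (L.mono (hC.le d hd c hc hl) h'.1) h.2

/-- The vertices properly below the roof of the stage at which they appear. -/
def RR (Γ : Web V) (N : W → Set V) (C : Set W) (nx : W → W) : Set V :=
  {x | ∃ c ∈ C, x ∈ N (nx c) \ N c ∧ x ∈ (Γ.del (N c)).roof ∧ x ∉ (Γ.del (N c)).ess}

theorem Club.mem_RR (hC : Club Γ N M C nx) (L : Ladder κ Γ N M) {c : W} (hc : c ∈ C) {x : V}
    (h : x ∈ N (nx c) \ N c) :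
    x ∈ RR Γ N C nx ↔ x ∈ (Γ.del (N c)).roof ∧ x ∉ (Γ.del (N c)).ess := by
  constructor
  · rintro ⟨d, hd, h1, h2⟩
    obtain rfl := hC.uniq L hc hd h h1
    exact h2
  · exact fun h' => ⟨c, hc, h, h'⟩

theorem Ladder.clo_D (L : Ladder κ Γ N M) {u v : V} (h : GG Γ N u v) (c d : W) :
    u ∈ N d \ N c ↔ v ∈ N d \ N c := by
  rw [mem_sdiff, mem_sdiff, L.clo h, L.clo h]

theorem Club.succ_RR (hC : Club Γ N M C nx) (L : Ladder κ Γ N M) {c : W} (hc : c ∈ C) {p t : V}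
    (hp : p ∈ RR Γ N C nx) (h : GG Γ N p t) (ht : t ∈ N (nx c) \ N c) :
    t ∈ (Γ.del (N c)).roof := by
  have hpD := (L.clo_D h c (nx c)).2 ht
  obtain ⟨h1, h2⟩ := (hC.mem_RR L hc hpD).1 hp
  exact (L.wave c).inQ' (L.G_F' h hpD.2 h1 h2)

theorem Club.base (hC : Club Γ N M C nx) (L : Ladder κ Γ N M) :
    Base Γ.E (GG Γ N) (RR Γ N C nx) Γ.A := by
  refine ⟨L.G_bi, fun u v => L.G_le, fun u v h => Γ.hA _ _ (L.G_le h), ?_⟩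
  rintro u v ⟨huv, c, hc, huD, huQ, huS⟩
  obtain ⟨a, ha, hau⟩ := L.G_clean u v huv
  refine ⟨a, ha, rtg_restrict (P := fun x => x ∈ N (nx c) \ N c ∧ x ∈ (Γ.del (N c)).roof)
    hau ⟨huD, huQ⟩ ?_⟩
  intro x y hxy hy
  have hx := (L.clo_D hxy c (nx c)).2 hy.1
  have hF := L.G_F hxy hx.2 hy.2
  have hQ := (L.wave c).inQ _ _ hF
  exact ⟨⟨hx, hQ⟩, hxy, c, hc, hx, hQ, (L.wave c).halt _ _ hF⟩

theorem Club.K_D (hC : Club Γ N M C nx) (L : Ladder κ Γ N M) {c : W} (hc : c ∈ C) :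
    M c \ N c ⊆ N (nx c) \ N c := fun _ h => ⟨L.M_sub (hC.lt c hc) h.1, h.2⟩

theorem Club.bT_ess (hC : Club Γ N M C nx) (L : Ladder κ Γ N M) {c : W} (hc : c ∈ C) {t : V}
    (ht : t ∈ bT (GG Γ N) (RR Γ N C nx) Γ.A (M c \ N c)) : t ∈ (Γ.del (N c)).ess := by
  obtain ⟨h1, h2, h3⟩ := ht
  have hD := hC.K_D L hc h1
  rw [hC.mem_RR L hc hD] at h2
  by_contra h
  refine h2 ⟨?_, h⟩
  rcases h3 with h3 | ⟨p, hp, h3⟩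
  · exact (L.wave c).subA ⟨h3, h1.2⟩
  · exact hC.succ_RR L hc hp h3 hD

/-- At a good stage, the flow leads every source to the ends of the maximal wave. -/
theorem Club.base_link (hC : Club Γ N M C nx) (L : Ladder κ Γ N M) {c : W} (hc : c ∈ C) {a : V}
    (haA : a ∈ Γ.A) (haD : a ∈ N (nx c) \ N c) :
    ∃ s ∈ (Γ.del (N c)).ess, s ∈ N (nx c) \ N c ∧
      ReflTransGen (fun u v => GG Γ N u v ∧ u ∈ RR Γ N C nx) a s := by
  have h := (hC.good c hc).cov a
  simp only [Unc, not_and, not_forall, not_not] at h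
  obtain ⟨s, hs, hr⟩ := h haA haD.2
  obtain ⟨h1, h2⟩ := rtg_restrict' (P := fun x => x ∈ N (nx c) \ N c)
    (G := fun u v => GG Γ N u v ∧ u ∈ RR Γ N C nx) hr haD (by
      intro x y hxy hx
      refine ⟨(L.clo_D (Ladder.F_G hxy) _ _).1 hx, Ladder.F_G hxy, ?_⟩
      exact (hC.mem_RR L hc hx).2 ⟨(L.wave c).inQ _ _ hxy, (L.wave c).halt _ _ hxy⟩)
  exact ⟨s, hs, h2, h1⟩

/-- The rerouting at stage `c` for a pair `(u, v)` joined by an alternating walk: the sources of the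
block and the vertex `u` are led to the old ends and to a further vertex `y` with an edge to `v`. -/
theorem Club.reroute (hC : Club Γ N M C nx) (L : Ladder κ Γ N M) {c : W} (hc : c ∈ C) {u v : V}
    (hu : u ∈ N c) (hhit : Hit Γ (N c) (LG Γ N c) u v) :
    ∃ y F', Serves (bE Γ.E (GG Γ N) (RR Γ N C nx) Γ.A (M c \ N c) u)
        (insert u (Γ.A ∩ (M c \ N c)))
        (insert y (bT (GG Γ N) (RR Γ N C nx) Γ.A (M c \ N c))) F' ∧
      (y = u ∨ y ∈ RR Γ N C nx ∧ y ∈ M c \ N c) ∧ Γ.E y v ∧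
      ∀ a ∈ insert u (Γ.A ∩ (M c \ N c)),
        ∃ t ∈ insert y (bT (GG Γ N) (RR Γ N C nx) Γ.A (M c \ N c)), ReflTransGen F' a t := by
  obtain ⟨y, hyM, hwalk, hyv⟩ := (L.rung c).hit u ((L.rung c).sub hu) v hhit
  obtain ⟨ht1, ht2⟩ := L.transfer (G := GG Γ N) (R := RR Γ N C nx) (A0 := Γ.A) (γ := c)
    (a0 := u) (y0 := u) (y := y) (fun _ _ h => h) (by
      intro p b hp hbQ hbN
      exact ⟨fun hG => L.G_F hG (fun hpN => hbN ((L.clo hG c).1 hpN)) hbQ, Ladder.F_G⟩) hwalk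
    (fun z z' _ _ hs hM => by
      obtain ⟨h1, h2, h3⟩ := L.step_in hs
      exact (hC.mem_RR L hc (hC.K_D L hc ⟨hM, h3⟩)).2 ⟨h1, h2⟩)
    (fun z z' w _ _ _ hw _ => Γ.hA _ _ hw.1) (Or.inl rfl)
  have huK : u ∉ M c \ N c := fun h => h.2 hu
  have hnoF : ∀ x, ReflTransGen (bF (GG Γ N) (RR Γ N C nx) (M c \ N c)) u x → x = u := by
    intro x hx
    rcases ReflTransGen.cases_head hx with h | ⟨p, h, -⟩
    · exact h.symm
    · exact absurd h.2.2 huK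
  obtain ⟨F', hF', -, hall⟩ := (hC.base L).reroute (fun u v huv => L.clo_K huv c)
    (Or.inl huK) (fun t ht hut => huK (hnoF t hut ▸ ht.1)) .refl ht1
  refine ⟨y, F', hF', ht2, hyv, hall ?_⟩
  rintro a ⟨haA, haK⟩ -
  obtain ⟨s, hs, hsD, h⟩ := hC.base_link L hc haA (hC.K_D L hc haK)
  obtain ⟨h1, h2⟩ := rtg_restrict' (P := fun x => x ∈ M c \ N c)
    (G := bF (GG Γ N) (RR Γ N C nx) (M c \ N c)) h haK (by
      intro x y hxy hx
      exact ⟨(L.clo_K hxy.1 c).1 hx, hxy.1, hxy.2, hx⟩)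
  refine ⟨s, ⟨h2, fun h' => ((hC.mem_RR L hc hsD).1 h').2 hs, ?_⟩, h1⟩
  rcases ReflTransGen.cases_tail h with rfl | ⟨p, -, h⟩
  · exact Or.inl haA
  · exact Or.inr ⟨p, h.2, h.1⟩

/-- A path `f` to a sink, in a set `P` of vertices whose deletion leaves the quotient of `Γ - X`
unhindered. It serves the vertex with property `tw` (waiting for the stage), or the vertex with
property `te` (an end of the maximal wave), if there is one; otherwise `P` may be empty. -/
structure Plan (Γ : Web V) (X m : Set V) (tw te : V → Prop) (P : Set V) (f : V → V → Prop) :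
    Prop where
  sub : P ⊆ m
  unh : Unhindered ((quoW Γ X).del P)
  bi : BiUnique f
  le : ∀ x y, f x y → Γ.E x y
  inP : ∀ x y, f x y → x ∈ P ∧ y ∈ P
  rng : ∀ x y, f x y → y ∉ (Γ.del X).roof
  dom : ∀ x y, f x y → x ∈ (Γ.del X).roof → x ∈ (Γ.del X).ess ∨ tw x
  ess : ∀ s ∈ P, s ∈ (Γ.del X).ess → ∃ b ∈ Γ.B, ReflTransGen f s b
  te : ∀ s, te s → s ∈ P
  tw : ∀ s, tw s → ∃ b ∈ Γ.B, ReflTransGen f s b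

theorem Ladder.exists_plan (L : Ladder κ Γ N M) (c : W) (tw te : V → Prop)
    (htw : ∀ u, tw u → u ∈ N c ∧ Wait Γ N u) (hte : ∀ s, te s → s ∈ M c ∧ s ∈ (Γ.del (N c)).ess)
    (htw1 : ∀ u u', tw u → tw u' → u = u') (hte1 : ∀ s s', te s → te s' → s = s')
    (hex : ∀ u s, tw u → ¬ te s) : ∃ P f, Plan Γ (N c) (M c) tw te P f := by
  by_cases h1 : ∃ u, tw u
  · obtain ⟨u, hu⟩ := h1
    obtain ⟨huN, hw⟩ := htw u hu
    obtain ⟨P, hPM, f, hf⟩ := (L.rung c).gpw u huN (hw c)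
    refine ⟨P, f, hPM, addSrc_del huN hf.mem ▸ hf.unh, hf.bi, ?_, fun x y h => (hf.le x y h).2,
      ?_, ?_, ?_, fun s hs => absurd hs (hex u s hu), ?_⟩
    · intro x y h
      rcases (hf.le x y h).1.1 with h | h
      · exact h.1.1
      · exact h.2.1
    · intro x y h
      rcases (hf.le x y h).1.1 with h | h
      · exact h.2.2.1
      · exact h.2.2
    · intro x y h hx
      rcases (hf.le x y h).1.1 with h | h
      · exact Or.inl (h.2.1 hx)
      · exact Or.inr (h.1 ▸ hu)
    · intro s hs hsS
      have := hf.src s hs (Or.inr hsS)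
      exact absurd (this ▸ hsS) (not_ess_of_mem huN)
    · intro s hs
      obtain ⟨b, hb, -, h⟩ := hf.reach
      exact ⟨b, hb.1.1, htw1 u s hu hs ▸ h⟩
  · by_cases h2 : ∃ s, te s
    · obtain ⟨s, hs⟩ := h2
      obtain ⟨hsM, hsS⟩ := hte s hs
      obtain ⟨P, hPM, f, hf⟩ := (L.rung c).gp s hsM hsS
      refine ⟨P, f, hPM, hf.unh, hf.bi, fun x y h => (hf.le x y h).1.1.1,
        fun x y h => (hf.le x y h).2, fun x y h => (hf.le x y h).1.2.2.1,
        fun x y h hx => Or.inl ((hf.le x y h).1.2.1 hx), ?_, ?_, fun u hu => absurd ⟨u, hu⟩ h1⟩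
      · intro s' hs' hsS'
        obtain rfl := hf.src s' hs' hsS'
        obtain ⟨b, hb, -, h⟩ := hf.reach
        exact ⟨b, hb.1.1, h⟩
      · intro s' hs'
        exact hte1 s s' hs hs' ▸ hf.mem
    · refine ⟨∅, fun _ _ => False, empty_subset _, ?_, ⟨fun h => h.elim, fun h => h.elim⟩,
        fun _ _ h => h.elim, fun _ _ h => h.elim, fun _ _ h => h.elim, fun _ _ h => h.elim,
        fun s hs => absurd hs (notMem_empty s), fun s hs => absurd ⟨s, hs⟩ h2,
        fun u hu => absurd ⟨u, hu⟩ h1⟩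
      rw [Web.del_empty]
      exact quoW_unhindered Γ (N c)

end Assembly

/-! ### The linkage of a ladder -/

section Main

universe u
variable {V : Type u}

open Relation Cardinal Set

variable {κ : Cardinal.{u}} {W : Type u} [LinearOrder W] [WellFoundedLT W]
  {Γ : Web V} {N M : W → Set V}

/-- Unhindered webs supported on fewer than `κ` vertices are linkable. -/
def LinkBelow (V : Type u) (κ : Cardinal.{u}) : Prop :=
  ∀ (Δ : Web V) (X : Set V), #X < κ → (∀ u v, Δ.E u v → u ∈ X ∧ v ∈ X) → Δ.A ⊆ X →
    Unhindered Δ → Linkable Δ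

/-- A ladder of an unhindered web yields a linkage, inside the union of the ladder, of all its sources.

A source in `N (nx c) \ N c` follows the flow to an end of the maximal wave of stage `c`. From there it
is led along popular pairs, by a linkage of the small web `Delta`, to a sink or to a waiting vertex.
Each popular pair is realised by rerouting at a stage of its own. Rerouting may instead lead the
starting vertex of the pair to a former end of the block; for such an end, and for each waiting
vertex, a path to a sink is laid at that stage. -/
theorem Ladder.main (L : Ladder κ Γ N M) (hW : RegOrder κ W) (hu : Unhindered Γ)
    (hT : LinkBelow V κ) :
    ∃ F : V → V → Prop, BiUnique F ∧ (∀ u v, F u v → Γ.E u v) ∧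
      (∀ u v, F u v → u ∈ ⋃ α, M α ∧ v ∈ ⋃ α, M α) ∧
      ∀ a ∈ Γ.A, a ∈ ⋃ α, M α → ∃ b ∈ Γ.B, ReflTransGen F a b := by
  obtain ⟨C, nx, hC, hCl⟩ := L.exists_club hW hu
  set U : Set V := ⋃ α, M α with hU
  have hUex : ∀ {x}, x ∈ U → ∃ e, x ∈ M e := fun h => mem_iUnion.1 h
  have hNU : ∀ {c x}, x ∈ N c → x ∈ U := fun {c x} h =>
    let ⟨β, _, h⟩ := L.exists_mem h
    mem_iUnion.2 ⟨β, h⟩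
  -- every popular pair and every waiting vertex gets a stage of its own
  let ιp : Type u := {p : V × V // Pop Γ N p.1 p.2 ∧ p.1 ∈ U ∧ p.2 ∈ U}
  let ιw : Type u := {u : V // Wait Γ N u ∧ u ∈ U}
  obtain ⟨b, hbinj, hbD⟩ := hW.exists_injective (ι := ιp ⊕ ιw)
    (D := Sum.elim
      (fun p => {c | c ∈ C ∧ p.1.1 ∈ N c ∧ Hit Γ (N c) (LG Γ N c) p.1.1 p.1.2})
      (fun u => {c | c ∈ C ∧ u.1 ∈ N c})) (by
      have h1 : #ιp ≤ κ := by
        refine (mk_le_mk_of_subset (t := U ×ˢ U) fun p hp => hp.2).trans ?_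
        rw [mk_setProd]
        exact (mul_le_mul' (L.card_all hW) (L.card_all hW)).trans
          (mul_eq_self hW.reg.aleph0_le).le
      have h2 : #ιw ≤ κ := (mk_le_mk_of_subset (t := U) fun p hp => hp.2).trans (L.card_all hW)
      rw [mk_sum, lift_id, lift_id]
      exact (add_le_add h1 h2).trans (add_eq_self hW.reg.aleph0_le).le) (by
      rintro (⟨⟨u, v⟩, hp, huU, hvU⟩ | ⟨u, hw, huU⟩) a
      · obtain ⟨e, he⟩ := hUex huU
        obtain ⟨c, ⟨h1, h2⟩, h3⟩ := (Stat.inter hp hCl).exists_gt (max a e)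
        exact ⟨c, ⟨h2, L.M_sub ((le_max_right _ _).trans_lt h3) he, h1⟩,
          (le_max_left _ _).trans_lt h3⟩
      · obtain ⟨e, he⟩ := hUex huU
        obtain ⟨c, h2, h3⟩ := (hW.stat_of_large hCl).exists_gt (max a e)
        exact ⟨c, ⟨h2, L.M_sub ((le_max_right _ _).trans_lt h3) he⟩,
          (le_max_left _ _).trans_lt h3⟩)
  have hbp : ∀ p : ιp, b (.inl p) ∈ C ∧ p.1.1 ∈ N (b (.inl p)) ∧
      Hit Γ (N (b (.inl p))) (LG Γ N (b (.inl p))) p.1.1 p.1.2 := fun p => hbD (.inl p)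
  have hbw : ∀ u : ιw, b (.inr u) ∈ C ∧ u.1 ∈ N (b (.inr u)) := fun u => hbD (.inr u)
  choose y F' hF' hy hyw hall using fun p : ιp =>
    hC.reroute L (hbp p).1 (hbp p).2.1 (hbp p).2.2
  -- the path laid at each stage
  let tw : W → V → Prop := fun c u => ∃ h : Wait Γ N u ∧ u ∈ U, b (.inr ⟨u, h⟩) = c
  let te : W → V → Prop := fun c s => ∃ p : ιp, b (.inl p) = c ∧
    s ∈ bT (GG Γ N) (RR Γ N C nx) Γ.A (M (b (.inl p)) \ N (b (.inl p))) ∧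
    ReflTransGen (F' p) p.1.1 s
  have hplan : ∀ c, ∃ P f, Plan Γ (N c) (M c) (tw c) (te c) P f := by
    intro c
    refine L.exists_plan c _ _ ?_ ?_ ?_ ?_ ?_
    · rintro u ⟨h, rfl⟩
      exact ⟨(hbw ⟨u, h⟩).2, h.1⟩
    · rintro s ⟨p, rfl, h1, -⟩
      exact ⟨h1.1.1, hC.bT_ess L (hbp p).1 h1⟩
    · rintro u u' ⟨h, h1⟩ ⟨h', h2⟩
      have := Sum.inr_injective (hbinj (h1.trans h2.symm))
      exact congrArg Subtype.val this
    · rintro s s' ⟨p, h1, h2, h3⟩ ⟨p', h1', h2', h3'⟩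
      obtain rfl : p = p' := by simpa using hbinj (h1.trans h1'.symm)
      rcases (hF' p).bi.total' h3 h3' with h | h
      · exact eq_of_rtg_of_noSucc h ((hF' p).halt s (Or.inr h2))
      · exact (eq_of_rtg_of_noSucc h ((hF' p).halt s' (Or.inr h2'))).symm
    · rintro u s ⟨h, h1⟩ ⟨p, h2, -⟩
      have := hbinj (h1.trans h2.symm)
      simp at this
  choose P f hP using hplan
  have hPN : ∀ c ∈ C, P c ⊆ N (nx c) := fun c hc => (hP c).sub.trans (L.M_sub (hC.lt c hc))
  -- the linkages of popular pairs
  have hq : ∀ c, ∃ q : V → V → Prop, c ∈ C → BiUnique q ∧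
      (∀ u v, q u v → (Delta Γ N c (nx c) (P c)).E u v) ∧
      (∀ a ∈ (Delta Γ N c (nx c) (P c)).A, ∃ b ∈ (Delta Γ N c (nx c) (P c)).B,
        ReflTransGen q a b) ∧
      (∀ u v, q u v → u ∉ (Delta Γ N c (nx c) (P c)).B) ∧
      ∀ u v, q u v → ∃ b ∈ (Delta Γ N c (nx c) (P c)).B, ReflTransGen q v b := by
    intro c
    by_cases hc : c ∈ C
    · have hd := L.delta_unhindered hW (hC.lt c hc).le (hC.good _ (hC.mem c hc)) (hPN c hc)
        (hP c).unh
      obtain ⟨q, hq⟩ := (hT (Delta Γ N c (nx c) (P c)) (N (nx c)) (L.card_N hW _) (fun u v h => h.2.2.2.1)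
        (fun a ha => ha.2.1) hd).trim
      exact ⟨q, fun _ => hq⟩
    · exact ⟨fun _ _ => False, fun h => absurd h hc⟩
  choose q hq using hq
  have hqbi := fun c hc => (hq c hc).1
  have hqE := fun c hc => (hq c hc).2.1
  have hqA := fun c hc => (hq c hc).2.2.1
  have hqB := fun c hc => (hq c hc).2.2.2.1
  have hqr := fun c hc => (hq c hc).2.2.2.2
  have hqD1 : ∀ c ∈ C, ∀ u v, q c u v → u ∈ N (nx c) \ N c := fun c hc u v h =>
    have hE := hqE c hc u v h
    ⟨hE.2.2.2.1.1, fun h' => not_ess_of_mem h' (hE.2.1 (Γ.subset_roof_del _ h'))⟩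
  have hqD2 : ∀ c ∈ C, ∀ u v, q c u v → v ∈ N (nx c) \ N c := fun c hc u v h =>
    have hE := hqE c hc u v h
    ⟨hE.2.2.2.1.2, fun h' => hE.2.2.1 (Γ.subset_roof_del _ h')⟩
  have hqR1 : ∀ c ∈ C, ∀ u v, q c u v → u ∉ RR Γ N C nx := fun c hc u v h h' =>
    have h1 := (hC.mem_RR L hc (hqD1 c hc u v h)).1 h'
    h1.2 ((hqE c hc u v h).2.1 h1.1)
  have hqR2 : ∀ c ∈ C, ∀ u v, q c u v → v ∉ RR Γ N C nx := fun c hc u v h h' =>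
    (hqE c hc u v h).2.2.1 ((hC.mem_RR L hc (hqD2 c hc u v h)).1 h').1
  -- the executed reroutings
  let ι : Type u := {p : ιp // ∃ c ∈ C, q c p.1.1 p.1.2}
  let K : ι → Set V := fun i => M (b (.inl i.1)) \ N (b (.inl i.1))
  have hp : Pieces Γ.E (GG Γ N) (RR Γ N C nx) Γ.A K (fun i => i.1.1.1) (fun i => y i.1)
      (fun i => i.1.1.2) (fun i => F' i.1) := by
    refine ⟨fun i u v h => L.clo_K h _, fun i => hF' i.1, fun i => hy i.1, fun i => hyw i.1,
      ?_, ?_, ?_, ?_, ?_⟩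
    · intro i j x hi hj
      have := hbinj (L.disj hi hj)
      exact Subtype.ext (by simpa using this)
    · rintro ⟨⟨⟨u, v⟩, hp⟩, c, hc, h⟩
      refine Or.inr ⟨fun j _ => hqR1 c hc u v h, fun _ _ => hqR1 c hc u v h, ?_⟩
      rintro ⟨⟨⟨u', v'⟩, hp'⟩, c', hc', h'⟩ (heq : u = u')
      subst heq
      obtain rfl := hC.uniq L hc hc' (hqD1 c hc _ _ h) (hqD1 c' hc' _ _ h')
      obtain rfl : v = v' := (hqbi c hc).out h h'
      rfl
    · rintro ⟨⟨⟨u, v⟩, hp⟩, c, hc, h⟩ ⟨⟨⟨u', v'⟩, hp'⟩, c', hc', h'⟩ (heq : v = v')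
      subst heq
      obtain rfl := hC.uniq L hc hc' (hqD2 c hc _ _ h) (hqD2 c' hc' _ _ h')
      obtain rfl : u = u' := (hqbi c hc).inn h h'
      rfl
    · rintro ⟨⟨⟨u, v⟩, hp⟩, c, hc, h⟩ p hpR hG
      exact (hqE c hc u v h).2.2.1 (hC.succ_RR L hc hpR hG (hqD2 c hc u v h))
    · rintro ⟨⟨⟨u, v⟩, hp⟩, c, hc, h⟩ j -
      exact hqR2 c hc u v h
  set FA := asm (GG Γ N) (RR Γ N C nx) K (fun i => y i.1) (fun i => i.1.1.2)
    (fun i => F' i.1) with hFA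
  -- the vertices where a linkage of popular pairs may stop without having reached a sink
  let live : V → Prop := fun u => ∃ j ∈ C, u ∈ N (nx j) \ N j ∧
    (u ∈ (Γ.del (N j)).roof → u ∈ (Γ.del (N j)).ess) ∧ u ∉ P j ∧ ∀ v, ¬ q j u v
  -- the laid paths, without the first edge of those starting at a vertex that is not live
  let FB : V → V → Prop := fun u v => ∃ c ∈ C, f c u v ∧
    ((u ∈ (Γ.del (N c)).roof → u ∈ (Γ.del (N c)).ess) ∨ tw c u ∧ live u)
  have hPD : ∀ c ∈ C, ∀ x ∈ P c, (x ∈ (Γ.del (N c)).roof → x ∈ (Γ.del (N c)).ess) →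
      x ∈ N (nx c) \ N c := fun c hc x hx h =>
    ⟨hPN c hc hx, fun h' => not_ess_of_mem h' (h (Γ.subset_roof_del _ h'))⟩
  have hfD : ∀ c ∈ C, ∀ u v, f c u v → v ∈ N (nx c) \ N c := fun c hc u v h =>
    hPD c hc v ((hP c).inP u v h).2 fun h' => absurd h' ((hP c).rng u v h)
  have hFAdom : ∀ u v, FA u v → u ∈ RR Γ N C nx ∨ ∃ c ∈ C, ∃ w, q c u w := by
    intro u v h
    rcases hp.dom' h with h | ⟨i, rfl⟩
    · exact Or.inl h
    · obtain ⟨c, hc, h⟩ := i.2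
      exact Or.inr ⟨c, hc, _, h⟩
  have hFArng : ∀ u v, FA u v → ∀ c ∈ C, v ∈ N (nx c) \ N c → v ∈ (Γ.del (N c)).roof ∨ v ∉ P c := by
    rintro u v (⟨i, h | ⟨-, rfl⟩⟩ | h) c hc hv
    · rcases (hp.rng h).2 with h | ⟨p, hpR, h⟩
      · exact Or.inl ((hC.mem_RR L hc hv).1 h).1
      · exact Or.inl (hC.succ_RR L hc hpR h hv)
    · obtain ⟨c', hc', h⟩ := i.2
      obtain rfl := hC.uniq L hc hc' hv (hqD2 c' hc' _ _ h)
      exact Or.inr (hqE c hc _ _ h).2.2.2.2.2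
    · exact Or.inl (hC.succ_RR L hc h.2.1 h.1 hv)
  have hdisj1 : ∀ u v v', FA u v → FB u v' → False := by
    rintro u v v' h ⟨c, hc, hf, h'⟩
    rcases h' with h' | ⟨-, j, hj, hjD, hjS, hjP, hjq⟩
    · have huD := hPD c hc u ((hP c).inP _ _ hf).1 h'
      rcases hFAdom u v h with h1 | ⟨d, hd, w, h1⟩
      · have h2 := (hC.mem_RR L hc huD).1 h1
        exact h2.2 (h' h2.1)
      · obtain rfl := hC.uniq L hc hd huD (hqD1 d hd _ _ h1)
        exact (hqE c hc _ _ h1).2.2.2.2.1 ((hP c).inP _ _ hf).1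
    · rcases hFAdom u v h with h1 | ⟨d, hd, w, h1⟩
      · have h2 := (hC.mem_RR L hj hjD).1 h1
        exact h2.2 (hjS h2.1)
      · obtain rfl := hC.uniq L hj hd hjD (hqD1 d hd _ _ h1)
        exact hjq w h1
  have hdisj2 : ∀ u u' v, FA u v → FB u' v → False := by
    rintro u u' v h ⟨c, hc, hf, -⟩
    rcases hFArng u v h c hc (hfD c hc _ _ hf) with h1 | h1
    · exact (hP c).rng _ _ hf h1
    · exact h1 ((hP c).inP _ _ hf).2
  have hFBdom : ∀ c ∈ C, ∀ c' ∈ C, ∀ u v v', f c u v → f c' u v' →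
      ((u ∈ (Γ.del (N c)).roof → u ∈ (Γ.del (N c)).ess) ∨ tw c u ∧ live u) →
      ((u ∈ (Γ.del (N c')).roof → u ∈ (Γ.del (N c')).ess) ∨ tw c' u ∧ live u) → c = c' := by
    have key : ∀ c ∈ C, ∀ u v, f c u v → (u ∈ (Γ.del (N c)).roof → u ∈ (Γ.del (N c)).ess) →
        ¬ live u := by
      rintro c hc u v h h1 ⟨j, hj, hjD, -, hjP, -⟩
      obtain rfl := hC.uniq L hc hj (hPD c hc u ((hP c).inP _ _ h).1 h1) hjD
      exact hjP ((hP c).inP _ _ h).1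
    rintro c hc c' hc' u v v' h h' (h1 | ⟨⟨h1, h2⟩, h3⟩) (h1' | ⟨⟨h1', h2'⟩, h3'⟩)
    · exact hC.uniq L hc hc' (hPD c hc u ((hP c).inP _ _ h).1 h1)
        (hPD c' hc' u ((hP c').inP _ _ h').1 h1')
    · exact absurd h3' (key c hc u v h h1)
    · exact absurd h3 (key c' hc' u v' h' h1')
    · exact h2.symm.trans h2'
  have hFAbi : BiUnique FA := hp.bi L.G_bi
  have hFbi : BiUnique fun u v => FA u v ∨ FB u v := by
    constructor
    · rintro u v v' (h | h) (h' | h')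
      · exact hFAbi.out h h'
      · exact (hdisj1 _ _ _ h h').elim
      · exact (hdisj1 _ _ _ h' h).elim
      · obtain ⟨c, hc, h1, h2⟩ := h
        obtain ⟨c', hc', h1', h2'⟩ := h'
        obtain rfl := hFBdom c hc c' hc' _ _ _ h1 h1' h2 h2'
        exact (hP c).bi.out h1 h1'
    · rintro u u' v (h | h) (h' | h')
      · exact hFAbi.inn h h'
      · exact (hdisj2 _ _ _ h h').elim
      · exact (hdisj2 _ _ _ h' h).elim
      · obtain ⟨c, hc, h1, h2⟩ := h
        obtain ⟨c', hc', h1', h2'⟩ := h'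
        obtain rfl := hC.uniq L hc hc' (hfD c hc _ _ h1) (hfD c' hc' _ _ h1')
        exact (hP c).bi.inn h1 h1'
  have hMU : ∀ {c x}, x ∈ M c → x ∈ U := fun {c x} h => mem_iUnion.2 ⟨c, h⟩
  have hKU : ∀ (i : ι) x, x ∈ K i → x ∈ U := fun i x h => hMU h.1
  have hRU : ∀ x, x ∈ RR Γ N C nx → x ∈ U := fun x ⟨c, _, h, _⟩ => hNU h.1
  refine ⟨fun u v => FA u v ∨ FB u v, hFbi, ?_, ?_, ?_⟩
  · rintro u v (h | ⟨c, hc, h, -⟩)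
    · exact hp.le (fun u v => L.G_le) h
    · exact (hP c).le _ _ h
  · rintro u v (h | ⟨c, hc, h, -⟩)
    · refine ⟨?_, ?_⟩
      · rcases hFAdom u v h with h | ⟨c, hc, w, h⟩
        · exact hRU u h
        · exact hNU (hqD1 c hc _ _ h).1
      · rcases h with ⟨i, h | ⟨-, rfl⟩⟩ | h
        · exact hKU i v (hp.rng h).1
        · exact i.1.2.2.2
        · obtain ⟨e, he⟩ := hUex (hRU u h.2.1)
          exact hMU ((L.clo_M' h.1 e).1 he)
    · exact ⟨hMU ((hP c).sub ((hP c).inP _ _ h).1), hMU ((hP c).sub ((hP c).inP _ _ h).2)⟩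
  -- reaching the sinks
  have hpath : ∀ c ∈ C, ∀ s x, ReflTransGen (f c) s x → s ∈ P c →
      (s ∈ (Γ.del (N c)).roof → s ∈ (Γ.del (N c)).ess) →
      ReflTransGen (fun u v => FA u v ∨ FB u v) s x := by
    intro c hc s x h hsP hsS
    refine (rtg_restrict' (P := fun x => x ∈ P c ∧ (x ∈ (Γ.del (N c)).roof →
      x ∈ (Γ.del (N c)).ess)) h ⟨hsP, hsS⟩ ?_).1
    intro u v huv hu
    exact ⟨⟨((hP c).inP _ _ huv).2, fun h' => absurd h' ((hP c).rng _ _ huv)⟩,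
      Or.inr ⟨c, hc, huv, Or.inl hu.2⟩⟩
  have hlive : ∀ u, Wait Γ N u → live u → ∃ b ∈ Γ.B,
      ReflTransGen (fun u v => FA u v ∨ FB u v) u b := by
    intro u hw hl
    have huU : u ∈ U := by
      obtain ⟨j, -, h, -⟩ := hl
      exact hNU h.1
    have htw : tw (b (.inr ⟨u, hw, huU⟩)) u := ⟨⟨hw, huU⟩, rfl⟩
    have hc := (hbw ⟨u, hw, huU⟩).1
    generalize b (.inr ⟨u, hw, huU⟩) = c at *
    obtain ⟨x, hx, h⟩ := (hP c).tw u htw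
    refine ⟨x, hx, ?_⟩
    rcases ReflTransGen.cases_head h with rfl | ⟨z, huz, hzx⟩
    · exact .refl
    · refine ReflTransGen.head (Or.inr ⟨c, hc, huz, Or.inr ⟨htw, hl⟩⟩) ?_
      exact hpath c hc z x hzx ((hP c).inP _ _ huz).2 fun h' => absurd h' ((hP c).rng _ _ huz)
  have hess : ∀ c ∈ C, ∀ s ∈ P c, s ∈ (Γ.del (N c)).ess → ∃ b ∈ Γ.B,
      ReflTransGen (fun u v => FA u v ∨ FB u v) s b := by
    intro c hc s hs hsS
    obtain ⟨x, hx, h⟩ := (hP c).ess s hs hsS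
    exact ⟨x, hx, hpath c hc s x h hs fun _ => hsS⟩
  have hF'F : ∀ (i : ι) {u v}, ReflTransGen (F' i.1) u v →
      ReflTransGen (fun u v => FA u v ∨ FB u v) u v := fun i u v h =>
    ReflTransGen.mono (fun u v h => Or.inl (Or.inl ⟨i, Or.inl h⟩)) _ _ h
  have hcross : ∀ i : ι, FA (y i.1) i.1.1.2 := fun i => Or.inl ⟨i, Or.inr ⟨rfl, rfl⟩⟩
  have hqreach : ∀ c ∈ C, ∀ x b, ReflTransGen (q c) x b → b ∈ (Delta Γ N c (nx c) (P c)).B →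
      ∃ b ∈ Γ.B, ReflTransGen (fun u v => FA u v ∨ FB u v) x b := by
    intro c hc x b' h hb'
    induction h using ReflTransGen.head_induction_on with
    | refl =>
      rcases hb'.1 with h | h
      · exact ⟨_, h, .refl⟩
      · refine hlive _ h ⟨c, hc, ⟨hb'.2.1, fun h' => ?_⟩, hb'.2.2.1, hb'.2.2.2,
          fun v hv => hqB c hc _ _ hv hb'⟩
        exact not_ess_of_mem h' (hb'.2.2.1 (Γ.subset_roof_del _ h'))
    | @head u v huv _ ih =>
      let p : ιp := ⟨(u, v), (hqE c hc _ _ huv).1, hNU (hqD1 c hc _ _ huv).1,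
        hNU (hqD2 c hc _ _ huv).1⟩
      let i : ι := ⟨p, c, hc, huv⟩
      obtain ⟨t, ht, hut⟩ := hall p u (Or.inl rfl)
      rcases ht with rfl | ht
      · obtain ⟨x, hx, h⟩ := ih
        exact ⟨x, hx, (hF'F i hut).trans (h.head (Or.inl (hcross i)))⟩
      · obtain ⟨x, hx, h⟩ := hess _ (hbp p).1 t ((hP _).te t ⟨p, rfl, ht, hut⟩)
          (hC.bT_ess L (hbp p).1 ht)
        exact ⟨x, hx, (hF'F i hut).trans h⟩
  have hessreach : ∀ c ∈ C, ∀ s ∈ (Γ.del (N c)).ess, s ∈ N (nx c) → ∃ b ∈ Γ.B,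
      ReflTransGen (fun u v => FA u v ∨ FB u v) s b := by
    intro c hc s hs hsN
    by_cases hsP : s ∈ P c
    · exact hess c hc s hsP hs
    · obtain ⟨x, hx, h⟩ := hqA c hc s ⟨hs, hsN, hsP⟩
      exact hqreach c hc s x h hx
  intro a haA haU
  obtain ⟨e, he⟩ := hUex haU
  obtain ⟨c, hc, haD⟩ := hC.cover e a he
  by_cases hK : ∃ i, a ∈ K i
  · obtain ⟨i, hi⟩ := hK
    obtain ⟨t, ht, hat⟩ := hall i.1 a (Or.inr ⟨haA, hi⟩)
    rcases ht with rfl | ht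
    · obtain ⟨j, hj, hq'⟩ := i.2
      obtain ⟨b', hb', hr⟩ := hqr j hj _ _ hq'
      obtain ⟨x, hx, h⟩ := hqreach j hj _ _ hr hb'
      exact ⟨x, hx, (hF'F i hat).trans (h.head (Or.inl (hcross i)))⟩
    · obtain ⟨x, hx, h⟩ := hessreach _ (hbp i.1).1 t (hC.bT_ess L (hbp i.1).1 ht)
        (hC.K_D L (hbp i.1).1 ht.1).1
      exact ⟨x, hx, (hF'F i hat).trans h⟩
  · push Not at hK
    obtain ⟨s, hs, hsD, h⟩ := hC.base_link L hc haA haD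
    obtain ⟨x, hx, h'⟩ := hessreach c hc s hs hsD.1
    refine ⟨x, hx, ReflTransGen.trans ?_ h'⟩
    refine (rtg_restrict' (P := fun x => ∀ i, x ∉ K i) h hK ?_).1
    intro u v huv hu
    exact ⟨fun i hi => hu i ((L.clo_K huv.1 _).2 hi), Or.inl (Or.inr ⟨huv.1, huv.2, hu⟩)⟩

end Main

/-! ### Safe parts of a web -/

section Safe

universe u
variable {V : Type u}

open Relation Cardinal Set

/-- A safe part of the web `Γ`: the flow `R` links the sources in `N` to sinks inside `N`, and the
wave `(Q, S, L)` of `Γ - N` starts at all the remaining sources and has an unhindered quotient. -/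
structure Safe (Γ : Web V) (N : Set V) (R : V → V → Prop) (Q S : Set V) (L : V → V → Prop) :
    Prop where
  bi : BiUnique R
  le : ∀ u v, R u v → Γ.E u v
  inN : ∀ u v, R u v → u ∈ N ∧ v ∈ N
  link : ∀ a ∈ Γ.A, a ∈ N → ∃ b ∈ Γ.B, ReflTransGen R a b
  wave : IsWave (Γ.del N) Q S L
  sub : N ⊆ Q
  cov : ∀ a ∈ Γ.A, a ∉ N → ∃ s ∈ S, ReflTransGen L a s
  unh : Unhindered ((Γ.del N).quo Q S)

theorem countable_succ {F : V → V → Prop} (hF : BiUnique F) (x : V) :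
    {y | ReflTransGen F x y}.Countable := by
  let T : ℕ → Set V := fun n => Nat.rec {x} (fun _ t => {v | ∃ u ∈ t, F u v}) n
  have hT : ∀ n, (T n).Subsingleton := by
    intro n
    induction n with
    | zero => exact subsingleton_singleton
    | succ n ih =>
      rintro v ⟨p, hp, hv⟩ w ⟨q, hq, hw⟩
      obtain rfl := ih hp hq
      exact hF.out hv hw
  have hsub : {y | ReflTransGen F x y} ⊆ ⋃ n, T n := by
    intro y (hy : ReflTransGen F x y)
    induction hy with
    | refl => exact mem_iUnion.2 ⟨0, rfl⟩
    | @tail b c _ hbc ih =>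
      obtain ⟨n, hn⟩ := mem_iUnion.1 ih
      exact mem_iUnion.2 ⟨n + 1, b, hn, hbc⟩
  exact (countable_iUnion fun n => (hT n).countable).mono hsub

theorem countable_pred {F : V → V → Prop} (hF : BiUnique F) (x : V) :
    {y | ReflTransGen F y x}.Countable :=
  (countable_succ (F := fun u v => F v u) ⟨fun h h' => hF.inn h h', fun h h' => hF.out h h'⟩ x).mono
    fun _ h => ReflTransGen.swap _ _ h

theorem Unhindered.safe_empty {Γ : Web V} (h : Unhindered Γ) :
    Safe Γ ∅ (fun _ _ => False) Γ.roof Γ.ess Γ.flow where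
  bi := ⟨fun h => h.elim, fun h => h.elim⟩
  le _ _ h := h.elim
  inN _ _ h := h.elim
  link _ _ h := h.elim
  wave := by rw [Γ.del_empty]; exact Γ.max_wave
  sub := empty_subset _
  cov a ha _ := h _ _ _ Γ.max_wave a ha
  unh := by rw [Γ.del_empty]; exact (loose_quo_max Γ).unhindered

theorem Safe.clean {Γ : Web V} {N Q S : Set V} {R L : V → V → Prop} (h : Safe Γ N R Q S L) :
    ∃ L', Safe Γ N R Q S L' ∧ Clean L' (Γ.A \ N) :=
  ⟨_, { h with
    wave := h.wave.clean
    cov := fun a ha haN => by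
      obtain ⟨s, hs, h1⟩ := h.cov a ha haN
      refine ⟨s, hs, ?_⟩
      exact (rtg_restrict' (P := fun x => From L (Γ.del N).A x) h1 ⟨a, ⟨ha, haN⟩, .refl⟩
        fun u v huv hu => ⟨hu.step huv, huv, hu⟩).1 }, clean_clean⟩

variable {κ : Cardinal.{u}}

/-- Every small set is contained in a small safe part. -/
theorem exists_safe (hκ : κ.IsRegular) (h0 : ℵ₀ < κ) (hT : LinkBelow V κ) {Γ : Web V}
    (hu : Unhindered Γ) {X : Set V} (hX : #X < κ) :
    ∃ N R Q S L, Safe Γ N R Q S L ∧ X ⊆ N ∧ #N < κ := by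
  have hW := regOrder_ord hκ h0
  obtain ⟨N, M, L, hseed⟩ := hW.exists_ladder Γ (fun _ => X) fun _ => hX
  obtain ⟨F, hbi, hle, hin, hlink⟩ := L.main hW hu hT
  obtain ⟨C, nx, hC, f, hf⟩ := L.exists_club hW hu
  -- a bound on the stages where the `F`-neighbours of `M γ` appear
  have hg : ∀ γ, ∃ e, ∀ x ∈ M γ, ∀ y, F x y ∨ F y x → y ∈ M e := by
    intro γ
    have h1 : ∀ y, (∃ x, F x y ∨ F y x) → ∃ e, y ∈ M e := by
      rintro y ⟨x, h | h⟩
      · exact mem_iUnion.1 (hin _ _ h).2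
      · exact mem_iUnion.1 (hin _ _ h).1
    have h2 : ∀ x, ∃ e, ∀ y, F x y ∨ F y x → y ∈ M e := by
      intro x
      have ha : ∃ e, ∀ y, F x y → y ∈ M e := by
        by_cases h : ∃ y, F x y
        · obtain ⟨y, hy⟩ := h
          obtain ⟨e, he⟩ := h1 y ⟨x, Or.inl hy⟩
          exact ⟨e, fun z hz => hbi.out hy hz ▸ he⟩
        · push Not at h
          exact ⟨γ, fun y hy => absurd hy (h y)⟩
      have hb : ∃ e, ∀ y, F y x → y ∈ M e := by
        by_cases h : ∃ y, F y x
        · obtain ⟨y, hy⟩ := h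
          obtain ⟨e, he⟩ := h1 y ⟨x, Or.inr hy⟩
          exact ⟨e, fun z hz => hbi.inn hy hz ▸ he⟩
        · push Not at h
          exact ⟨γ, fun y hy => absurd hy (h y)⟩
      obtain ⟨e1, h1⟩ := ha
      obtain ⟨e2, h2⟩ := hb
      refine ⟨max e1 e2, ?_⟩
      rintro y (hy | hy)
      · exact L.M_mono (le_max_left _ _) (h1 y hy)
      · exact L.M_mono (le_max_right _ _) (h2 y hy)
    choose e he using h2
    obtain ⟨b, hb⟩ := hW.bdd (L.card γ) fun x => e x.1
    exact ⟨b, fun x hx y hy => L.M_mono (hb ⟨x, hx⟩).le (he x y hy)⟩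
  choose g hg using hg
  obtain ⟨b, -⟩ := hW.bdd (ι := PEmpty) (by simpa using hW.reg.pos) (fun x => x.elim)
  obtain ⟨c, hbc, hc1, hc2⟩ := hW.exists_closedPt (fun γ => max (f γ) (g γ)) b
  have hcC : c ∈ C := hf c ⟨hc1, fun γ h => (max_lt_iff.1 (hc2 γ h)).1⟩
  have hclo : ∀ x ∈ N c, ∀ y, F x y ∨ F y x → y ∈ N c := by
    intro x hx y hy
    obtain ⟨β, hβ, hx⟩ := L.exists_mem hx
    exact L.M_sub (max_lt_iff.1 (hc2 β hβ)).2 (hg β x hx y hy)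
  refine ⟨N c, fun u v => F u v ∧ u ∈ N c, (Γ.del (N c)).roof, (Γ.del (N c)).ess, LF Γ N c,
    ⟨hbi.mono fun _ _ h => h.1, fun u v h => hle u v h.1,
      fun u v h => ⟨h.2, hclo u h.2 v (Or.inl h.1)⟩, ?_, L.wave c, Γ.subset_roof_del _, ?_,
      quoW_unhindered Γ (N c)⟩, (hseed b).trans (L.M_sub hbc), L.card_N hW c⟩
  · intro a ha haN
    obtain ⟨β, -, hx⟩ := L.exists_mem haN
    obtain ⟨b, hb, h⟩ := hlink a ha (mem_iUnion.2 ⟨β, hx⟩)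
    exact ⟨b, hb, (rtg_restrict' (P := fun x => x ∈ N c) h haN fun u v huv hu =>
      ⟨hclo u hu v (Or.inl huv), huv, hu⟩).1⟩
  · intro a ha haN
    have := (hC.good c hcC).cov a
    rw [Unc] at this
    push Not at this
    exact this ha haN

/-- An unhindered web whose sources lie in a set of `κ` vertices is linkable, if `κ` is regular and
uncountable. -/
theorem linkable_of_regular (hκ : κ.IsRegular) (h0 : ℵ₀ < κ) (hT : LinkBelow V κ) {Γ : Web V}
    {X : Set V} (hX : #X = κ) (hA : Γ.A ⊆ X) (hu : Unhindered Γ) : Linkable Γ := by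
  have hW := regOrder_ord hκ h0
  obtain ⟨e⟩ := Cardinal.eq.1 (hW.card.trans hX.symm)
  obtain ⟨N, M, L, hseed⟩ := hW.exists_ladder Γ (fun w => {(e w).1}) fun _ => by
    rw [mk_singleton]
    exact one_lt_aleph0.trans h0
  obtain ⟨F, hbi, hle, hin, hlink⟩ := L.main hW hu hT
  refine ⟨F, hbi, hle, fun a ha => hlink a ha (mem_iUnion.2 ⟨e.symm ⟨a, hA ha⟩, hseed _ ?_⟩)⟩
  simp

/-- Successive quotients are a single quotient. -/
theorem quo_quo {Γ : Web V} {Q S Q' S' : Set V} {F' : V → V → Prop} (hS : S ⊆ Q)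
    (h' : IsWave (Γ.quo Q S) Q' S' F') : (Γ.quo Q S).quo Q' S' = Γ.quo (Q ∪ Q') S' := by
  have h1 : ∀ s ∈ S', s ∈ Q → s ∈ S := by
    intro s hs hsQ
    obtain ⟨a, ha, h⟩ := h'.reach s hs
    rcases ReflTransGen.cases_tail h with rfl | ⟨d, _, hd⟩
    · exact ha
    · exact absurd hsQ (h'.le _ _ hd).2.2.1
  have h2 : S ⊆ Q' := h'.subA
  ext u v
  · simp only [Web.quo, mem_union]
    constructor
    · rintro ⟨⟨a, b, c, d⟩, e, f, g⟩
      refine ⟨a, ?_, ?_, g⟩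
      · rintro (h | h)
        · exact e (h2 (b h))
        · exact e h
      · rintro (h | h)
        · exact c h
        · exact f h
    · rintro ⟨a, b, c, d⟩
      push Not at c
      exact ⟨⟨a, fun h => h1 u (b (Or.inl h)) h, c.1, fun h => c.1 (hS h)⟩,
        fun h => b (Or.inr h), c.2, d⟩
  · rfl
  · simp only [Web.quo, mem_union, mem_sdiff]
    have := h1 u
    have := @h2 u
    tauto

end Safe

/-! ### Enlarging safe parts -/

section Extend

universe u
variable {V : Type u}

open Relation Cardinal Set

variable {κ : Cardinal.{u}}

/-- A small safe part can be enlarged so as to contain a given small set. -/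
theorem Safe.extend (hκ : κ.IsRegular) (h0 : ℵ₀ < κ) (hT : LinkBelow V κ) {Γ : Web V}
    {N Q S : Set V} {R L : V → V → Prop} (hs : Safe Γ N R Q S L) (hN : #N < κ)
    {Z : Set V} (hZ : #Z < κ) :
    ∃ N' R' Q' S' L', Safe Γ N' R' Q' S' L' ∧ #N' < κ ∧ N ⊆ N' ∧ Z ⊆ N' ∧
      ∀ u v, R u v → R' u v := by
  have hW := regOrder_ord hκ h0
  obtain ⟨L, hs, hcl⟩ := hs.clean
  have hw := hs.wave
  have hZ' : #(Z ∪ ⋃ z ∈ Z, {s | ReflTransGen L z s} : Set V) < κ :=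
    hW.card_union hZ (hW.card_biUnion hZ fun z _ => hW.card_countable (countable_succ hw.bi z))
  obtain ⟨N₂, R₂, Q₂, S₂, L₂, h2, hZN, hN₂⟩ := exists_safe hκ h0 hT hs.unh hZ'
  have hZ1 : ∀ z ∈ Z, z ∈ N₂ := fun z hz => hZN (Or.inl hz)
  have hZ2 : ∀ z ∈ Z, ∀ s, ReflTransGen L z s → s ∈ N₂ := fun z hz s h =>
    hZN (Or.inr (mem_biUnion hz h))
  -- a track of `L` has only one end
  have hhalt : ∀ s ∈ S, ∀ x, ReflTransGen L s x → s = x := fun s hs' x h =>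
    eq_of_rtg_of_noSucc h fun p hp => hw.halt _ _ hp hs'
  have huniq : ∀ x, ∀ s ∈ S, ∀ t ∈ S, ReflTransGen L x s → ReflTransGen L x t → s = t := by
    intro x s hs' t ht h h'
    rcases hw.bi.total' h h' with h | h
    · exact hhalt s hs' t h
    · exact (hhalt t ht s h).symm
  have hend : ∀ x, From L (Γ.A \ N) x → ∃ s ∈ S, ReflTransGen L x s := by
    rintro x ⟨a, ha, h⟩
    obtain ⟨s, hs', h'⟩ := hs.cov a ha.1 ha.2
    refine ⟨s, hs', ?_⟩
    rcases hw.bi.total' h h' with h | h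
    · exact h
    · rw [hhalt s hs' x h]
  -- the tracks with end in the new safe part
  let Tr : Set V := {x | ∃ s ∈ S, s ∈ N₂ ∧ ReflTransGen L x s}
  let Y : Set V := {x | x ∈ N₂ ∧ (x ∈ Q → x ∈ S)}
  let N' : Set V := N ∪ Y ∪ Z ∪ Tr
  have hTrQ : ∀ x ∈ Tr, x ∈ Q := by
    rintro x ⟨s, hs', -, h⟩
    rcases ReflTransGen.cases_head h with rfl | ⟨d, hd, _⟩
    · exact hw.subS hs'
    · exact hw.inQ _ _ hd
  have hTrS : ∀ x ∈ Tr, x ∈ S → x ∈ N₂ := by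
    rintro x ⟨s, hs', hsN, h⟩ hx
    rw [hhalt x hx s h]
    exact hsN
  have hout : ∀ x ∈ Q, (∃ s ∈ S, ReflTransGen L x s) → x ∉ N → x ∉ Tr → x ∉ N' := by
    rintro x hxQ ⟨s, hs', h⟩ hxN hxT (((h1 | h1) | h1) | h1)
    · exact hxN h1
    · exact hxT ⟨x, h1.2 hxQ, h1.1, .refl⟩
    · exact hxT ⟨s, hs', hZ2 x h1 s h, h⟩
    · exact hxT h1
  have hout2 : ∀ x, (x ∈ Q → x ∈ S) → x ∉ N → x ∉ N₂ → x ∉ N' := by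
    rintro x hxS hxN hx2 (((h1 | h1) | h1) | h1)
    · exact hxN h1
    · exact hx2 h1.1
    · exact hx2 (hZ1 x h1)
    · exact hx2 (hTrS x h1 (hxS (hTrQ x h1)))
  have hin2 : ∀ x, x ∉ N' → x ∉ N ∧ x ∉ Y ∧ x ∉ Tr := fun x hx =>
    ⟨fun h => hx (Or.inl (Or.inl (Or.inl h))), fun h => hx (Or.inl (Or.inl (Or.inr h))),
      fun h => hx (Or.inr h)⟩
  have hTrback : ∀ u v, L u v → (u ∈ Tr ↔ v ∈ Tr) := by
    intro u v huv
    constructor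
    · rintro ⟨s, hs', hsN, h⟩
      rcases ReflTransGen.cases_head h with rfl | ⟨d, hd, h⟩
      · exact absurd hs' (hw.halt _ _ huv)
      · rw [hw.bi.out huv hd]
        exact ⟨s, hs', hsN, h⟩
    · rintro ⟨s, hs', hsN, h⟩
      exact ⟨s, hs', hsN, h.head huv⟩
  have hSN' : ∀ s ∈ S, s ∈ N' → s ∈ N₂ := by
    intro s hs' hsN
    by_contra hc
    refine hout s (hw.subS hs') ⟨s, hs', .refl⟩ ?_ (fun h => hc (hTrS s h hs')) hsN
    obtain ⟨a, ha, h⟩ := hw.reach s hs'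
    rcases ReflTransGen.cases_tail h with rfl | ⟨d, _, hd⟩
    · exact ha.2
    · exact (hw.le _ _ hd).2.2
  have hAQ : ∀ a ∈ Γ.A, a ∉ N → a ∈ Q := fun a h h' => hw.subA ⟨h, h'⟩
  -- the old wave, after the deletion
  have hw1 : IsWave (Γ.del N') (Q ∪ N') (S \ N₂) (fun u v => L u v ∧ v ∉ Tr) := by
    refine ⟨⟨fun a ha => Or.inl (hAQ a ha.1 (hin2 a ha.2).1), fun s h => Or.inl (hw.subS h.1), ?_,
      ?_, hw.bi.mono fun _ _ h => h.1, ?_, fun u v h => Or.inl (hw.inQ _ _ h.1),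
      fun u v h h' => hw.halt _ _ h.1 h'.1⟩, ?_⟩
    · rintro u hu huS ⟨huB, huN⟩
      have huQ := hu.resolve_right huN
      refine hw.sepB u huQ (fun h => huS ⟨h, fun h2 => ?_⟩) ⟨huB, (hin2 u huN).1⟩
      exact (hin2 u huN).2.1 ⟨h2, fun _ => h⟩
    · rintro u hu huS v ⟨huv, huN, hvN⟩
      have huQ := hu.resolve_right huN
      refine Or.inl (hw.sep u huQ (fun h => huS ⟨h, fun h2 => ?_⟩) v
        ⟨huv, (hin2 u huN).1, (hin2 v hvN).1⟩)
      exact (hin2 u huN).2.1 ⟨h2, fun _ => h⟩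
    · rintro u v ⟨huv, hv⟩
      have h1 := hw.le _ _ huv
      have h3 : From L (Γ.A \ N) u := hcl u v huv
      exact ⟨h1.1, hout u (hw.inQ _ _ huv) (hend u h3) h1.2.1 fun h => hv ((hTrback u v huv).1 h),
        hout v (hw.inQ' huv) (hend v (h3.step huv)) h1.2.2 hv⟩
    · rintro s ⟨hs', hs2⟩
      obtain ⟨a, ha, h⟩ := hw.reach s hs'
      have h1 : s ∉ Tr := fun h => hs2 (hTrS s h hs')
      have h3 : a ∉ Tr := fun ht => h1 (rtg_inv h ht fun u v huv => (hTrback u v huv).1)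
      refine ⟨a, ⟨ha.1, hout a (hAQ a ha.1 ha.2) ⟨s, hs', h⟩ ha.2 h3⟩, ?_⟩
      exact rtg_restrict (P := fun x => x ∉ Tr) h h1 fun u v huv hv =>
        ⟨fun h => hv ((hTrback u v huv).1 h), huv, hv⟩
  have heq : (Γ.del N').quo (Q ∪ N') (S \ N₂) = ((Γ.del N).quo Q S).del N₂ := by
    have hk : ∀ x, x ∉ N' → (x ∈ Q → x ∈ S) → x ∉ N₂ := fun x hx hxS h =>
      (hin2 x hx).2.1 ⟨h, hxS⟩
    ext u v
    · simp only [Web.quo, Web.del, mem_union, mem_sdiff]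
      constructor
      · rintro ⟨⟨a, b, c⟩, d, e, f⟩
        push Not at e
        have huS : u ∈ Q → u ∈ S := fun h => (d (Or.inl h)).1
        exact ⟨⟨⟨a, (hin2 u b).1, (hin2 v c).1⟩, huS, e.1, fun h => e.1 (hw.subS h)⟩, hk u b huS,
          hk v c fun h => absurd h e.1⟩
      · rintro ⟨⟨⟨a, b, c⟩, d, e, f⟩, g, h⟩
        have h1 := hout2 u d b g
        have h3 := hout2 v (fun h => absurd h e) c h
        exact ⟨⟨a, h1, h3⟩, fun h => ⟨d (h.resolve_right h1), g⟩, fun h => h.elim e h3,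
          fun h => f h.1⟩
    · rfl
    · simp only [Web.quo, Web.del, mem_union, mem_sdiff]
      constructor
      · rintro ⟨⟨a, b⟩, c⟩
        have huS : u ∈ Q → u ∈ S := fun h => by
          by_contra h1
          exact c ⟨Or.inl h, fun h2 => h1 h2.1⟩
        exact ⟨⟨⟨a, (hin2 u b).1⟩, fun h => h.2 (huS h.1)⟩, hk u b huS⟩
      · rintro ⟨⟨⟨a, b⟩, c⟩, d⟩
        have huS : u ∈ Q → u ∈ S := fun h => by
          by_contra h1
          exact c ⟨h, h1⟩
        have h1 := hout2 u huS b d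
        exact ⟨⟨a, h1⟩, fun h => h.2 ⟨huS (h.1.resolve_right h1), d⟩⟩
  have hw2 : IsWave ((Γ.del N').quo (Q ∪ N') (S \ N₂)) Q₂ S₂ L₂ := heq ▸ h2.wave
  have hcard : #N' < κ := by
    refine hW.card_union (hW.card_union (hW.card_union hN ?_) hZ) ?_
    · exact (mk_le_mk_of_subset fun x hx => hx.1).trans_lt hN₂
    · refine (mk_le_mk_of_subset (t := ⋃ s ∈ N₂, {x | ReflTransGen L x s}) ?_).trans_lt
        (hW.card_biUnion hN₂ fun s _ => hW.card_countable (countable_pred hw.bi s))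
      rintro x ⟨s, hs', hsN, h⟩
      exact mem_biUnion hsN h
  refine ⟨N', fun u v => R u v ∨ R₂ u v ∨ (L u v ∧ v ∈ Tr), _, _, _,
    ⟨⟨?_, ?_⟩, ?_, ?_, ?_, hw1.quo_wave hw2, ?_, ?_, ?_⟩, hcard,
    fun x hx => Or.inl (Or.inl (Or.inl hx)), fun x hx => Or.inl (Or.inr hx), fun _ _ h => Or.inl h⟩
  · rintro u v w (h | h | h) (h' | h' | h')
    · exact hs.bi.out h h'
    · exact absurd (hs.inN _ _ h).1 (h2.le _ _ h').1.2.1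
    · exact absurd (hs.inN _ _ h).1 (hw.le _ _ h'.1).2.1
    · exact absurd (hs.inN _ _ h').1 (h2.le _ _ h).1.2.1
    · exact h2.bi.out h h'
    · exact absurd ((h2.le _ _ h).2.1 (hw.inQ _ _ h'.1)) (hw.halt _ _ h'.1)
    · exact absurd (hs.inN _ _ h').1 (hw.le _ _ h.1).2.1
    · exact absurd ((h2.le _ _ h').2.1 (hw.inQ _ _ h.1)) (hw.halt _ _ h.1)
    · exact hw.bi.out h.1 h'.1
  · rintro u v w (h | h | h) (h' | h' | h')
    · exact hs.bi.inn h h'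
    · exact absurd (hs.inN _ _ h).2 (h2.le _ _ h').1.2.2
    · exact absurd (hs.inN _ _ h).2 (hw.le _ _ h'.1).2.2
    · exact absurd (hs.inN _ _ h').2 (h2.le _ _ h).1.2.2
    · exact h2.bi.inn h h'
    · exact absurd (hw.inQ' h'.1) (h2.le _ _ h).2.2.1
    · exact absurd (hs.inN _ _ h').2 (hw.le _ _ h.1).2.2
    · exact absurd (hw.inQ' h.1) (h2.le _ _ h').2.2.1
    · exact hw.bi.inn h.1 h'.1
  · rintro u v (h | h | h)
    · exact hs.le _ _ h
    · exact (h2.le _ _ h).1.1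
    · exact (hw.le _ _ h.1).1
  · rintro u v (h | h | h)
    · exact ⟨Or.inl (Or.inl (Or.inl (hs.inN _ _ h).1)), Or.inl (Or.inl (Or.inl (hs.inN _ _ h).2))⟩
    · exact ⟨Or.inl (Or.inl (Or.inr ⟨(h2.inN _ _ h).1, (h2.le _ _ h).2.1⟩)),
        Or.inl (Or.inl (Or.inr ⟨(h2.inN _ _ h).2, fun h' => absurd h' (h2.le _ _ h).2.2.1⟩))⟩
    · exact ⟨Or.inr ((hTrback u v h.1).2 h.2), Or.inr h.2⟩
  · intro a ha haN'
    by_cases haN : a ∈ N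
    · obtain ⟨b, hb, h⟩ := hs.link a ha haN
      exact ⟨b, hb, ReflTransGen.mono (fun _ _ h => Or.inl h) _ _ h⟩
    · have haT : a ∈ Tr := by
        by_contra hc
        exact hout a (hAQ a ha haN) (hs.cov a ha haN) haN hc haN'
      obtain ⟨s, hs', hsN, h⟩ := id haT
      obtain ⟨b, hb, h'⟩ := h2.link s hs' hsN
      refine ⟨b, hb.1.1, ReflTransGen.trans (b := s) ?_
        (ReflTransGen.mono (fun _ _ h => Or.inr (Or.inl h)) _ _ h')⟩
      exact (rtg_restrict' (P := fun x => x ∈ Tr) h haT fun u v huv hu =>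
        ⟨(hTrback u v huv).1 hu, Or.inr (Or.inr ⟨huv, (hTrback u v huv).1 hu⟩)⟩).1
  · exact fun x hx => Or.inl (Or.inr hx)
  · intro a ha haN'
    have h1 := hin2 a haN'
    obtain ⟨s, hs', h⟩ := hs.cov a ha h1.1
    have hs2 : s ∉ N₂ := fun h3 => h1.2.2 ⟨s, hs', h3, h⟩
    obtain ⟨t, ht, h'⟩ := h2.cov s hs' hs2
    refine ⟨t, ht, ReflTransGen.trans (b := s) ?_ (ReflTransGen.mono (fun _ _ h => Or.inr h) _ _ h')⟩
    exact (rtg_restrict' (P := fun x => x ∉ Tr) h h1.2.2 fun u v huv hu =>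
      ⟨fun h => hu ((hTrback u v huv).2 h), Or.inl ⟨huv, fun h => hu ((hTrback u v huv).2 h)⟩⟩).1
  · rw [← quo_quo hw1.subS hw2, heq]
    exact h2.unh

end Extend

/-! ### Singular and countable cardinals -/

section Singular

universe u
variable {V : Type u}

open Relation Cardinal Set

variable {κ : Cardinal.{u}}

/-- A set of singular cardinality is a union of few smaller sets. -/
theorem exists_cover (hκ : κ.IsSingular) {X : Set V} (hX : #X = κ) :
    ∃ (I : Type u) (_ : LinearOrder I) (_ : WellFoundedLT I) (U : I → Set V),
      #I < κ ∧ (∀ i, #(U i) < κ) ∧ X ⊆ ⋃ i, U i := by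
  obtain ⟨s, hs, hcard⟩ := Order.exists_cof_eq (α := κ.ord.ToType)
  rw [Ordinal.cof_toType] at hcard
  obtain ⟨e⟩ := Cardinal.eq.1 ((mk_ord_toType κ).trans hX.symm)
  refine ⟨s, inferInstance, inferInstance, fun i => (fun w => (e w).1) '' Iic i.1, ?_, ?_, ?_⟩
  · rw [hcard]
    exact hκ.cof_ord_lt
  · intro i
    refine mk_image_le.trans_lt ?_
    have h : Iic i.1 ⊆ insert i.1 (Iio i.1) := by
      intro x hx
      rcases eq_or_lt_of_le (show x ≤ i.1 from hx) with h | h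
      · exact Or.inl h
      · exact Or.inr h
    have h1 : #(Iio i.1) < κ := by simpa using mk_Iio_lt i.1
    exact ((mk_le_mk_of_subset h).trans mk_insert_le).trans_lt
      (add_lt_of_lt hκ.aleph0_le h1 (one_lt_aleph0.trans_le hκ.aleph0_le))
  · intro x hx
    obtain ⟨i, hi, h⟩ := hs (e.symm ⟨x, hx⟩)
    exact mem_iUnion.2 ⟨⟨i, hi⟩, e.symm ⟨x, hx⟩, h, by simp⟩

/-- An unhindered web whose sources lie in a set of `κ` vertices is linkable, if `κ` is singular and
uncountable: countably many rounds of enlarging small safe parts, one for each member of a short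
sequence of small sets covering the sources, make the resulting linkages compatible. -/
theorem linkable_of_singular (hκ : κ.IsSingular) (h0 : ℵ₀ < κ) (hT : LinkBelow V κ) {Γ : Web V}
    {X : Set V} (hX : #X = κ) (hA : Γ.A ⊆ X) (hu : Unhindered Γ) : Linkable Γ := by
  obtain ⟨I, _, _, U, hI, hU, hXU⟩ := exists_cover hκ hX
  let μ : I → Cardinal.{u} := fun i => max (max (#I) #(U i)) ℵ₀
  have hμ : ∀ i, μ i < κ := fun i => max_lt (max_lt hI (hU i)) h0
  let ν : I → Cardinal.{u} := fun i => Order.succ (μ i)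
  have hν : ∀ i, (ν i).IsRegular := fun i => isRegular_succ (le_max_right _ _)
  have hν0 : ∀ i, ℵ₀ < ν i := fun i => Order.lt_succ_of_le (le_max_right _ _)
  have hνI : ∀ i, #I < ν i := fun i =>
    Order.lt_succ_of_le ((le_max_left _ _).trans (le_max_left _ _))
  have hνU : ∀ i, #(U i) < ν i := fun i =>
    Order.lt_succ_of_le ((le_max_right _ _).trans (le_max_left _ _))
  have hνT : ∀ i, LinkBelow V (ν i) := fun i Δ Y hY =>
    hT Δ Y ((Order.le_of_lt_succ hY).trans_lt (hμ i))
  let St : I → Type u := fun i => {p : Set V × (V → V → Prop) //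
    (∃ Q S L, Safe Γ p.1 p.2 Q S L) ∧ #p.1 < ν i}
  have hstep : ∀ (s : ∀ i, St i) (i : I), ∃ t : St i, (s i).1.1 ⊆ t.1.1 ∧ U i ⊆ t.1.1 ∧
      (∀ u v, (s i).1.2 u v → t.1.2 u v) ∧
      ∀ j, ∀ x ∈ (s i).1.1, ∀ y, (s j).1.2 x y ∨ (s j).1.2 y x → y ∈ t.1.1 := by
    intro s i
    have hW := regOrder_ord (hν i) (hν0 i)
    obtain ⟨⟨Q, S, L, hs⟩, hc⟩ := (s i).2
    have hZ : #(U i ∪ ⋃ j, ⋃ x ∈ (s i).1.1, {y | (s j).1.2 x y ∨ (s j).1.2 y x} : Set V) < ν i := by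
      refine hW.card_union (hνU i) (hW.card_iUnion (hνI i) fun j => hW.card_biUnion hc fun x _ =>
        hW.card_countable ?_)
      obtain ⟨⟨_, _, _, hj⟩, -⟩ := (s j).2
      have h1 : {y | (s j).1.2 x y}.Subsingleton := fun a ha b hb => hj.bi.out ha hb
      have h2 : {y | (s j).1.2 y x}.Subsingleton := fun a ha b hb => hj.bi.inn ha hb
      exact h1.countable.union h2.countable
    obtain ⟨N', R', Q', S', L', h1, h2, h3, h4, h5⟩ :=
      hs.extend (hν i) (hν0 i) (hνT i) hc hZ
    refine ⟨⟨(N', R'), ⟨Q', S', L', h1⟩, h2⟩, h3, fun x hx => h4 (Or.inl hx), h5, ?_⟩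
    intro j x hx y hy
    exact h4 (Or.inr (mem_iUnion.2 ⟨j, mem_biUnion hx hy⟩))
  choose nxt hn1 hn2 hn3 hn4 using hstep
  let s0 : ∀ i, St i := fun i => ⟨(∅, fun _ _ => False), ⟨_, _, _, hu.safe_empty⟩, by
    simpa using (hν i).pos⟩
  let st : ℕ → ∀ i, St i := fun n => Nat.rec s0 (fun _ s i => nxt s i) n
  have hst : ∀ n i, st (n + 1) i = nxt (st n) i := fun n i => rfl
  have hNm : ∀ i {m n}, m ≤ n → (st m i).1.1 ⊆ (st n i).1.1 := by
    intro i m n h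
    induction n, h using Nat.le_induction with
    | base => exact subset_rfl
    | succ n _ ih => exact ih.trans (hn1 (st n) i)
  have hRm : ∀ i {m n}, m ≤ n → ∀ u v, (st m i).1.2 u v → (st n i).1.2 u v := by
    intro i m n h
    induction n, h using Nat.le_induction with
    | base => exact fun _ _ h => h
    | succ n _ ih => exact fun u v h => hn3 (st n) i u v (ih u v h)
  let N : I → Set V := fun i => ⋃ n, (st n i).1.1
  let R : I → V → V → Prop := fun i u v => ∃ n, (st n i).1.2 u v
  have hsafe : ∀ n i, ∃ Q S L, Safe Γ (st n i).1.1 (st n i).1.2 Q S L := fun n i => (st n i).2.1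
  have hRbi : ∀ i, BiUnique (R i) := by
    refine fun i => ⟨?_, ?_⟩
    · rintro u v w ⟨m, h⟩ ⟨n, h'⟩
      obtain ⟨_, _, _, hs⟩ := hsafe (max m n) i
      exact hs.bi.out (hRm i (le_max_left m n) _ _ h) (hRm i (le_max_right m n) _ _ h')
    · rintro u v w ⟨m, h⟩ ⟨n, h'⟩
      obtain ⟨_, _, _, hs⟩ := hsafe (max m n) i
      exact hs.bi.inn (hRm i (le_max_left m n) _ _ h) (hRm i (le_max_right m n) _ _ h')
  have hRN : ∀ i u v, R i u v → u ∈ N i ∧ v ∈ N i := by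
    rintro i u v ⟨n, h⟩
    obtain ⟨_, _, _, hs⟩ := hsafe n i
    exact ⟨mem_iUnion.2 ⟨n, (hs.inN _ _ h).1⟩, mem_iUnion.2 ⟨n, (hs.inN _ _ h).2⟩⟩
  have hclo : ∀ i j x y, R j x y ∨ R j y x → x ∈ N i → y ∈ N i := by
    intro i j x y hxy hx
    obtain ⟨m, hm⟩ := mem_iUnion.1 hx
    have h1 : ∃ n, (st n j).1.2 x y ∨ (st n j).1.2 y x := by
      rcases hxy with ⟨n, h⟩ | ⟨n, h⟩
      · exact ⟨n, Or.inl h⟩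
      · exact ⟨n, Or.inr h⟩
    obtain ⟨n, h1⟩ := h1
    refine mem_iUnion.2 ⟨max m n + 1, hn4 (st (max m n)) i j x (hNm i (le_max_left m n) hm) y ?_⟩
    exact h1.imp (hRm j (le_max_right m n) _ _) (hRm j (le_max_right m n) _ _)
  -- every vertex uses the first of the linkages that contains it
  have hleast : ∀ {i j u v w}, R i u v → R j u w → (∀ k < i, u ∉ N k) → (∀ k < j, u ∉ N k) →
      i = j := by
    intro i j u v w h h' hi hj
    rcases lt_trichotomy i j with hlt | heq | hlt
    · exact absurd (hRN i u v h).1 (hj i hlt)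
    · exact heq
    · exact absurd (hRN j u w h').1 (hi j hlt)
  refine ⟨fun u v => ∃ i, R i u v ∧ ∀ j < i, u ∉ N j, ⟨?_, ?_⟩, ?_, ?_⟩
  · rintro u v w ⟨i, h, hi⟩ ⟨j, h', hj⟩
    obtain rfl := hleast h h' hi hj
    exact (hRbi i).out h h'
  · rintro u v w ⟨i, h, hi⟩ ⟨j, h', hj⟩
    have hi' : ∀ k < i, w ∉ N k := fun k hk hw => hi k hk (hclo k i w u (Or.inr h) hw)
    have hj' : ∀ k < j, w ∉ N k := fun k hk hw => hj k hk (hclo k j w v (Or.inr h') hw)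
    rcases lt_trichotomy i j with hlt | rfl | hlt
    · exact absurd (hRN i u w h).2 (hj' i hlt)
    · exact (hRbi i).inn h h'
    · exact absurd (hRN j v w h').2 (hi' j hlt)
  · rintro u v ⟨i, ⟨n, h⟩, -⟩
    obtain ⟨_, _, _, hs⟩ := hsafe n i
    exact hs.le _ _ h
  · intro a ha
    obtain ⟨i₀, hi₀⟩ := mem_iUnion.1 (hXU (hA ha))
    obtain ⟨i, hi, hmin⟩ := exists_least (fun i => a ∈ N i)
      ⟨i₀, mem_iUnion.2 ⟨1, hn2 (st 0) i₀ hi₀⟩⟩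
    obtain ⟨n, hn⟩ := mem_iUnion.1 hi
    obtain ⟨_, _, _, hs⟩ := hsafe n i
    obtain ⟨b, hb, h⟩ := hs.link a ha hn
    refine ⟨b, hb, (rtg_restrict' (P := fun x => ∀ j < i, x ∉ N j) h hmin fun u v huv hu =>
      ⟨fun j hj hv => hu j hj (hclo j i v u (Or.inr ⟨n, huv⟩) hv), i, ⟨n, huv⟩, hu⟩).1⟩

/-- Countably many sources can be linked one after the other. -/
theorem linkable_of_countable {Γ : Web V} (hA : Γ.A.Countable) (hu : Unhindered Γ) :
    Linkable Γ := by
  rcases Γ.A.eq_empty_or_nonempty with he | hne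
  · exact ⟨fun _ _ => False, ⟨fun h => h.elim, fun h => h.elim⟩, fun _ _ h => h.elim,
      fun a ha => absurd ha (he ▸ notMem_empty a)⟩
  obtain ⟨e, he⟩ := hA.exists_eq_range hne
  let Ok : Set V → (V → V → Prop) → Prop := fun N R => BiUnique R ∧
    (∀ u v, R u v → Γ.E u v ∧ u ∈ N ∧ v ∈ N) ∧
    (∀ a ∈ Γ.A, a ∈ N → ∃ b ∈ Γ.B, ReflTransGen R a b) ∧ Unhindered (Γ.del N)
  let St : Type u := {p : Set V × (V → V → Prop) // Ok p.1 p.2}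
  have hstep : ∀ (s : St) (n : ℕ), ∃ t : St, e n ∈ t.1.1 ∧ ∀ u v, s.1.2 u v → t.1.2 u v := by
    rintro ⟨⟨N, R⟩, hbi, hle, hlink, hun⟩ n
    by_cases hn : e n ∈ N
    · exact ⟨⟨(N, R), hbi, hle, hlink, hun⟩, hn, fun _ _ h => h⟩
    have hnA : e n ∈ Γ.A := he ▸ mem_range_self n
    obtain ⟨P, f, h⟩ := single_safe hun (a := e n) ⟨hnA, hn⟩
    refine ⟨⟨(N ∪ P, fun u v => R u v ∨ f u v), ⟨?_, ?_⟩, ?_, ?_, ?_⟩, Or.inr h.mem,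
      fun _ _ h => Or.inl h⟩
    · rintro u v w (h1 | h1) (h2 | h2)
      · exact hbi.out h1 h2
      · exact absurd (hle _ _ h1).2.1 (h.le _ _ h2).1.2.1
      · exact absurd (hle _ _ h2).2.1 (h.le _ _ h1).1.2.1
      · exact h.bi.out h1 h2
    · rintro u v w (h1 | h1) (h2 | h2)
      · exact hbi.inn h1 h2
      · exact absurd (hle _ _ h1).2.2 (h.le _ _ h2).1.2.2
      · exact absurd (hle _ _ h2).2.2 (h.le _ _ h1).1.2.2
      · exact h.bi.inn h1 h2
    · rintro u v (h1 | h1)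
      · exact ⟨(hle _ _ h1).1, Or.inl (hle _ _ h1).2.1, Or.inl (hle _ _ h1).2.2⟩
      · exact ⟨(h.le _ _ h1).1.1, Or.inr (h.le _ _ h1).2.1, Or.inr (h.le _ _ h1).2.2⟩
    · intro a ha haN
      by_cases haN' : a ∈ N
      · obtain ⟨b, hb, h1⟩ := hlink a ha haN'
        exact ⟨b, hb, ReflTransGen.mono (fun _ _ h => Or.inl h) _ _ h1⟩
      · obtain rfl := h.src a (haN.resolve_left haN') ⟨ha, haN'⟩
        obtain ⟨b, hb, -, h1⟩ := h.reach
        exact ⟨b, hb.1, ReflTransGen.mono (fun _ _ h => Or.inr h) _ _ h1⟩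
    · have := h.unh
      rwa [Web.del_del] at this
  choose nxt hn1 hn2 using hstep
  let s0 : St := ⟨(∅, fun _ _ => False), ⟨fun h => h.elim, fun h => h.elim⟩, fun _ _ h => h.elim,
    fun _ _ h => h.elim, by rw [Γ.del_empty]; exact hu⟩
  let st : ℕ → St := fun n => Nat.rec s0 (fun n s => nxt s n) n
  have hRm : ∀ {m n}, m ≤ n → ∀ u v, (st m).1.2 u v → (st n).1.2 u v := by
    intro m n h
    induction n, h using Nat.le_induction with
    | base => exact fun _ _ h => h
    | succ n _ ih => exact fun u v h => hn2 (st n) n u v (ih u v h)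
  refine ⟨fun u v => ∃ n, (st n).1.2 u v, ⟨?_, ?_⟩, ?_, ?_⟩
  · rintro u v w ⟨m, h⟩ ⟨n, h'⟩
    exact (st (max m n)).2.1.out (hRm (le_max_left m n) _ _ h) (hRm (le_max_right m n) _ _ h')
  · rintro u v w ⟨m, h⟩ ⟨n, h'⟩
    exact (st (max m n)).2.1.inn (hRm (le_max_left m n) _ _ h) (hRm (le_max_right m n) _ _ h')
  · rintro u v ⟨n, h⟩
    exact ((st n).2.2.1 u v h).1
  · intro a ha
    obtain ⟨n, rfl⟩ : a ∈ range e := he ▸ ha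
    obtain ⟨b, hb, h⟩ := (st (n + 1)).2.2.2.1 (e n) ha (hn1 (st n) n)
    exact ⟨b, hb, ReflTransGen.mono (fun _ _ h => ⟨n + 1, h⟩) _ _ h⟩

/-- Every unhindered web is linkable. -/
theorem Unhindered.linkable {Γ : Web V} (hu : Unhindered Γ) : Linkable Γ := by
  have key : ∀ (κ : Cardinal.{u}) (Δ : Web V) (X : Set V), #X = κ → Δ.A ⊆ X → Unhindered Δ →
      Linkable Δ := by
    intro κ
    induction κ using WellFoundedLT.induction with
    | ind κ ih =>
      intro Δ X hX hA hΔ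
      have hT : LinkBelow V κ := fun Δ' X' hX' _ hA' hu' => ih _ hX' Δ' X' rfl hA' hu'
      rcases le_or_gt κ ℵ₀ with h | h
      · exact linkable_of_countable
          ((le_aleph0_iff_set_countable.1 (hX.trans_le h)).mono hA) hΔ
      · rcases isRegular_or_isSingular h.le with hr | hr
        · exact linkable_of_regular hr h hT hX hA hΔ
        · exact linkable_of_singular hr h hT hX hA hΔ
  exact key _ Γ univ rfl (subset_univ _) hu

end Singular

/-! ### From flows to paths -/

section Lists

universe u
variable {V : Type u}

open Relation Set

/-- A track of a flow, from a vertex without predecessor, as a list. -/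
theorem exists_list {H : V → V → Prop} (hH : BiUnique H) {a b : V} (ha : ∀ p, ¬ H p a)
    (h : ReflTransGen H a b) :
    ∃ l : List V, l ≠ [] ∧ l.Nodup ∧ l.IsChain H ∧ l.head? = some a ∧ l.getLast? = some b ∧
      ∀ m, m ∈ l ↔ ReflTransGen H a m ∧ ReflTransGen H m b := by
  induction h with
  | refl =>
    refine ⟨[a], by simp, by simp, by simp, by simp, by simp, fun m => ?_⟩
    rw [List.mem_singleton]
    constructor
    · rintro rfl
      exact ⟨.refl, .refl⟩
    · rintro ⟨-, h⟩
      exact eq_of_rtg_of_noPred h ha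
  | @tail b c hb hbc ih =>
    obtain ⟨l, h0, h1, h2, h3, h4, h5⟩ := ih
    have hc : c ∉ l := fun hc =>
      hH.acyclic ha (hb.tail hbc) (TransGen.tail' ((h5 c).1 hc).2 hbc)
    refine ⟨l ++ [c], by simp, ?_, ?_, ?_, List.getLast?_concat, ?_⟩
    · rw [List.nodup_append]
      refine ⟨h1, by simp, ?_⟩
      rintro x hx y hy rfl
      exact hc (List.mem_singleton.1 hy ▸ hx)
    · rw [List.isChain_append]
      refine ⟨h2, by simp, ?_⟩
      intro x hx y hy
      rw [h4] at hx
      simp only [Option.mem_def, Option.some.injEq, List.head?_cons] at hx hy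
      rw [← hx, ← hy]
      exact hbc
    · rw [List.head?_append, h3]
      rfl
    · intro m
      rw [List.mem_append, List.mem_singleton, h5]
      constructor
      · rintro (⟨h6, h7⟩ | rfl)
        · exact ⟨h6, h7.tail hbc⟩
        · exact ⟨hb.tail hbc, .refl⟩
      · rintro ⟨h6, h7⟩
        rcases ReflTransGen.cases_tail h7 with rfl | ⟨d, h8, hd⟩
        · exact Or.inr rfl
        · rw [hH.inn hd hbc] at h8
          exact Or.inl ⟨h6, h8⟩

/-- The roof of a wave can be left only through the end set. -/
theorem last_mem {E : V → V → Prop} {Q S : Set V} (hsep : ∀ u ∈ Q, u ∉ S → ∀ v, E u v → v ∈ Q) :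
    ∀ p : List V, p.IsChain E → (∀ x ∈ p, x ∉ S) → (∀ x, p.head? = some x → x ∈ Q) →
      ∀ y, p.getLast? = some y → y ∈ Q
  | [], _, _, _, y, hy => by simp at hy
  | [x], _, _, hx, y, hy => by
    obtain rfl : x = y := by simpa using hy
    exact hx x rfl
  | x :: z :: l, hch, hS, hx, y, hy => by
    rw [List.isChain_cons_cons] at hch
    refine last_mem hsep (z :: l) hch.2 (fun w hw => hS w (List.mem_cons_of_mem _ hw)) ?_ y
      (by simpa using hy)
    intro w hw
    obtain rfl : z = w := by simpa using hw
    exact hsep x (hx x rfl) (hS x (by simp)) z hch.1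

end Lists

/-- The Erdős–Menger conjecture (main theorem of the paper): in any digraph,
for any two vertex sets `A` and `B`, there exist a set `Ps` of pairwise
vertex-disjoint finite `A`–`B` paths and an `A`–`B`-separating set `S`
consisting of a choice of exactly one vertex from each path of `Ps`. -/
theorem erdos_menger (V : Type*) (E : V → V → Prop) (hE : ∀ v : V, ¬ E v v)
    (A B : Set V) :
    ∃ (Ps : Set (List V)) (S : Set V),
      (∀ p ∈ Ps, IsXYPath E A B p) ∧
      (∀ p ∈ Ps, ∀ q ∈ Ps, p ≠ q → ∀ v : V, v ∈ p → v ∉ q) ∧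
      Separates E A B S ∧
      (∀ s ∈ S, ∃ p ∈ Ps, s ∈ p) ∧
      (∀ p ∈ Ps, ∃! s : V, s ∈ S ∧ s ∈ p) := by
  classical
  -- edges into `A` are dropped; this does not affect separation, as every roof contains `A`
  let Γ : Web V := ⟨fun u v => E u v ∧ v ∉ A, A, B, fun _ _ h => h.2⟩
  have hw := Γ.max_wave
  obtain ⟨G, hG, hGle, hlink⟩ := (loose_quo_max Γ).unhindered.linkable
  let F : V → V → Prop := Γ.flow
  let H : V → V → Prop := fun u v => F u v ∨ G u v
  have hH : BiUnique H := by
    refine ⟨?_, ?_⟩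
    · rintro u v w (h | h) (h' | h')
      · exact hw.bi.out h h'
      · exact absurd ((hGle _ _ h').2.1 (hw.inQ _ _ h)) (hw.halt _ _ h)
      · exact absurd ((hGle _ _ h).2.1 (hw.inQ _ _ h')) (hw.halt _ _ h')
      · exact hG.out h h'
    · rintro u v w (h | h) (h' | h')
      · exact hw.bi.inn h h'
      · exact absurd (hw.inQ' h) (hGle _ _ h').2.2.1
      · exact absurd (hw.inQ' h') (hGle _ _ h).2.2.1
      · exact hG.inn h h'
  have hHle : ∀ u v, H u v → Γ.E u v := by
    rintro u v (h | h)
    · exact hw.le _ _ h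
    · exact (hGle _ _ h).1
  have hnp : ∀ a ∈ A, ∀ p, ¬ H p a := fun a ha p h => (hHle _ _ h).2 ha
  have hhalt : ∀ s ∈ Γ.ess, ∀ x, Relation.ReflTransGen F s x → s = x := fun s hs x h =>
    eq_of_rtg_of_noSucc h fun p hp => hw.halt _ _ hp hs
  have huniq : ∀ x, ∀ s ∈ Γ.ess, ∀ t ∈ Γ.ess, Relation.ReflTransGen F x s →
      Relation.ReflTransGen F x t → s = t := by
    intro x s hs t ht h h'
    rcases hw.bi.total' h h' with h | h
    · exact hhalt s hs t h
    · exact (hhalt t ht s h).symm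
  -- two tracks with a common vertex have the same source
  have hsrc : ∀ a ∈ A, ∀ a' ∈ A, ∀ x, Relation.ReflTransGen H a x →
      Relation.ReflTransGen H a' x → a = a' := by
    intro a ha a' ha' x h h'
    rcases hH.total h h' with h | h
    · exact eq_of_rtg_of_noPred h (hnp a' ha')
    · exact (eq_of_rtg_of_noPred h (hnp a ha)).symm
  have hpath : ∀ s : Γ.ess, ∃ (l : List V) (a : V), a ∈ A ∧ Relation.ReflTransGen F a s.1 ∧
      IsXYPath E A B l ∧ s.1 ∈ l ∧ ∀ m ∈ l, Relation.ReflTransGen H a m := by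
    rintro ⟨s, hs⟩
    obtain ⟨a, ha, h⟩ := hw.reach s hs
    obtain ⟨b, hb, h'⟩ := hlink s hs
    have h1 : Relation.ReflTransGen H a s := Relation.ReflTransGen.mono (fun _ _ h => Or.inl h) _ _ h
    have h2 : Relation.ReflTransGen H s b := Relation.ReflTransGen.mono (fun _ _ h => Or.inr h) _ _ h'
    obtain ⟨l, l0, l1, l2, l3, l4, l5⟩ := exists_list hH (hnp a ha) (h1.trans h2)
    exact ⟨l, a, ha, h, ⟨⟨l0, l1, l2.imp fun u v huv => (hHle u v huv).1⟩, ⟨a, ha, l3⟩,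
      ⟨b, hb.1, l4⟩⟩, (l5 s).2 ⟨h1, h2⟩, fun m hm => ((l5 m).1 hm).1⟩
  choose P a haA haF hP hsP hPm using hpath
  refine ⟨Set.range P, Γ.ess, ?_, ?_, ?_, ?_, ?_⟩
  · rintro _ ⟨s, rfl⟩
    exact hP s
  · rintro _ ⟨s, rfl⟩ _ ⟨t, rfl⟩ hne v hv hv'
    have h1 := hsrc _ (haA s) _ (haA t) v (hPm s v hv) (hPm t v hv')
    refine hne (congrArg P (Subtype.ext ?_))
    exact huniq (a s) _ s.2 _ t.2 (haF s) (h1 ▸ haF t)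
  · rintro p ⟨⟨-, -, hch⟩, ⟨x, hx, hpx⟩, y, hy, hpy⟩
    by_contra hcon
    push Not at hcon
    have hpS : ∀ z ∈ p, z ∉ Γ.ess := fun z hz hzS => hcon z hzS hz
    have hyQ : y ∈ Γ.roof := by
      refine last_mem (E := E) (S := Γ.ess) ?_ p hch hpS ?_ y hpy
      · intro u hu huS v huv
        by_cases hv : v ∈ A
        · exact hw.subA hv
        · exact hw.sep u hu huS v ⟨huv, hv⟩
      · intro z hz
        rw [hpx, Option.some.injEq] at hz
        exact hz ▸ hw.subA hx
    exact hw.sepB y hyQ (hpS y (List.mem_of_getLast? hpy)) hy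
  · intro s hs
    exact ⟨P ⟨s, hs⟩, ⟨_, rfl⟩, hsP ⟨s, hs⟩⟩
  · rintro _ ⟨s, rfl⟩
    refine ⟨s.1, ⟨s.2, hsP s⟩, ?_⟩
    rintro x ⟨hx, hxP⟩
    obtain ⟨a', ha', h'⟩ := hw.reach x hx
    have h1 : Relation.ReflTransGen H a' x :=
      Relation.ReflTransGen.mono (fun _ _ h => Or.inl h) _ _ h'
    obtain rfl := hsrc _ ha' _ (haA s) x h1 (hPm s x hxP)
    exact huniq _ _ hx _ s.2 h' (haF s)

end ErdosMenger
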